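/- Let L be a finite set of N pairwise distinct lines in ℂP² (2-dimensional ℂ-subspaces of ℂ³) and let β : L → ℝ be weights satisfying: 0 < βℓ < 1 for all ℓ ∈ L, Σ_{ℓ∈L}(βℓ − 1) = −3, and for every point p with μ(p) ≥ 3 one has Σ_{ℓ∈L, p ≤ ℓ}(βℓ − 1) > −2. For every point p with μ(p) ≥ 3 set α(p) := 1 + (1/2)·Σ_{ℓ∈L, p≤ℓ}(βℓ − 1), and for ℓ ∈ L set B(ℓ) := (number of points p with μ(p) ≥ 3 and p ≤ ℓ) − 1 ∈ ℤ. Then Σ_{p : μ(p) ≥ 3} (α(p) − 1)² − (1/2)·Σ_{ℓ∈L} (1 − βℓ)²·B(ℓ) − 3/2 ≤ 0. -/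

import Mathlib

/-- The multiplicity of a point `p` of `ℂP²` (a 1-dimensional subspace of `ℂ³`)
with respect to an arrangement of lines `L` (2-dimensional subspaces):
the number of lines of `L` containing `p`. -/
noncomputable def lineMult (L : Finset (Submodule ℂ (Fin 3 → ℂ)))
    (p : Submodule ℂ (Fin 3 → ℂ)) : ℕ :=
  Set.ncard {ℓ : Submodule ℂ (Fin 3 → ℂ) | ℓ ∈ L ∧ p ≤ ℓ}

/-- The number `α(p) = 1 + (1/2)·∑_{ℓ ∋ p} (βℓ − 1)`, the conical angle
parameter at a multiple point `p` of the weighted arrangement. -/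
noncomputable def alphaPt (L : Finset (Submodule ℂ (Fin 3 → ℂ)))
    (β : Submodule ℂ (Fin 3 → ℂ) → ℝ) (p : Submodule ℂ (Fin 3 → ℂ)) : ℝ :=
  1 + (1 / 2) * ∑ᶠ ℓ ∈ {ℓ : Submodule ℂ (Fin 3 → ℂ) | ℓ ∈ L ∧ p ≤ ℓ}, (β ℓ - 1)

/-- `B(ℓ) = #{p : μ(p) ≥ 3, p ≤ ℓ} − 1`, the quantity `B_{jj}` of the paper. -/
noncomputable def BSelf (L : Finset (Submodule ℂ (Fin 3 → ℂ)))
    (ℓ : Submodule ℂ (Fin 3 → ℂ)) : ℤ :=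
  (Set.ncard {p : Submodule ℂ (Fin 3 → ℂ) |
      Module.finrank ℂ p = 1 ∧ 3 ≤ lineMult L p ∧ p ≤ ℓ} : ℤ) - 1

namespace BGProof
section Part1
open Polynomial
set_option maxSynthPendingDepth 3

/-- Polynomials in `x`, in `x, y`, in `x, y, t`. -/
abbrev A1 := Polynomial ℂ
abbrev A2 := Polynomial A1
abbrev A3 := Polynomial A2

/-- The value of `y` on the line `y = m x + c`. -/
noncomputable def lin (m c : ℂ) : A1 := C m * X + C c

/-- `y ↦ y + m x + c` on `A2`. -/
noncomputable def shY (m c : ℂ) : A2 →+* A2 := (taylorAlgHom (lin m c)).toRingHom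

/-- `t ↦ t + m` on `A3`. -/
noncomputable def shT (m : ℂ) : A3 →+* A3 := (taylorAlgHom (C (C m) : A2)).toRingHom

noncomputable def shL (m c : ℂ) : A3 →+* A3 := (mapRingHom (shY m c)).comp (shT m)

/-- coefficient of `z^i τ^j` -/
noncomputable def cf (m c : ℂ) (i j : ℕ) (f : A3) : A1 := ((shL m c f).coeff j).coeff i

lemma shY_apply (m c : ℂ) (p : A2) : shY m c p = taylor (lin m c) p := rfl
lemma shT_apply (m : ℂ) (p : A3) : shT m p = taylor (C (C m)) p := rfl

lemma shY_inj (m c : ℂ) : Function.Injective (shY m c) := taylor_injective _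
lemma shT_inj (m : ℂ) : Function.Injective (shT m) := taylor_injective _
lemma shL_inj (m c : ℂ) : Function.Injective (shL m c) := by
  intro a b h
  exact shT_inj m (map_injective _ (shY_inj m c) h)

/-- weighted order at least `r` -/
def Wge (m c : ℂ) (M a : ℕ) (f : A3) (r : ℕ) : Prop :=
  ∀ i j, M * i + a * j < r → cf m c i j f = 0

/-- scaling homomorphism -/
noncomputable def scl (R : Type*) [CommRing R] (M a : ℕ) : R[X][X] →+* R[X][X][X] :=
  eval₂RingHom (S := R[X][X][X]) (eval₂RingHom (S := R[X][X][X])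
    (((C : R[X][X] →+* R[X][X][X]).comp (C : R[X] →+* R[X][X])).comp (C : R →+* R[X]))
    (C (C X) * X ^ M)) (C X * X ^ a)

lemma scl_coeff {R : Type*} [CommRing R] (M a : ℕ) (h : R[X][X]) (s i j : ℕ) :
    (((scl R M a h).coeff s).coeff j).coeff i =
      if M * i + a * j = s then (h.coeff j).coeff i else 0 := by
  induction h using Polynomial.induction_on' with
  | add p q hp hq => simp only [map_add, coeff_add, hp, hq]; split_ifs <;> simp
  | monomial j0 p =>
    induction p using Polynomial.induction_on' with
    | add p q hp hq => simp only [map_add, coeff_add, hp, hq]; split_ifs <;> simp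
    | monomial i0 r =>
      have : scl R M a (monomial j0 (monomial i0 r)) =
          monomial (M * i0 + a * j0) (monomial j0 (monomial i0 r)) := by
        simp only [← C_mul_X_pow_eq_monomial, map_mul, map_pow, pow_add]
        simp only [scl, coe_eval₂RingHom, eval₂_C, eval₂_X, RingHom.comp_apply]
        ring
      rw [this]
      rw [coeff_monomial]
      by_cases hj : j0 = j
      · by_cases hi : i0 = i
        · subst hj hi
          split_ifs <;> simp
        · have : ((monomial j0 (monomial i0 r) : R[X][X]).coeff j).coeff i = 0 := by
            rw [coeff_monomial, if_pos hj, coeff_monomial, if_neg hi]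
          rw [this]
          split_ifs <;> simp [this]
      · have : ((monomial j0 (monomial i0 r) : R[X][X]).coeff j).coeff i = 0 := by
          rw [coeff_monomial, if_neg hj, coeff_zero]
        rw [this]
        split_ifs <;> simp [this]

lemma scl_inj {R : Type*} [CommRing R] (M a : ℕ) : Function.Injective (scl R M a) := by
  rw [injective_iff_map_eq_zero]
  intro h hh
  refine Polynomial.ext fun j => Polynomial.ext fun i => ?_
  have := scl_coeff M a h (M * i + a * j) i j
  simp [hh] at this
  simp [← this]

lemma Wge_split {m c : ℂ} {M a : ℕ} {f g : A3} (hf : f ≠ 0) (hg : g ≠ 0) {r : ℕ}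
    (h : Wge m c M a (f * g) r) :
    ∃ r1 r2, r ≤ r1 + r2 ∧ Wge m c M a f r1 ∧ Wge m c M a g r2 := by
  have key : ∀ f : A3, Wge m c M a f (scl A1 M a (shL m c f)).natTrailingDegree := by
    intro f i j hij
    have := scl_coeff M a (shL m c f) (M * i + a * j) i j
    rw [if_pos rfl] at this
    rw [cf, ← this, coeff_eq_zero_of_lt_natTrailingDegree hij]
    simp
  refine ⟨_, _, ?_, key f, key g⟩
  have hne : ∀ f : A3, f ≠ 0 → scl A1 M a (shL m c f) ≠ 0 := by
    intro f hf
    rw [Ne, map_eq_zero_iff _ (scl_inj M a), map_eq_zero_iff _ (shL_inj m c)]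
    exact hf
  rw [← natTrailingDegree_mul (hne f hf) (hne g hg), ← map_mul, ← map_mul]
  apply le_natTrailingDegree
  · exact hne _ (mul_ne_zero hf hg)
  · intro s hs
    refine Polynomial.ext fun j => Polynomial.ext fun i => ?_
    rw [scl_coeff]
    split_ifs with h1
    · simpa [cf] using h i j (by omega)
    · simp

end Part1
end BGProof

namespace BGProof
section Part2
open Polynomial
set_option maxSynthPendingDepth 3

lemma hsub33 (f : A3 →+* A3) (a b : A3) : f (a - b) = f a - f b :=
  eq_sub_of_add_eq (by rw [← map_add, sub_add_cancel])
lemma hsub32 (f : A3 →+* A2) (a b : A3) : f (a - b) = f a - f b :=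
  eq_sub_of_add_eq (by rw [← map_add, sub_add_cancel])
lemma hneg33 (f : A3 →+* A3) (a : A3) : f (-a) = - f a :=
  eq_neg_of_add_eq_zero_left (by rw [← map_add, neg_add_cancel, map_zero])

/-- The change of variables `x ↦ x`, `y ↦ u + t x`, `t ↦ t`; target is `ℂ[t][u][x]`. -/
noncomputable def gam : A3 →+* A3 :=
  eval₂RingHom (S := A3) (eval₂RingHom (S := A3) (eval₂RingHom (S := A3)
    (((C : A2 →+* A3).comp (C : A1 →+* A2)).comp (C : ℂ →+* A1)) X) (C X + C (C X) * X)) (C (C X))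

/-- Inverse of `gam`. -/
noncomputable def iot : A3 →+* A3 :=
  eval₂RingHom (S := A3) (eval₂RingHom (S := A3) (eval₂RingHom (S := A3)
    (((C : A2 →+* A3).comp (C : A1 →+* A2)).comp (C : ℂ →+* A1)) X) (C X - X * C (C X))) (C (C X))

lemma gam_x : gam (C (C X)) = X := by simp [gam]
lemma gam_y : gam (C X) = C X + C (C X) * X := by simp [gam]
lemma gam_t : gam X = C (C X) := by simp [gam]
lemma gam_c (r : ℂ) : gam (C (C (C r))) = C (C (C r)) := by simp [gam]
lemma iot_x : iot X = C (C X) := by simp [iot]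
lemma iot_u : iot (C X) = C X - X * C (C X) := by simp [iot]
lemma iot_t : iot (C (C X)) = X := by simp [iot]
lemma iot_c (r : ℂ) : iot (C (C (C r))) = C (C (C r)) := by simp [iot]

lemma A3_hom_ext {R : Type*} [Semiring R] {f g : A3 →+* R}
    (hc : ∀ r : ℂ, f (C (C (C r))) = g (C (C (C r)))) (hx : f (C (C X)) = g (C (C X)))
    (hy : f (C X) = g (C X)) (ht : f X = g X) : f = g := by
  refine Polynomial.ringHom_ext' (Polynomial.ringHom_ext' (Polynomial.ringHom_ext' ?_ ?_) ?_) ht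
  · ext r; exact hc r
  · exact hx
  · exact hy

lemma iot_gam (f : A3) : iot (gam f) = f := by
  have : iot.comp gam = RingHom.id A3 := by
    apply A3_hom_ext
    · intro r; simp [gam_c, iot_c]
    · simp [gam_x, iot_x]
    · simp only [RingHom.comp_apply, gam_y, map_add, map_mul, iot_u, iot_t, iot_x, RingHom.id_apply]; ring
    · simp [gam_t, iot_t]
  exact congrArg (fun h : A3 →+* A3 => h f) this

lemma gam_iot (f : A3) : gam (iot f) = f := by
  have : gam.comp iot = RingHom.id A3 := by
    apply A3_hom_ext
    · intro r; simp [gam_c, iot_c]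
    · simp [gam_t, iot_t]
    · simp only [RingHom.comp_apply, iot_u, hsub33, map_mul, gam_y, gam_t, gam_x, RingHom.id_apply]; ring
    · simp [gam_x, iot_x]
  exact congrArg (fun h : A3 →+* A3 => h f) this

lemma gam_inj : Function.Injective gam := Function.LeftInverse.injective iot_gam

/-- The degree `D(f)`. -/
noncomputable def Dg (f : A3) : ℕ := (gam f).natDegree

lemma Dg_mul {f g : A3} (hf : f ≠ 0) (hg : g ≠ 0) : Dg (f * g) = Dg f + Dg g := by
  unfold Dg
  rw [map_mul, natDegree_mul]
  · rwa [Ne, map_eq_zero_iff _ gam_inj]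
  · rwa [Ne, map_eq_zero_iff _ gam_inj]

lemma expand_D (f : A3) {d : ℕ} (h : Dg f ≤ d) :
    f = ∑ k ∈ Finset.range (d + 1), iot (C ((gam f).coeff k)) * (C (C X)) ^ k := by
  conv_lhs => rw [← iot_gam f, (gam f).as_sum_range' (d + 1) (Nat.lt_succ_of_le h)]
  rw [map_sum]
  refine Finset.sum_congr rfl fun k _ => ?_
  rw [← C_mul_X_pow_eq_monomial, map_mul, map_pow, iot_x]

/-- degree predicate on `ℂ[x][τ]` -/
def DJ (P : A2) (r : ℕ) : Prop := ∀ j, (P.coeff j).natDegree ≤ r + j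

lemma DJ.add {P Q : A2} {r : ℕ} (hP : DJ P r) (hQ : DJ Q r) : DJ (P + Q) r := fun j => by
  rw [coeff_add]; exact natDegree_add_le_of_degree_le (hP j) (hQ j)

lemma DJ.zero {r : ℕ} : DJ 0 r := fun j => by simp

lemma DJ.sum {ι : Type*} {s : Finset ι} {P : ι → A2} {r : ℕ} (h : ∀ i ∈ s, DJ (P i) r) :
    DJ (∑ i ∈ s, P i) r := by
  classical
  induction s using Finset.induction_on with
  | empty => simpa using DJ.zero
  | insert a s ha ih =>
    rw [Finset.sum_insert ha]
    exact (h a (by simp)).add (ih fun i hi => h i (by simp [hi]))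

lemma DJ.mul {P Q : A2} {r s : ℕ} (hP : DJ P r) (hQ : DJ Q s) : DJ (P * Q) (r + s) := fun j => by
  rw [coeff_mul]
  refine natDegree_sum_le_of_forall_le _ _ fun x hx => ?_
  have := Finset.HasAntidiagonal.mem_antidiagonal.1 hx
  refine natDegree_mul_le.trans ?_
  have := hP x.1
  have := hQ x.2
  omega

lemma DJ.one : DJ 1 0 := fun j => by rw [coeff_one]; split_ifs <;> simp

lemma DJ.pow {P : A2} {r : ℕ} (hP : DJ P r) (k : ℕ) : DJ (P ^ k) (k * r) := by
  induction k with
  | zero => simpa using DJ.one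
  | succ k ih => rw [pow_succ, Nat.succ_mul]; exact ih.mul hP

lemma DJ.mono {P : A2} {r s : ℕ} (hP : DJ P r) (h : r ≤ s) : DJ P s := fun j =>
  (hP j).trans (by omega)

/-- `f(x, λ x, λ + τ)`. -/
noncomputable def res (l : ℂ) : A3 →+* A2 :=
  (mapRingHom (evalRingHom (C l * X : A1))).comp (shT l)

lemma res_coeff (l : ℂ) (f : A3) (j : ℕ) :
    (res l f).coeff j = ((shT l f).coeff j).eval (C l * X) := by
  simp [res]

lemma shT_x (l : ℂ) (p : A2) : shT l (C p) = C p := by simp [shT_apply]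
lemma shT_t (l : ℂ) : shT l X = X + C (C (C l)) := by simp [shT_apply]

lemma DJ_res_iot (l : ℂ) (b : A2) : DJ (res l (iot (C b))) 0 := by
  induction b using Polynomial.induction_on' with
  | add p q hp hq => simp only [map_add]; exact hp.add hq
  | monomial k p =>
    induction p using Polynomial.induction_on' with
    | add p q hp hq => simp only [map_add]; exact hp.add hq
    | monomial i r =>
      have e : res l (iot (C (monomial k (monomial i r)))) =
          C (C r) * (X + C (C l)) ^ i * (- (X * C X) : A2) ^ k := by
        simp only [← C_mul_X_pow_eq_monomial, map_mul, map_pow, iot_c, iot_t, iot_u]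
        have hu : res l (C X - X * C (C X)) = - (X * C X) := by
          rw [hsub32, map_mul]
          simp only [res, RingHom.comp_apply, shT_x, shT_t]
          simp
          ring
        have ht : res l X = X + C (C l) := by
          simp [res, RingHom.comp_apply, shT_t]
        have hc : res l (C (C (C r))) = C (C r) := by
          simp [res, RingHom.comp_apply, shT_x]
        rw [hu, ht, hc]
      rw [e]
      have h1 : DJ (C (C r)) 0 := fun j => by rw [coeff_C]; split_ifs <;> simp
      have h2 : DJ (X + C (C l)) 0 := fun j => by
        rw [coeff_add, coeff_X, coeff_C]; split_ifs <;> simp [natDegree_one]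
      have h3 : DJ (-(X * C X)) 0 := fun j => by
        rcases j with _ | j
        · simp
        · rw [coeff_neg, coeff_X_mul, coeff_C]; split_ifs <;> simp
      simpa using (h1.mul (h2.pow i)).mul (h3.pow k)

lemma DJ_res {f : A3} {d : ℕ} (h : Dg f ≤ d) (l : ℂ) : DJ (res l f) d := by
  rw [expand_D f h, map_sum]
  refine DJ.sum fun k hk => ?_
  rw [map_mul, map_pow]
  have : res l (C (C X)) = C X := by simp [res, shT_x]
  rw [this]
  have h1 : DJ (C X) 1 := fun j => by rw [coeff_C]; split_ifs <;> simp
  have := (DJ_res_iot l ((gam f).coeff k)).mul (h1.pow k)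
  exact this.mono (by have := Finset.mem_range.1 hk; omega)

lemma deg_res {f : A3} {d : ℕ} (h : Dg f ≤ d) (l : ℂ) (j : ℕ) :
    (((shT l f).coeff j).eval (C l * X)).natDegree ≤ d + j := by
  rw [← res_coeff]; exact DJ_res h l j

/-- degree-`N` homogeneous part, as a polynomial in the slope -/
noncomputable def diag (p : A2) (N : ℕ) : ℂ[X] :=
  ∑ k ∈ Finset.range (N + 1), monomial k ((p.coeff k).coeff (N - k))

lemma diag_coeff (p : A2) (N k : ℕ) (hk : k ≤ N) :
    (diag p N).coeff k = (p.coeff k).coeff (N - k) := by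
  simp only [diag, finsetSum_coeff, coeff_monomial]
  rw [Finset.sum_eq_single k]
  · simp
  · intro b _ hb; simp [hb]
  · intro h; exact absurd (Finset.mem_range.2 (by omega)) h

lemma coeff_eval_lin (p : A2) (l : ℂ) (N : ℕ) :
    (p.eval (C l * X)).coeff N = (diag p N).eval l := by
  rw [eval_eq_sum_range' (n := max (p.natDegree + 1) (N + 1)) (by omega), finsetSum_coeff]
  simp only [mul_pow, ← C_pow]
  simp only [diag, eval_finsetSum, eval_monomial]
  have : ∀ k, (p.coeff k * (C (l ^ k) * X ^ k)).coeff N =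
      if k ≤ N then (p.coeff k).coeff (N - k) * l ^ k else 0 := by
    intro k
    rw [mul_comm (C _), ← mul_assoc, coeff_mul_C, coeff_mul_X_pow']
    split_ifs <;> simp
  simp only [this]
  symm
  rw [← Finset.sum_subset (Finset.range_mono (le_max_right (p.natDegree + 1) (N + 1)))]
  · refine Finset.sum_congr rfl fun k hk => ?_
    rw [if_pos (by have := Finset.mem_range.1 hk; omega)]
  · intro k _ hk
    rw [if_neg (by simpa using hk)]

lemma diag_eq_zero_of_infinite (p : A2) (N : ℕ) (s : Finset ℂ)
    (h : ∀ l, l ∉ s → (p.eval (C l * X)).coeff N = 0) : diag p N = 0 := by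
  apply eq_zero_of_infinite_isRoot
  refine Set.Infinite.mono (s := (↑s : Set ℂ)ᶜ) ?_ (Set.Finite.infinite_compl s.finite_toSet)
  intro l hl
  simp only [Set.mem_ofPred_eq, IsRoot, ← coeff_eval_lin]
  exact h l (by simpa using hl)

lemma exists_diag_ne {p : A2} (hp : p ≠ 0) : ∃ N, diag p N ≠ 0 := by
  by_contra! h
  apply hp
  refine Polynomial.ext fun k => Polynomial.ext fun i => ?_
  have := diag_coeff p (i + k) k (by omega)
  rw [h] at this
  simpa using this.symm

/-- total degree in `x, y` at most `D` -/
def TD (p : A2) (D : ℕ) : Prop := ∀ k i, D < i + k → (p.coeff k).coeff i = 0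

lemma TD_of_eval {p : A2} {D : ℕ} (h : ∀ l : ℂ, (p.eval (C l * X)).natDegree ≤ D) : TD p D := by
  intro k i hik
  have := diag_coeff p (i + k) k (by omega)
  rw [diag_eq_zero_of_infinite p (i + k) ∅] at this
  · simpa using this.symm
  · intro l _
    exact coeff_eq_zero_of_natDegree_lt ((h l).trans_lt hik)

/-- the equation of a line -/
noncomputable def zl (m c : ℂ) : A2 := X - C (lin m c)

lemma zl_eval (m c l : ℂ) : (zl m c).eval (C l * X) = C (l - m) * X - C c := by
  simp [zl, lin]; ring

lemma zl_natDegree {m l : ℂ} (c : ℂ) (h : l ≠ m) : ((zl m c).eval (C l * X)).natDegree = 1 := by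
  rw [zl_eval, natDegree_sub_C, natDegree_C_mul_X]
  exact sub_ne_zero.2 h

lemma diag_quot {ι : Type*} (s : Finset ι) (m c : ι → ℂ) (o : ι → ℕ) {Δ Q : A2}
    (hQ : Δ = Q * ∏ i ∈ s, zl (m i) (c i) ^ o i) {N : ℕ}
    (hN : ∀ l : ℂ, (Δ.eval (C l * X)).natDegree ≤ N) {K : ℕ} (hK : N < K + ∑ i ∈ s, o i) :
    diag Q K = 0 := by
  classical
  apply diag_eq_zero_of_infinite Q K (s.image m)
  intro l hl
  have hl' : ∀ i ∈ s, l ≠ m i := fun i hi h => hl (Finset.mem_image.2 ⟨i, hi, h.symm⟩)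
  by_contra hne
  have h0 : Q.eval (C l * X) ≠ 0 := fun h => hne (by rw [h]; simp)
  have h1 : K ≤ (Q.eval (C l * X)).natDegree := le_natDegree_of_ne_zero hne
  have h2 : ∀ i ∈ s, (zl (m i) (c i)).eval (C l * X) ^ o i ≠ 0 := by
    intro i hi
    apply pow_ne_zero
    intro h
    have := zl_natDegree (c i) (hl' i hi)
    rw [h] at this; simp at this
  have h3 := hN l
  rw [hQ, eval_mul, eval_prod] at h3
  simp only [eval_pow] at h3
  rw [natDegree_mul h0 (Finset.prod_ne_zero_iff.2 h2), natDegree_prod _ _ h2] at h3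
  simp only [natDegree_pow] at h3
  have h4 : ∑ i ∈ s, o i * ((zl (m i) (c i)).eval (C l * X)).natDegree = ∑ i ∈ s, o i :=
    Finset.sum_congr rfl (fun i hi => by rw [zl_natDegree (c i) (hl' i hi), mul_one])
  omega

lemma zl_prime (m c : ℂ) : Prime (zl m c) := prime_X_sub_C _

lemma prod_zl_dvd {ι : Type*} (s : Finset ι) (m c : ι → ℂ) (hm : Set.InjOn m s) (o : ι → ℕ) {Δ : A2}
    (h : ∀ i ∈ s, zl (m i) (c i) ^ o i ∣ Δ) : ∏ i ∈ s, zl (m i) (c i) ^ o i ∣ Δ := by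
  apply Finset.prod_dvd_of_isRelPrime _ h
  intro i hi j hj hij
  apply IsRelPrime.pow
  rw [(zl_prime _ _).irreducible.isRelPrime_iff_not_dvd]
  intro hd
  have := (zl_prime (m i) (c i)).associated_of_dvd (zl_prime (m j) (c j)) hd
  have h2 := eq_of_monic_of_associated (monic_X_sub_C _) (monic_X_sub_C _) this
  have h3 : lin (m i) (c i) = lin (m j) (c j) := C_injective (sub_right_injective h2)
  have h4 : (lin (m i) (c i)).coeff 1 = (lin (m j) (c j)).coeff 1 := by rw [h3]
  simp [lin] at h4
  exact hij (hm hi hj h4)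

/-- Lemma Z -/
lemma sum_le_of_dvd {ι : Type*} (s : Finset ι) (m c : ι → ℂ) (hm : Set.InjOn m s) (o : ι → ℕ)
    {Δ : A2} (h0 : Δ ≠ 0) (h : ∀ i ∈ s, zl (m i) (c i) ^ o i ∣ Δ) {N : ℕ}
    (hN : ∀ l : ℂ, (Δ.eval (C l * X)).natDegree ≤ N) : ∑ i ∈ s, o i ≤ N := by
  obtain ⟨Q, hQ⟩ := prod_zl_dvd s m c hm o h
  have hQ0 : Q ≠ 0 := by rintro rfl; simp at hQ; exact h0 hQ
  obtain ⟨K, hK⟩ := exists_diag_ne hQ0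
  by_contra hlt
  exact hK (diag_quot s m c o (by rw [hQ, mul_comm]) hN (by omega))

end Part2
end BGProof

namespace BGProof
section Part3
open Polynomial
set_option maxSynthPendingDepth 3

lemma det_mem_fil {R : Type*} [CommRing R] (Fil : ℤ → AddSubgroup R) (h1 : (1 : R) ∈ Fil 0)
    (hmul : ∀ r s a b, a ∈ Fil r → b ∈ Fil s → a * b ∈ Fil (r + s))
    {N : ℕ} (Mt : Matrix (Fin N) (Fin N) R) (A B : Fin N → ℤ)
    (h : ∀ i j, Mt i j ∈ Fil (A i + B j)) : Mt.det ∈ Fil (∑ i, A i + ∑ i, B i) := by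
  rw [Matrix.det_apply]
  refine AddSubgroup.sum_mem _ fun σ _ => ?_
  have key : ∀ s : Finset (Fin N), ∏ i ∈ s, Mt (σ i) i ∈ Fil (∑ i ∈ s, (A (σ i) + B i)) := by
    classical
    intro s
    induction s using Finset.induction_on with
    | empty => simpa using h1
    | insert a s ha ih =>
      rw [Finset.prod_insert ha, Finset.sum_insert ha]
      exact hmul _ _ _ _ (h _ _) ih
  have := key Finset.univ
  rw [Finset.sum_add_distrib, Equiv.sum_comp σ A] at this
  rcases Int.units_eq_one_or (Equiv.Perm.sign σ) with hs | hs <;> rw [hs]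
  · simpa using this
  · simpa using this

lemma discr_sums (n : ℕ) (hn : 2 ≤ n) (w δ : ℤ) :
    ∑ i : Fin (n - 1 + n), (-δ * (i : ℕ) - if (i : ℕ) = 2 * n - 2 then w - n * δ else 0) +
    ∑ j : Fin (n - 1 + n), (if (j : ℕ) < n - 1 then w + δ * (j : ℕ) else w + δ * ((j : ℕ) - n)) =
      (2 * n - 2) * w - n * (n - 1) * δ := by
  obtain ⟨k, rfl⟩ : ∃ k, n = k + 1 := ⟨n - 1, by omega⟩
  rw [Fin.sum_univ_eq_sum_range (fun i : ℕ => (-δ * (i : ℕ) - if (i : ℕ) = 2 * (k + 1) - 2 then w - (k + 1 : ℕ) * δ else 0)),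
    Fin.sum_univ_eq_sum_range (fun j : ℕ => (if (j : ℕ) < k + 1 - 1 then w + δ * (j : ℕ) else w + δ * ((j : ℕ) - (k + 1 : ℕ))))]
  have h1 : ∀ k : ℕ, 2 * ∑ i ∈ Finset.range k, (i : ℤ) = k * (k - 1) := by
    intro k
    induction k with
    | zero => simp
    | succ k ih => rw [Finset.sum_range_succ, mul_add, ih]; push_cast; ring
  rw [Finset.sum_sub_distrib, ← Finset.mul_sum, Finset.sum_ite_eq', if_pos (by simp; omega)]
  have hB : ∑ j ∈ Finset.range (k + 1 - 1 + (k + 1)), (if (j : ℕ) < k + 1 - 1 then w + δ * (j : ℕ) else w + δ * ((j : ℕ) - (k + 1 : ℕ)))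
      = ∑ j ∈ Finset.range k, (w + δ * (j : ℤ)) + ∑ j ∈ Finset.range (k + 1), (w + δ * ((j : ℤ) - 1)) := by
    rw [Finset.sum_range_add, Nat.add_sub_cancel]
    congr 1
    · exact Finset.sum_congr rfl (fun x hx => if_pos (Finset.mem_range.1 hx))
    · refine Finset.sum_congr rfl (fun x hx => ?_)
      rw [if_neg (by omega)]
      push_cast; ring
  rw [hB]
  simp only [Finset.sum_add_distrib, Finset.sum_sub_distrib, ← Finset.mul_sum, Finset.sum_const,
    Finset.card_range, nsmul_eq_mul]
  have e1 := h1 (k + 1 - 1 + (k + 1))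
  have e2 := h1 k
  have e3 := h1 (k + 1)
  refine mul_left_cancel₀ (two_ne_zero : (2 : ℤ) ≠ 0) ?_
  simp only [Nat.add_sub_cancel] at e1 e2 e3 ⊢
  push_cast at e1 e2 e3 ⊢
  linear_combination (-δ) * e1 + δ * e2 + δ * e3

lemma discr_mem_fil {R : Type*} [CommRing R] (Fil : ℤ → AddSubgroup R) (h1 : (1 : R) ∈ Fil 0)
    (hmul : ∀ r s a b, a ∈ Fil r → b ∈ Fil s → a * b ∈ Fil (r + s))
    (f : R[X]) (hn : 2 ≤ f.natDegree) (w δ : ℤ) (hf : ∀ j : ℕ, f.coeff j ∈ Fil (w - δ * j)) :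
    f.discr ∈ Fil ((2 * f.natDegree - 2) * w - f.natDegree * (f.natDegree - 1) * δ) := by
  have hnat : ∀ k : ℕ, (k : R) ∈ Fil 0 := by
    intro k
    have := (Fil 0).nsmul_mem h1 k
    simpa using this
  have hdet : f.sylvesterDeriv.det ∈ Fil ((2 * f.natDegree - 2) * w - f.natDegree * (f.natDegree - 1) * δ) := by
    rw [← discr_sums _ hn]
    apply det_mem_fil Fil h1 hmul
    intro i j
    have hcast : ∀ (a : R) (r s : ℤ), a ∈ Fil r → r = s → a ∈ Fil s := fun a r s h e => e ▸ h
    rw [sylvesterDeriv, dif_neg (by omega), Matrix.updateRow_apply]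
    have hi0 := i.2
    have hj0 := j.2
    by_cases hi : (i : ℕ) = 2 * f.natDegree - 2
    · rw [if_pos (Fin.ext hi), if_pos hi]
      by_cases hj : (j : ℕ) = f.natDegree - 2
      · rw [if_pos hj, if_pos (by omega)]
        refine hcast _ _ _ h1 ?_
        rw [hi, hj, Nat.cast_sub (by omega), Nat.cast_sub (by omega)]
        push_cast; ring
      · rw [if_neg hj]
        by_cases hj' : (j : ℕ) = 2 * f.natDegree - 2
        · rw [if_pos hj', if_neg (by omega)]
          refine hcast _ _ _ (hnat _) ?_
          rw [hi, hj', Nat.cast_sub (by omega)]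
          push_cast; ring
        · rw [if_neg hj']
          exact zero_mem _
    · have hi' : ¬ i = ⟨2 * f.natDegree - 2, by omega⟩ := fun h => hi (by rw [h])
      rw [if_neg hi, if_neg hi']
      rw [sylvester, Matrix.of_apply]
      induction j using Fin.addCases with
      | left j =>
        rw [Fin.addCases_left, if_pos (by simp)]
        split_ifs with h
        · have h2 := (Set.mem_Icc.1 h).1
          refine hcast _ _ _ (hf _) ?_
          rw [Nat.cast_sub h2]
          simp; ring
        · exact zero_mem _
      | right j =>
        rw [Fin.addCases_right, if_neg (by simp)]
        split_ifs with h
        · have h2 := (Set.mem_Icc.1 h).1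
          rw [coeff_derivative]
          have h3 : ((((i : ℕ) - (j : ℕ) : ℕ) : R) + 1) ∈ Fil 0 := by
            exact_mod_cast hnat ((i : ℕ) - (j : ℕ) + 1)
          refine hcast _ _ _ (hmul _ _ _ _ (hf _) h3) ?_
          push_cast [Nat.cast_sub h2, Fin.val_natAdd]
          rw [Nat.cast_sub (by omega : 1 ≤ f.natDegree)]
          push_cast
          ring
        · exact zero_mem _
  rw [discr]
  rcases neg_one_pow_eq_or R (f.natDegree * (f.natDegree - 1) / 2) with h | h <;> rw [h]
  · simpa using hdet
  · simpa using hdet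

lemma discr_taylor {R : Type*} [CommRing R] [IsDomain R] [CharZero R] (f : R[X]) (hf : 0 < f.natDegree)
    (r : R) : (taylor r f).discr = f.discr := by
  have h := resultant_taylor f f.derivative r
  have e : taylor r (derivative f) = derivative (taylor r f) := by
    simp [taylor_apply, derivative_comp]
  rw [e] at h
  have hd : ∀ g : R[X], g.derivative.natDegree = g.natDegree - 1 := fun g => natDegree_derivative g
  rw [hd, hd, resultant_deriv, resultant_deriv, natDegree_taylor] at h
  · have hl : (taylor r f).leadingCoeff = f.leadingCoeff := by simp
    rw [hl] at h
    have hne : f.leadingCoeff ≠ 0 := by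
      rw [Ne, leadingCoeff_eq_zero]; rintro rfl; simp at hf
    refine mul_left_cancel₀ (mul_ne_zero (pow_ne_zero _ ?_) hne) h
    simp
  · rwa [← natDegree_pos_iff_degree_pos]
  · rwa [← natDegree_pos_iff_degree_pos, natDegree_taylor]

lemma discr_ne_zero {R : Type*} [CommRing R] [IsDomain R] [CharZero R] [UniqueFactorizationMonoid R]
    {f : R[X]} (hf : 0 < f.natDegree) (hp : Prime f) : f.discr ≠ 0 := by
  classical
  let _ : StrongNormalizationMonoid R := UniqueFactorizationMonoid.strongNormalizationMonoid
  let _ : NormalizedGCDMonoid R := UniqueFactorizationMonoid.toNormalizedGCDMonoid R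
  have hi := hp.irreducible
  have hprim := hi.isPrimitive hf.ne'
  have h2 := (hprim.irreducible_iff_irreducible_map_fraction_map (K := FractionRing R)).1 hi
  have : CharZero (FractionRing R) := charZero_of_injective_algebraMap (IsFractionRing.injective R _)
  have h3 := h2.separable
  have h4 := resultant_ne_zero _ _ h3
  intro h0
  have h5 := resultant_deriv (f := f) (natDegree_pos_iff_degree_pos.1 hf)
  rw [h0, mul_zero] at h5
  apply h4
  have hinj := IsFractionRing.injective R (FractionRing R)
  have hd : ∀ g : R[X], g.derivative.natDegree = g.natDegree - 1 := fun g => natDegree_derivative g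
  rw [derivative_map, natDegree_map_eq_of_injective hinj, natDegree_map_eq_of_injective hinj, hd,
    resultant_map_map, h5, map_zero]

end Part3
end BGProof

namespace BGProof
section Part4
open Polynomial
set_option maxSynthPendingDepth 3

lemma shL_coeff (m c : ℂ) (f : A3) (j : ℕ) : (shL m c f).coeff j = shY m c ((shT m f).coeff j) := by
  simp [shL]

lemma shY_symm (m c : ℂ) (p : A2) : shY (-m) (-c) (shY m c p) = p := by
  have : lin (-m) (-c) + lin m c = 0 := by simp [lin]; ring
  rw [shY_apply, shY_apply, taylor_taylor, this, taylor_zero]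

lemma shT_symm (m : ℂ) (p : A3) : shT (-m) (shT m p) = p := by
  have : (C (C (-m)) + C (C m) : A2) = 0 := by simp
  rw [shT_apply, shT_apply, taylor_taylor, this, taylor_zero]

lemma shY_zl (m c : ℂ) : shY m c (zl m c) = X := by
  simp [shY_apply, zl]

lemma shY_X (m c : ℂ) : shY (-m) (-c) X = zl m c := by
  rw [← shY_zl m c, shY_symm]

lemma zl_pow_dvd {m c : ℂ} {p : A2} {k : ℕ} (h : ∀ i < k, (shY m c p).coeff i = 0) :
    zl m c ^ k ∣ p := by
  have := map_dvd (shY (-m) (-c)) (X_pow_dvd_iff.2 h)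
  rwa [map_pow, shY_X, shY_symm] at this

lemma coeff_of_zl_pow_dvd {m c : ℂ} {p : A2} {k : ℕ} (h : zl m c ^ k ∣ p) :
    ∀ i < k, (shY m c p).coeff i = 0 := by
  have := map_dvd (shY m c) h
  rw [map_pow, shY_zl] at this
  exact X_pow_dvd_iff.1 this

/-- evaluation of `ℂ[t][u]` -/
noncomputable def evB (t u : ℂ) : A2 →+* ℂ := (evalRingHom t).comp (evalRingHom (C u))

lemma coeff_zero_eval (m c : ℂ) (p : A2) : (shY m c p).coeff 0 = p.eval (lin m c) := by
  simp [shY_apply, taylor_coeff_zero]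

lemma cf_zero_zero (m c : ℂ) (f : A3) : cf m c 0 0 f = (gam f).map (evB m c) := by
  let h1 : A3 →+* A1 := (evalRingHom (lin m c)).comp (evalRingHom (C (C m)))
  let h2 : A3 →+* A1 := (mapRingHom (evB m c)).comp gam
  have e1 : cf m c 0 0 f = h1 f := by
    simp [h1, cf, shL_coeff, coeff_zero_eval, shT_apply, taylor_coeff_zero]
  have e2 : (gam f).map (evB m c) = h2 f := rfl
  rw [e1, e2]
  have : h1 = h2 := by
    apply A3_hom_ext
    · intro r; simp [h1, h2, gam_c, evB]
    · simp [h1, h2, gam_x]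
    · simp [h1, h2, gam_y, evB, lin]; ring
    · simp [h1, h2, gam_t, evB]
  rw [this]

lemma cf_zero_zero_eq (m c : ℂ) (f : A3) :
    cf m c 0 0 f = (f.eval (C (C m))).eval (lin m c) := by
  simp [cf, shL_coeff, coeff_zero_eval, shT_apply, taylor_coeff_zero]

lemma cf00_deg (m c : ℂ) (f : A3) : (cf m c 0 0 f).natDegree ≤ Dg f := by
  rw [cf_zero_zero]; exact natDegree_map_le

lemma exists_ceil {M : ℕ} (hM : 0 < M) (K : ℤ) :
    ∃ o : ℕ, K ≤ M * o ∧ ∀ k : ℕ, k < o → (M : ℤ) * k < K := by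
  refine ⟨(K.toNat + M - 1) / M, ?_, ?_⟩
  · have h1 : K ≤ K.toNat := Int.self_le_toNat K
    have h2 := Nat.div_add_mod (K.toNat + M - 1) M
    have h3 := Nat.mod_lt (K.toNat + M - 1) hM
    have : K.toNat ≤ M * ((K.toNat + M - 1) / M) := by omega
    calc K ≤ K.toNat := h1
      _ ≤ _ := by exact_mod_cast this
  · intro k hk
    have h1 : (k + 1) * M ≤ K.toNat + M - 1 := (Nat.le_div_iff_mul_le hM).1 hk
    have h2 : (k + 1) * M = M * k + M := by ring
    have h3 : M * k < K.toNat := by omega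
    have h4 : ((M * k : ℕ) : ℤ) < K := by omega
    exact_mod_cast h4

/-- filtration by order along a line -/
noncomputable def filL (m c : ℂ) (M : ℕ) (r : ℤ) : AddSubgroup A2 where
  carrier := {p | ∀ k : ℕ, (M : ℤ) * k < r → (shY m c p).coeff k = 0}
  add_mem' := fun {a b} ha hb k hk => by
    rw [map_add, coeff_add, ha k hk, hb k hk, add_zero]
  zero_mem' := fun k _ => by simp
  neg_mem' := fun {a} ha k hk => by
    have : shY m c (-a) = - shY m c a := RingHom.map_neg _ a
    rw [this, coeff_neg, ha k hk, neg_zero]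

lemma filL_one (m c : ℂ) (M : ℕ) : (1 : A2) ∈ filL m c M 0 := fun k hk => by
  have : (0 : ℤ) ≤ (M : ℤ) * k := by positivity
  omega

lemma filL_mul (m c : ℂ) (M : ℕ) (r s : ℤ) (a b : A2) (ha : a ∈ filL m c M r)
    (hb : b ∈ filL m c M s) : a * b ∈ filL m c M (r + s) := fun k hk => by
  rw [map_mul, coeff_mul]
  refine Finset.sum_eq_zero fun x hx => ?_
  have hx' := Finset.HasAntidiagonal.mem_antidiagonal.1 hx
  by_cases h1 : (M : ℤ) * x.1 < r
  · rw [ha _ h1, zero_mul]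
  · rw [hb, mul_zero]
    have : (M : ℤ) * k = M * x.1 + M * x.2 := by rw [← hx']; push_cast; ring
    linarith

/-- filtration by degree on `y = l x` -/
noncomputable def filD (l : ℂ) (r : ℤ) : AddSubgroup A2 where
  carrier := {p | ∀ k : ℕ, -r < k → (p.eval (C l * X)).coeff k = 0}
  add_mem' := fun {a b} ha hb k hk => by
    rw [eval_add, coeff_add, ha k hk, hb k hk, add_zero]
  zero_mem' := fun k _ => by simp
  neg_mem' := fun {a} ha k hk => by
    rw [eval_neg, coeff_neg, ha k hk, neg_zero]

lemma filD_one (l : ℂ) : (1 : A2) ∈ filD l 0 := fun k hk => by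
  rw [eval_one, coeff_one, if_neg (by omega)]

lemma filD_mul (l : ℂ) (r s : ℤ) (a b : A2) (ha : a ∈ filD l r)
    (hb : b ∈ filD l s) : a * b ∈ filD l (r + s) := fun k hk => by
  rw [eval_mul, coeff_mul]
  refine Finset.sum_eq_zero fun x hx => ?_
  have hx' := Finset.HasAntidiagonal.mem_antidiagonal.1 hx
  by_cases h1 : -r < x.1
  · rw [ha _ h1, zero_mul]
  · rw [hb, mul_zero]
    omega

section semi
variable {ι : Type*} [Fintype ι] (m c : ι → ℂ) (M : ℕ) (a : ι → ℕ)

lemma semi_zero (hm : Function.Injective m) (hM : 0 < M) {f : A3} (hf : f ≠ 0)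
    (hd : f.natDegree = 0) (r : ι → ℕ) (hr : ∀ i, Wge (m i) (c i) M (a i) f (r i)) :
    ∑ i, r i ≤ M * Dg f := by
  obtain ⟨q, rfl⟩ := natDegree_eq_zero.1 hd
  choose o ho1 ho2 using fun i => exists_ceil hM (r i)
  have hq : q ≠ 0 := by rintro rfl; simp at hf
  have h := sum_le_of_dvd Finset.univ m c (hm.injOn) o hq (fun i _ => ?_) (N := Dg (C q)) ?_
  · have : ∑ i, (r i : ℤ) ≤ ∑ i, (M : ℤ) * o i := Finset.sum_le_sum fun i _ => ho1 i
    rw [← Finset.mul_sum] at this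
    have h' : ∑ i, r i ≤ M * ∑ i, o i := by exact_mod_cast this
    exact h'.trans (Nat.mul_le_mul_left _ h)
  · apply zl_pow_dvd
    intro k hk
    have h1 := ho2 i k hk
    have h2 := hr i k 0 (by rw [mul_zero, add_zero]; exact_mod_cast h1)
    rw [cf, shL_coeff, shT_x, coeff_C_zero] at h2
    exact h2
  · intro l
    have := deg_res (le_refl (Dg (C q))) l 0
    rwa [shT_x, coeff_C_zero, add_zero] at this

lemma semi_two (hm : Function.Injective m) (hM : 0 < M) {f : A3} (hf : Prime f)
    (hd : 2 ≤ f.natDegree) (r : ι → ℕ) (hr : ∀ i, Wge (m i) (c i) M (a i) f (r i)) :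
    2 * ∑ i, r i ≤ 2 * M * Dg f + (M + ∑ i, a i) * f.natDegree := by
  set n := f.natDegree with hn
  have hΔ : f.discr ≠ 0 := discr_ne_zero (by omega) hf
  have hT : ∀ l, (shT l f).discr = f.discr := fun l => discr_taylor f (by omega) _
  have hTn : ∀ l, (shT l f).natDegree = n := fun l => natDegree_taylor _ _
  choose o ho1 ho2 using fun i => exists_ceil hM ((2 * n - 2) * (r i : ℤ) - n * (n - 1) * a i)
  have h := sum_le_of_dvd Finset.univ m c (hm.injOn) o hΔ (fun i _ => ?_)
    (N := (2 * n - 2) * Dg f + n * (n - 1)) ?_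
  · have h1 : ∑ i, ((2 * n - 2) * (r i : ℤ) - n * (n - 1) * a i) ≤ ∑ i, (M : ℤ) * o i :=
      Finset.sum_le_sum fun i _ => ho1 i
    rw [← Finset.mul_sum, Finset.sum_sub_distrib, ← Finset.mul_sum, ← Finset.mul_sum] at h1
    have h2 : (∑ i, (o i : ℤ)) ≤ (2 * n - 2) * Dg f + n * (n - 1) := by
      have h3 : ((∑ i, o i : ℕ) : ℤ) ≤ (((2 * n - 2) * Dg f + n * (n - 1) : ℕ) : ℤ) := by exact_mod_cast h
      push_cast [Nat.cast_sub (show 2 ≤ 2 * n by omega), Nat.cast_sub (show 1 ≤ n by omega)] at h3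
      exact h3
    have h4 : (M : ℤ) * ∑ i, (o i : ℤ) ≤ M * ((2 * n - 2) * Dg f + n * (n - 1)) :=
      mul_le_mul_of_nonneg_left h2 (by positivity)
    have h5 : ((n : ℤ) - 1) * (2 * ∑ i, (r i : ℤ)) ≤ (n - 1) * (2 * M * Dg f + (M + ∑ i, (a i : ℤ)) * n) := by
      linarith
    have h6 := le_of_mul_le_mul_left h5 (by omega)
    exact_mod_cast h6
  · apply zl_pow_dvd
    intro k hk
    have h1 := ho2 i k hk
    have h2 := discr_mem_fil (filL (m i) (c i) M) (filL_one _ _ _) (filL_mul _ _ _)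
      (shT (m i) f) (by rw [hTn]; exact hd) (r i) (a i) (fun j k hk => ?_)
    · rw [hT, hTn] at h2
      exact h2 k h1
    · rw [← shL_coeff]
      exact hr i k j (by zify; linarith)
  · intro l
    have h2 := discr_mem_fil (filD l) (filD_one _) (filD_mul _)
      (shT l f) (by rw [hTn]; exact hd) (-(Dg f : ℤ)) 1 (fun j k hk => ?_)
    · rw [hT, hTn] at h2
      rw [natDegree_le_iff_coeff_eq_zero]
      intro N hN
      apply h2
      have h3 : (((2 * n - 2) * Dg f + n * (n - 1) : ℕ) : ℤ) < N := by exact_mod_cast hN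
      push_cast [Nat.cast_sub (show 2 ≤ 2 * n by omega), Nat.cast_sub (show 1 ≤ n by omega)] at h3
      linarith
    · have := deg_res (le_refl (Dg f)) l j
      exact coeff_eq_zero_of_natDegree_lt (by omega)
end semi

end Part4
end BGProof

namespace BGProof
section Part5
open Polynomial
set_option maxSynthPendingDepth 3

lemma sum_finrank_eigen (N : Module.End ℂ (Fin 3 → ℂ)) (s : Finset ℂ) :
    ∑ μ ∈ s, Module.finrank ℂ (N.eigenspace μ) ≤ 3 := by
  classical
  have h := (N.eigenspaces_iSupIndep).comp (f := fun x : s => (x : ℂ)) Subtype.val_injective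
  have hinj := h.dfinsupp_lsum_injective
  have h1 := LinearMap.finrank_le_finrank_of_injective hinj
  have h2 := Module.finrank_directSum ℂ (fun x : s => N.eigenspace (x : ℂ))
  have h3 : Module.finrank ℂ (Fin 3 → ℂ) = 3 := by simp
  rw [h3] at h1
  rw [← Finset.sum_coe_sort]
  rw [← h2]
  exact h1

section
variable {ι : Type*} [Fintype ι] (m c : ι → ℂ) (M : ℕ) (a : ι → ℕ)

open Classical in
lemma planar (hm : Function.Injective m) (ha : ∀ i, a i ≤ M)
    (hpt : ∀ x y : ℂ, ∑ i with y = m i * x + c i, a i ≤ 2 * M)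
    (p q s : ℂ) (h : ¬ (p = 0 ∧ q = 0 ∧ s = 0)) :
    ∑ i with p * c i + q * m i + s = 0, a i ≤ 2 * M := by
  by_cases hp : p = 0
  · subst hp
    by_cases hq : q = 0
    · subst hq
      have hs : s ≠ 0 := fun hs => h ⟨rfl, rfl, hs⟩
      simp [hs]
    · have : (Finset.univ.filter fun i => 0 * c i + q * m i + s = 0).card ≤ 1 := by
        rw [Finset.card_le_one]
        intro i hi j hj
        simp only [Finset.mem_filter, Finset.mem_univ, true_and, zero_mul, zero_add] at hi hj
        apply hm
        apply mul_left_cancel₀ hq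
        linear_combination hi - hj
      calc _ ≤ ∑ i with 0 * c i + q * m i + s = 0, M := Finset.sum_le_sum fun i _ => ha i
        _ = _ * M := by rw [Finset.sum_const, smul_eq_mul]
        _ ≤ 1 * M := Nat.mul_le_mul_right _ this
        _ ≤ _ := by omega
  · refine le_trans (le_of_eq ?_) (hpt (q / p) (-(s / p)))
    congr 1
    ext i
    simp only [Finset.mem_filter, Finset.mem_univ, true_and]
    constructor
    · intro h; field_simp; linear_combination -h
    · intro h; field_simp at h; linear_combination -h

lemma lin_comb_fin3 (φ : Module.Dual ℂ (Fin 3 → ℂ)) (v : Fin 3 → ℂ) :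
    φ v = φ (Pi.single 0 1) * v 0 + φ (Pi.single 1 1) * v 1 + φ (Pi.single 2 1) * v 2 := by
  conv_lhs => rw [LinearMap.pi_apply_eq_sum_univ φ v]
  simp [Fin.sum_univ_three, mul_comm]
  have : ∀ i : Fin 3, (fun j => if i = j then (1 : ℂ) else 0) = Pi.single i 1 := by
    intro i; ext j; simp [Pi.single_apply, eq_comm]
  simp [this]

/-- direction vector of a line in the dual space -/
def vec (i : ι) : Fin 3 → ℂ := ![c i, m i, 1]

open Classical in
lemma fiber_le (hm : Function.Injective m) (ha : ∀ i, a i ≤ M)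
    (hpt : ∀ x y : ℂ, ∑ i with y = m i * x + c i, a i ≤ 2 * M)
    (W : Submodule ℂ (Fin 3 → ℂ)) (hW : W ≠ ⊤) :
    ∑ i with vec m c i ∈ W, a i ≤ M * Module.finrank ℂ W := by
  have hpl : ∑ i with vec m c i ∈ W, a i ≤ 2 * M := by
    obtain ⟨φ, hφ, hφW⟩ := Submodule.exists_le_ker_of_lt_top W (lt_top_iff_ne_top.2 hW)
    refine le_trans ?_ (planar m c M a hm ha hpt (φ (Pi.single 0 1)) (φ (Pi.single 1 1)) (φ (Pi.single 2 1)) ?_)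
    · apply Finset.sum_le_sum_of_subset
      intro i hi
      simp only [Finset.mem_filter, Finset.mem_univ, true_and] at hi ⊢
      have h1 : φ (vec m c i) = 0 := hφW hi
      rw [lin_comb_fin3] at h1
      simpa [vec] using h1
    · rintro ⟨h1, h2, h3⟩
      apply hφ
      refine LinearMap.ext fun v => ?_
      rw [lin_comb_fin3 φ, h1, h2, h3]
      simp
  rcases Nat.lt_or_ge (Module.finrank ℂ W) 2 with h | h
  · have hle : Module.finrank ℂ W ≤ 1 := by omega
    have : (Finset.univ.filter fun i => vec m c i ∈ W).card ≤ Module.finrank ℂ W := by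
      rcases Nat.eq_zero_or_pos (Module.finrank ℂ W) with h0 | h0
      · have hb : W = ⊥ := Submodule.finrank_eq_zero.1 h0
        rw [h0, Nat.le_zero, Finset.card_eq_zero, Finset.filter_eq_empty_iff]
        intro i _ hi
        rw [hb, Submodule.mem_bot] at hi
        have := congrFun hi 2
        simp [vec] at this
      · refine le_trans ?_ h0
        show _ ≤ 1
        rw [Finset.card_le_one]
        intro i hi j hj
        simp only [Finset.mem_filter, Finset.mem_univ, true_and] at hi hj
        obtain ⟨v, hv⟩ := finrank_le_one_iff.1 hle
        obtain ⟨s, hs⟩ := hv ⟨_, hi⟩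
        obtain ⟨t, ht⟩ := hv ⟨_, hj⟩
        have hs' : s • (v : Fin 3 → ℂ) = vec m c i := congrArg Subtype.val hs
        have ht' : t • (v : Fin 3 → ℂ) = vec m c j := congrArg Subtype.val ht
        have e1 := congrFun hs' 2
        have e2 := congrFun ht' 2
        have e3 := congrFun hs' 1
        have e4 := congrFun ht' 1
        simp [vec] at e1 e2 e3 e4
        apply hm
        have hv0 : (v : Fin 3 → ℂ) 2 ≠ 0 := by intro h; simp [h] at e1
        have : s = t := mul_right_cancel₀ hv0 (e1.trans e2.symm)
        rw [← e3, ← e4, this]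
    calc _ ≤ ∑ i with vec m c i ∈ W, M := Finset.sum_le_sum fun i _ => ha i
      _ = _ * M := by rw [Finset.sum_const, smul_eq_mul]
      _ ≤ Module.finrank ℂ W * M := Nat.mul_le_mul_right _ this
      _ = _ := mul_comm _ _
  · calc _ ≤ 2 * M := hpl
      _ ≤ _ := by rw [mul_comm]; exact Nat.mul_le_mul_left _ h

open Classical in
lemma eigen_le (hm : Function.Injective m) (ha : ∀ i, a i ≤ M)
    (hpt : ∀ x y : ℂ, ∑ i with y = m i * x + c i, a i ≤ 2 * M)
    (N : Module.End ℂ (Fin 3 → ℂ)) (hN : ∀ μ, N.eigenspace μ ≠ ⊤) (s : Finset ι) (ev : ι → ℂ)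
    (hs : ∀ i ∈ s, N (vec m c i) = ev i • vec m c i) : ∑ i ∈ s, a i ≤ 3 * M := by
  rw [← Finset.sum_fiberwise_of_maps_to (g := ev) (t := s.image ev) (fun i hi => Finset.mem_image_of_mem _ hi)]
  calc _ ≤ ∑ μ ∈ s.image ev, M * Module.finrank ℂ (N.eigenspace μ) := by
        refine Finset.sum_le_sum fun μ _ => ?_
        refine le_trans ?_ (fiber_le m c M a hm ha hpt _ (hN μ))
        apply Finset.sum_le_sum_of_subset
        intro i hi
        simp only [Finset.mem_filter, Finset.mem_univ, true_and] at hi ⊢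
        rw [Module.End.mem_eigenspace_iff, hs i hi.1, hi.2]
    _ = M * _ := by rw [Finset.mul_sum]
    _ ≤ M * 3 := Nat.mul_le_mul_left _ (sum_finrank_eigen N _)
    _ = _ := mul_comm _ _

end
end Part5
end BGProof

namespace BGProof
section Part6
open Polynomial
set_option maxSynthPendingDepth 3

section
variable {ι : Type*} [Fintype ι] (m c : ι → ℂ) (M : ℕ) (a : ι → ℕ)

lemma r_le_a {m c : ℂ} {M a r : ℕ} {p : A3} (hp : Prime p) (hd : p.natDegree = 1)
    (h : Wge m c M a p r) : r ≤ a := by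
  by_contra hlt
  push Not at hlt
  have h0 : zl m c ∣ (shT m p).coeff 0 := by
    rw [← pow_one (zl m c)]
    apply zl_pow_dvd
    intro i hi
    have := h 0 0 (by omega)
    obtain rfl : i = 0 := by omega
    rw [← shL_coeff]; exact this
  have h1 : zl m c ∣ (shT m p).coeff 1 := by
    rw [← pow_one (zl m c)]
    apply zl_pow_dvd
    intro i hi
    have := h 0 1 (by omega)
    obtain rfl : i = 0 := by omega
    rw [← shL_coeff]; exact this
  have h2 : C (zl m c) ∣ shT m p := by
    rw [C_dvd_iff_dvd_coeff]
    intro j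
    rcases j with _ | _ | j
    · exact h0
    · exact h1
    · rw [coeff_eq_zero_of_natDegree_lt]
      · exact dvd_zero _
      · rw [shT_apply, natDegree_taylor, hd]; omega
  have h3 : C (zl m c) ∣ p := by
    have := map_dvd (shT (-m)) h2
    rwa [shT_symm, shT_x] at this
  obtain ⟨g, hg⟩ := h3
  rcases hp.irreducible.isUnit_or_isUnit hg with hu | hu
  · exact (zl_prime m c).not_isUnit (isUnit_C.1 hu)
  · have := natDegree_eq_zero_of_isUnit hu
    have hle : p.natDegree ≤ 0 := by
      rw [hg]
      refine natDegree_mul_le.trans ?_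
      simp [this]
    omega

lemma TD2 {p : A2} (h : TD p 2) : ∃ a00 a10 a20 a01 a11 a02 : ℂ,
    p = C (C a00 + C a10 * X + C a20 * X ^ 2) + C (C a01 + C a11 * X) * X + C (C a02) * X ^ 2 := by
  refine ⟨(p.coeff 0).coeff 0, (p.coeff 0).coeff 1, (p.coeff 0).coeff 2, (p.coeff 1).coeff 0,
    (p.coeff 1).coeff 1, (p.coeff 2).coeff 0, ?_⟩
  refine Polynomial.ext fun k => Polynomial.ext fun i => ?_
  by_cases hk : 2 < i + k
  · rw [h k i hk]
    rcases k with _ | _ | _ | k <;> rcases i with _ | _ | _ | i <;>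
      simp [-map_pow, -map_mul, -map_add, coeff_X, coeff_C, coeff_X_pow] at hk ⊢
  · have : (k = 0 ∧ i = 0) ∨ (k = 0 ∧ i = 1) ∨ (k = 0 ∧ i = 2) ∨ (k = 1 ∧ i = 0) ∨
      (k = 1 ∧ i = 1) ∨ (k = 2 ∧ i = 0) := by omega
    rcases this with ⟨rfl, rfl⟩ | ⟨rfl, rfl⟩ | ⟨rfl, rfl⟩ | ⟨rfl, rfl⟩ | ⟨rfl, rfl⟩ | ⟨rfl, rfl⟩ <;>
      simp [-map_pow, -map_mul, -map_add, coeff_X, coeff_C, coeff_X_pow]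

lemma q_form (a00 a10 a20 a01 a11 a02 b00 b10 b20 b01 b11 b02 m c : ℂ) :
    (((C (C (C a00 + C a10 * X + C a20 * X ^ 2) + C (C a01 + C a11 * X) * X + C (C a02) * X ^ 2) * X +
     C (C (C b00 + C b10 * X + C b20 * X ^ 2) + C (C b01 + C b11 * X) * X + C (C b02) * X ^ 2) : A3).eval
      (C (C m))).eval (lin m c)) =
     C (m * (a20 + a11 * m + a02 * m ^ 2) + b20 + b11 * m + b02 * m ^ 2) * X ^ 2 +
     C (m * (a10 + a01 * m + a11 * c + 2 * a02 * m * c) + b10 + b01 * m + b11 * c + 2 * b02 * m * c) * X +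
     C (m * (a00 + a01 * c + a02 * c ^ 2) + b00 + b01 * c + b02 * c ^ 2) := by
  have h2 : (C 2 : A1) = 2 := map_ofNat C 2
  simp [lin, h2]
  ring

lemma quad_coeff (p q r : ℂ) : (C p * X ^ 2 + C q * X + C r : A1).coeff 2 = p ∧
    (C p * X ^ 2 + C q * X + C r : A1).coeff 1 = q ∧ (C p * X ^ 2 + C q * X + C r : A1).coeff 0 = r := by
  refine ⟨?_, ?_, ?_⟩ <;> simp [coeff_X, coeff_C, coeff_X_pow]

open Classical in
lemma inv_bound (hm : Function.Injective m) (ha : ∀ i, a i ≤ M)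
    (hpt : ∀ x y : ℂ, ∑ i with y = m i * x + c i, a i ≤ 2 * M)
    {p : A3} (hp : p ≠ 0) (hd : p.natDegree = 1) (hD : Dg p ≤ 1) :
    ∑ i with cf (m i) (c i) 0 0 p = 0, a i ≤ (2 + Dg p) * M := by
  have hpe : p = C (p.coeff 1) * X + C (p.coeff 0) := eq_X_add_C_of_natDegree_le_one hd.le
  set A := p.coeff 1 with hA
  set B := p.coeff 0 with hB
  have hs : ∀ l, shT l p = C A * X + C (C (C l) * A + B) := by
    intro l
    conv_lhs => rw [hpe]
    rw [map_add, map_mul, shT_x, shT_x, shT_t]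
    simp; ring
  have hA2 : TD A 2 := by
    apply TD_of_eval
    intro l
    have := deg_res hD l 1
    rw [hs] at this
    simpa using this
  have hB2 : TD B 2 := by
    apply TD_of_eval
    intro l
    have h0 := deg_res hD l 0
    have h1 := deg_res hD l 1
    rw [hs] at h0 h1
    simp at h0 h1
    have : B.eval (C l * X) = (C l * A.eval (C l * X) + B.eval (C l * X)) - C l * A.eval (C l * X) := by ring
    rw [this]
    refine (natDegree_sub_le _ _).trans (max_le (h0.trans (by norm_num)) ?_)
    refine natDegree_mul_le.trans ?_
    simpa using h1
  obtain ⟨a00, a10, a20, a01, a11, a02, hAe⟩ := TD2 hA2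
  obtain ⟨b00, b10, b20, b01, b11, b02, hBe⟩ := TD2 hB2
  have hq : ∀ m c, cf m c 0 0 p = _ := fun m c => by
    rw [cf_zero_zero_eq, hpe, hAe, hBe, q_form]
  have hc2 : ∀ m : ℂ, m * (a20 + a11 * m + a02 * m ^ 2) + b20 + b11 * m + b02 * m ^ 2 = 0 := by
    intro m
    have h1 := cf00_deg m 0 p
    rw [hq] at h1
    have h2 := (quad_coeff (m * (a20 + a11 * m + a02 * m ^ 2) + b20 + b11 * m + b02 * m ^ 2) (m * (a10 + a01 * m + a11 * 0 + 2 * a02 * m * 0) + b10 + b01 * m + b11 * 0 + 2 * b02 * m * 0) (m * (a00 + a01 * 0 + a02 * 0 ^ 2) + b00 + b01 * 0 + b02 * 0 ^ 2)).1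
    rw [← h2]
    exact coeff_eq_zero_of_natDegree_lt (by omega)
  have k0 := hc2 0
  have k1 := hc2 1
  have k2 := hc2 (-1)
  have k3 := hc2 2
  have e1 : b20 = 0 := by linear_combination k0
  have e2 : a02 = 0 := by linear_combination (k3 - 3 * k1 - k2 + 3 * k0) / 6
  have e3 : b02 = -a11 := by linear_combination (k1 + k2) / 2 - k0
  have e4 : b11 = -a20 := by linear_combination (k1 - k2) / 2 - e2
  subst e1 e2 e3 e4
  have hinv : ∀ i, cf (m i) (c i) 0 0 p = 0 →
      b10 + (a10 + b01) * m i + a01 * (m i) ^ 2 - a20 * c i - a11 * m i * c i = 0 ∧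
      b00 + a00 * m i + b01 * c i + a01 * m i * c i - a11 * (c i) ^ 2 = 0 := by
    intro i hi
    rw [hq] at hi
    have h2 := quad_coeff (m i * (a20 + a11 * m i + 0 * (m i) ^ 2) + 0 + (-a20) * m i + (-a11) * (m i) ^ 2) (m i * (a10 + a01 * m i + a11 * c i + 2 * 0 * m i * c i) + b10 + b01 * m i + (-a20) * c i + 2 * (-a11) * m i * c i) (m i * (a00 + a01 * c i + 0 * c i ^ 2) + b00 + b01 * c i + (-a11) * c i ^ 2)
    rw [hi] at h2
    obtain ⟨-, h3, h4⟩ := h2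
    rw [coeff_zero] at h3 h4
    exact ⟨by linear_combination -h3, by linear_combination -h4⟩
  have hnz : ¬ (a00 = 0 ∧ a10 = 0 ∧ a20 = 0 ∧ a01 = 0 ∧ a11 = 0 ∧ b00 = 0 ∧ b10 = 0 ∧ b01 = 0) := by
    rintro ⟨rfl, rfl, rfl, rfl, rfl, rfl, rfl, rfl⟩
    apply hp
    rw [hpe, hAe, hBe]
    simp
  rcases Nat.eq_zero_or_pos (Dg p) with h0 | h0
  · have hc1 : ∀ m c : ℂ, b10 + (a10 + b01) * m + a01 * m ^ 2 - a20 * c - a11 * m * c = 0 := by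
      intro m c
      have h1 := cf00_deg m c p
      rw [hq] at h1
      have h2 := (quad_coeff (m * (a20 + a11 * m + 0 * m ^ 2) + 0 + (-a20) * m + (-a11) * m ^ 2) (m * (a10 + a01 * m + a11 * c + 2 * 0 * m * c) + b10 + b01 * m + (-a20) * c + 2 * (-a11) * m * c) (m * (a00 + a01 * c + 0 * c ^ 2) + b00 + b01 * c + (-a11) * c ^ 2)).2.1
      rw [coeff_eq_zero_of_natDegree_lt (by omega)] at h2
      linear_combination -h2
    have l0 := hc1 0 0
    have l1 := hc1 1 0
    have l2 := hc1 (-1) 0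
    have l3 := hc1 0 1
    have l4 := hc1 1 1
    have f1 : b10 = 0 := by linear_combination l0
    have f2 : a01 = 0 := by linear_combination (l1 + l2) / 2 - l0
    have f3 : a10 = - b01 := by linear_combination (l1 - l2) / 2
    have f4 : a20 = 0 := by linear_combination l0 - l3
    have f5 : a11 = 0 := by linear_combination l1 + l3 - l0 - l4
    subst f1 f2 f3 f4 f5
    refine le_trans ?_ ((planar m c M a hm ha hpt b01 a00 b00 ?_).trans (Nat.mul_le_mul_right _ (by omega)))
    · apply Finset.sum_le_sum_of_subset
      intro i hi
      simp only [Finset.mem_filter, Finset.mem_univ, true_and] at hi ⊢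
      linear_combination (hinv i hi).2
    · rintro ⟨rfl, rfl, rfl⟩
      apply hnz
      simp
  · let N : Module.End ℂ (Fin 3 → ℂ) :=
      Matrix.mulVecLin !![b01, a00, b00; -a20, a10 + b01, b10; a11, -a01, 0]
    refine (eigen_le m c M a hm ha hpt N ?_ _ (fun i => a11 * c i - a01 * m i) ?_).trans
      (Nat.mul_le_mul_right _ (by omega))
    · intro μ hμ
      have hall : ∀ v, N v = μ • v := by
        intro v
        rw [← Module.End.mem_eigenspace_iff, hμ]
        trivial
      have g0 := hall ![1, 0, 0]
      have g1 := hall ![0, 1, 0]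
      have g2 := hall ![0, 0, 1]
      have q00 := congrFun g0 0
      have q01 := congrFun g0 1
      have q02 := congrFun g0 2
      have q10 := congrFun g1 0
      have q11 := congrFun g1 1
      have q12 := congrFun g1 2
      have q20 := congrFun g2 0
      have q21 := congrFun g2 1
      have q22 := congrFun g2 2
      simp [N, Matrix.mulVec, dotProduct, Fin.sum_univ_three] at q00 q01 q02 q10 q11 q12 q20 q21 q22
      apply hnz
      refine ⟨q10, ?_, q01, q12, q02, q20, q21, ?_⟩
      · linear_combination q11 - q00
      · rw [q00, ← q22]
    · intro i hi
      simp only [Finset.mem_filter, Finset.mem_univ, true_and] at hi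
      obtain ⟨h1, h2⟩ := hinv i hi
      ext j
      fin_cases j
      · simp [N, vec, Matrix.mulVec, dotProduct, Fin.sum_univ_three]; linear_combination h2
      · simp [N, vec, Matrix.mulVec, dotProduct, Fin.sum_univ_three]; linear_combination h1
      · simp [N, vec, Matrix.mulVec, dotProduct, Fin.sum_univ_three]; ring

lemma semi_one (hm : Function.Injective m) (ha : ∀ i, a i ≤ M)
    (hpt : ∀ x y : ℂ, ∀ s : Finset ι, (∀ i ∈ s, y = m i * x + c i) → ∑ i ∈ s, a i ≤ 2 * M)
    (hA1 : 3 * M ≤ ∑ i, a i) (hA2 : ∑ i, a i ≤ 5 * M)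
    {p : A3} (hp : Prime p) (hd : p.natDegree = 1) (r : ι → ℕ)
    (hr : ∀ i, Wge (m i) (c i) M (a i) p (r i)) :
    2 * ∑ i, r i ≤ 2 * M * Dg p + (M + ∑ i, a i) * p.natDegree := by
  classical
  have h1 : ∑ i, r i ≤ ∑ i with cf (m i) (c i) 0 0 p = 0, a i := by
    rw [Finset.sum_filter]
    refine Finset.sum_le_sum fun i _ => ?_
    split_ifs with h
    · exact r_le_a hp hd (hr i)
    · by_contra h2
      exact h (hr i 0 0 (by omega))
  rw [hd]
  rcases Nat.lt_or_ge (Dg p) 2 with h | h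
  · have h2 := inv_bound m c M a hm ha (fun x y => hpt x y _ (fun i hi => (Finset.mem_filter.1 hi).2)) hp.ne_zero hd (by omega)
    have : Dg p = 0 ∨ Dg p = 1 := by omega
    rcases this with h3 | h3 <;> rw [h3] at h2 ⊢ <;> omega
  · have h2 : ∑ i with cf (m i) (c i) 0 0 p = 0, a i ≤ ∑ i, a i :=
      Finset.sum_le_sum_of_subset (Finset.filter_subset _ _)
    have h3 : 2 * M * 2 ≤ 2 * M * Dg p := Nat.mul_le_mul_left _ h
    omega

/-- semistability -/
theorem semistable (hm : Function.Injective m) (hM : 0 < M) (ha : ∀ i, a i ≤ M)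
    (hpt : ∀ x y : ℂ, ∀ s : Finset ι, (∀ i ∈ s, y = m i * x + c i) → ∑ i ∈ s, a i ≤ 2 * M)
    (hA1 : 3 * M ≤ ∑ i, a i) (hA2 : ∑ i, a i ≤ 5 * M)
    (f : A3) (hf : f ≠ 0) (r : ι → ℕ)
    (hr : ∀ i, Wge (m i) (c i) M (a i) f (r i)) :
    2 * ∑ i, r i ≤ 2 * M * Dg f + (M + ∑ i, a i) * f.natDegree := by
  induction f using UniqueFactorizationMonoid.induction_on_prime generalizing r with
  | h₁ => exact absurd rfl hf
  | h₂ f hu =>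
    have hd := natDegree_eq_zero_of_isUnit hu
    have := semi_zero m c M a hm hM hf hd r hr
    rw [hd, mul_assoc]; omega
  | h₃ g p hg hp ih =>
    choose r1 r2 h1 h2 h3 using fun i => Wge_split hp.ne_zero hg (hr i)
    have k1 := ih hg r2 h3
    have k2 : 2 * ∑ i, r1 i ≤ 2 * M * Dg p + (M + ∑ i, a i) * p.natDegree := by
      rcases Nat.lt_or_ge p.natDegree 2 with h | h
      · rcases Nat.eq_zero_or_pos p.natDegree with h0 | h0
        · have := semi_zero m c M a hm hM hp.ne_zero h0 r1 h2
          rw [h0, mul_assoc]; omega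
        · exact semi_one m c M a hm ha hpt hA1 hA2 hp (by omega) r1 h2
      · exact semi_two m c M a hm hM hp h r1 h2
    have k3 : ∑ i, r i ≤ ∑ i, r1 i + ∑ i, r2 i := by
      rw [← Finset.sum_add_distrib]; exact Finset.sum_le_sum fun i _ => h1 i
    rw [Dg_mul hp.ne_zero hg, natDegree_mul hp.ne_zero hg, mul_add, mul_add]
    omega

end
end Part6
end BGProof

namespace BGProof
section Part7
open Polynomial
set_option maxSynthPendingDepth 3

lemma TD.zero {D : ℕ} : TD 0 D := fun k i _ => by simp
lemma TD.add {p q : A2} {D : ℕ} (hp : TD p D) (hq : TD q D) : TD (p + q) D := fun k i h => by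
  rw [coeff_add, coeff_add, hp k i h, hq k i h, add_zero]
lemma TD.sum {ι : Type*} {s : Finset ι} {p : ι → A2} {D : ℕ} (h : ∀ i ∈ s, TD (p i) D) :
    TD (∑ i ∈ s, p i) D := by
  intro k i hk
  rw [finsetSum_coeff, finsetSum_coeff]
  exact Finset.sum_eq_zero fun x hx => h x hx k i hk
lemma TD.mono {p : A2} {D E : ℕ} (h : TD p D) (hDE : D ≤ E) : TD p E := fun k i hk => h k i (by omega)
lemma TD.mul {p q : A2} {D E : ℕ} (hp : TD p D) (hq : TD q E) : TD (p * q) (D + E) := by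
  intro k i hk
  rw [coeff_mul, finsetSum_coeff]
  refine Finset.sum_eq_zero fun x hx => ?_
  rw [coeff_mul]
  refine Finset.sum_eq_zero fun y hy => ?_
  have h1 := Finset.HasAntidiagonal.mem_antidiagonal.1 hx
  have h2 := Finset.HasAntidiagonal.mem_antidiagonal.1 hy
  by_cases h : D < y.1 + x.1
  · rw [hp _ _ h, zero_mul]
  · rw [hq _ _ (by omega), mul_zero]
lemma TD.C {p : A1} {D : ℕ} (h : p.natDegree ≤ D) : TD (C p) D := by
  intro k i hk
  rw [coeff_C]
  split_ifs with h0
  · exact coeff_eq_zero_of_natDegree_lt (by omega)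
  · simp
lemma TD.X : TD X 1 := by
  intro k i hk
  rw [coeff_X]
  split_ifs with h0
  · rw [coeff_one, if_neg (by omega)]
  · simp
lemma TD.pow {p : A2} {D : ℕ} (h : TD p D) (k : ℕ) : TD (p ^ k) (k * D) := by
  induction k with
  | zero => rw [pow_zero, ← C_1]; exact TD.C (by simp)
  | succ k ih => rw [pow_succ, Nat.succ_mul]; exact ih.mul h
lemma TD.coeff_deg {p : A2} {D k : ℕ} (h : TD p D) (hk : k ≤ D) : (p.coeff k).natDegree ≤ D - k := by
  rw [natDegree_le_iff_coeff_eq_zero]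
  intro i hi
  exact h k i (by omega)
lemma TD.coeff_zero {p : A2} {D k : ℕ} (h : TD p D) (hk : D < k) : p.coeff k = 0 := by
  ext i
  rw [h k i (by omega)]; simp
lemma TD.coeff_deg' {p : A2} {D k : ℕ} (h : TD p D) : (p.coeff k).natDegree ≤ D := by
  rcases Nat.lt_or_ge D k with h1 | h1
  · rw [h.coeff_zero h1]; simp
  · exact (h.coeff_deg h1).trans (by omega)

lemma lin_deg (m c : ℂ) : (lin m c).natDegree ≤ 1 := natDegree_linear_le

lemma TD.natDegree_le {p : A2} {D : ℕ} (h : TD p D) : p.natDegree ≤ D := by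
  rw [natDegree_le_iff_coeff_eq_zero]
  intro i hi
  exact h.coeff_zero hi

lemma TD.shY {p : A2} {D : ℕ} (h : TD p D) (m c : ℂ) : TD (shY m c p) D := by
  rw [p.as_sum_range' (D + 1) (by have := h.natDegree_le; omega), map_sum]
  refine TD.sum fun k hk => ?_
  have hk' : k ≤ D := by have := Finset.mem_range.1 hk; omega
  rw [← C_mul_X_pow_eq_monomial, map_mul, map_pow]
  have h1 : BGProof.shY m c (Polynomial.C (p.coeff k)) = Polynomial.C (p.coeff k) := by simp [shY_apply]
  have h2 : BGProof.shY m c Polynomial.X = Polynomial.X + Polynomial.C (lin m c) := by simp [shY_apply]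
  rw [h1, h2]
  have h3 : TD (Polynomial.X + Polynomial.C (lin m c)) 1 := TD.X.add (TD.C (lin_deg m c))
  exact ((TD.C (h.coeff_deg hk')).mul (h3.pow k)).mono (by omega)

lemma shT_coeff (f : A3) {n : ℕ} (hn : f.natDegree ≤ n) (l : ℂ) (j : ℕ) :
    (shT l f).coeff j = ∑ k ∈ Finset.range (n + 1), f.coeff k * C (C (l ^ (k - j) * (k.choose j : ℂ))) := by
  conv_lhs => rw [f.as_sum_range' (n + 1) (by omega), map_sum, finsetSum_coeff]
  refine Finset.sum_congr rfl fun k _ => ?_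
  rw [← C_mul_X_pow_eq_monomial, map_mul, map_pow, shT_x, shT_t, coeff_C_mul, coeff_X_add_C_pow]
  simp

lemma TD_shT {f : A3} {n D : ℕ} (hn : f.natDegree ≤ n) (h : ∀ j, TD (f.coeff j) D) (l : ℂ) (j : ℕ) :
    TD ((shT l f).coeff j) D := by
  rw [shT_coeff f hn]
  refine TD.sum fun k _ => ?_
  have := (h k).mul (TD.C (p := C (l ^ (k - j) * (k.choose j : ℂ))) (D := 0) (natDegree_C _).le)
  exact this

lemma TD_shL {f : A3} {n D : ℕ} (hn : f.natDegree ≤ n) (h : ∀ j, TD (f.coeff j) D) (m c : ℂ) (j : ℕ) :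
    TD ((shL m c f).coeff j) D := by
  rw [shL_coeff]
  exact (TD_shT hn h m j).shY m c

lemma shT_natDegree (l : ℂ) (f : A3) : (shT l f).natDegree = f.natDegree := natDegree_taylor _ _

lemma TD_of_Dg {f : A3} {n d : ℕ} (hn : f.natDegree ≤ n) (hd : Dg f ≤ d) (j : ℕ) :
    TD (f.coeff j) (d + n) := by
  apply TD_of_eval
  intro l
  have h1 : f.coeff j = (shT (-l) (shT l f)).coeff j := by rw [shT_symm]
  rw [h1, shT_coeff _ (n := n) (by rw [shT_natDegree]; exact hn), eval_finsetSum]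
  refine natDegree_sum_le_of_forall_le _ _ fun k hk => ?_
  have hk' := Finset.mem_range.1 hk
  rw [eval_mul, eval_C]
  refine natDegree_mul_le.trans ?_
  have := deg_res hd l k
  rw [natDegree_C]
  omega

/-- ideal of polynomials without low coefficients -/
def LowP (e : ℕ) (p : A2) : Prop := ∀ k < e, ∀ i < e, (p.coeff k).coeff i = 0

lemma split_low {p : A2} {N e : ℕ} (h : TD p N) (hl : LowP e p) :
    ∃ p1 p2 : A2, p = C (X ^ e) * p1 + X ^ e * p2 ∧ TD p1 (N - e) ∧ TD p2 (N - e) := by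
  have hp : p = ∑ k ∈ Finset.range (N + 1), ∑ i ∈ Finset.range (N + 1), monomial k (monomial i ((p.coeff k).coeff i)) := by
    conv_lhs => rw [p.as_sum_range' (N + 1) (by have := h.natDegree_le; omega)]
    refine Finset.sum_congr rfl fun k _ => ?_
    rw [← map_sum]
    congr 1
    exact (p.coeff k).as_sum_range' (N + 1) (by have := h.coeff_deg' (k := k); omega)
  have key : ∀ k i, ∃ p1 p2 : A2, monomial k (monomial i ((p.coeff k).coeff i)) = C (X ^ e) * p1 + X ^ e * p2 ∧ TD p1 (N - e) ∧ TD p2 (N - e) := by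
    intro k i
    have hTD : ∀ k i (r : ℂ), i + k ≤ N - e → TD (monomial k (monomial i r)) (N - e) := by
      intro k i r hki k' i' h'
      rw [coeff_monomial]
      split_ifs with h1
      · rw [coeff_monomial, if_neg (by omega)]
      · simp
    by_cases hN : N < i + k
    · exact ⟨0, 0, by rw [h k i hN]; simp, TD.zero, TD.zero⟩
    by_cases hk : k < e
    · by_cases hi : i < e
      · exact ⟨0, 0, by rw [hl k hk i hi]; simp, TD.zero, TD.zero⟩
      · refine ⟨monomial k (monomial (i - e) ((p.coeff k).coeff i)), 0, ?_, hTD _ _ _ (by omega), TD.zero⟩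
        rw [C_mul_monomial, X_pow_mul_monomial, Nat.sub_add_cancel (by omega)]
        simp
    · refine ⟨0, monomial (k - e) (monomial i ((p.coeff k).coeff i)), ?_, TD.zero, hTD _ _ _ (by omega)⟩
      rw [X_pow_mul_monomial, Nat.sub_add_cancel (by omega)]
      simp
  choose p1 p2 h1 h2 h3 using key
  refine ⟨∑ k ∈ Finset.range (N + 1), ∑ i ∈ Finset.range (N + 1), p1 k i,
    ∑ k ∈ Finset.range (N + 1), ∑ i ∈ Finset.range (N + 1), p2 k i, ?_,
    TD.sum fun k _ => TD.sum fun i _ => h2 k i, TD.sum fun k _ => TD.sum fun i _ => h3 k i⟩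
  conv_lhs => rw [hp]
  simp only [h1, Finset.sum_add_distrib, Finset.mul_sum]

/-- bound on the innermost degree -/
def tb (g : A3) (N : ℕ) : Prop := ∀ i j, ((g.coeff i).coeff j).natDegree ≤ N

lemma tb.sum {ι : Type*} {s : Finset ι} {p : ι → A3} {D : ℕ} (h : ∀ i ∈ s, tb (p i) D) :
    tb (∑ i ∈ s, p i) D := by
  intro k i
  rw [finsetSum_coeff, finsetSum_coeff]
  exact natDegree_sum_le_of_forall_le _ _ fun x hx => h x hx k i
lemma tb.mono {p : A3} {D E : ℕ} (h : tb p D) (hDE : D ≤ E) : tb p E := fun k i => (h k i).trans hDE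
lemma tb.add {p q : A3} {D : ℕ} (hp : tb p D) (hq : tb q D) : tb (p + q) D := fun k i => by
  rw [coeff_add, coeff_add]; exact natDegree_add_le_of_degree_le (hp k i) (hq k i)
lemma tb.mul {p q : A3} {D E : ℕ} (hp : tb p D) (hq : tb q E) : tb (p * q) (D + E) := by
  intro k i
  rw [coeff_mul, finsetSum_coeff]
  refine natDegree_sum_le_of_forall_le _ _ fun x hx => ?_
  rw [coeff_mul]
  refine natDegree_sum_le_of_forall_le _ _ fun y hy => ?_
  refine natDegree_mul_le.trans ?_
  have := hp x.1 y.1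
  have := hq x.2 y.2
  omega
lemma tb.CC {p : A1} {D : ℕ} (h : p.natDegree ≤ D) : tb (C (C p)) D := by
  intro i j
  rw [coeff_C]
  split_ifs
  · rw [coeff_C]
    split_ifs
    · exact h
    · simp
  · simp
lemma tb.u : tb (C X) 0 := by
  intro i j
  rw [coeff_C]
  split_ifs
  · rw [coeff_X]; split_ifs <;> simp
  · simp
lemma tb.x : tb X 0 := by
  intro i j
  rw [coeff_X]
  split_ifs
  · rw [coeff_one]; split_ifs <;> simp
  · simp
lemma tb.pow {p : A3} {D : ℕ} (h : tb p D) (k : ℕ) : tb (p ^ k) (k * D) := by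
  induction k with
  | zero =>
    rw [pow_zero, ← C_1, ← C_1]; exact tb.CC (by simp)
  | succ k ih => rw [pow_succ, Nat.succ_mul]; exact ih.mul h

lemma tb_gam {s : A3} {n K : ℕ} (hn : s.natDegree ≤ n) (h : ∀ j, TD (s.coeff j) K) : tb (gam s) (K + n) := by
  rw [s.as_sum_range' (n + 1) (by omega), map_sum]
  refine tb.sum fun j hj => ?_
  have hj' := Finset.mem_range.1 hj
  rw [← C_mul_X_pow_eq_monomial, map_mul, map_pow, gam_t]
  have h1 : tb (C (C X) ^ j : A3) n := ((tb.CC (p := X) (D := 1) natDegree_X_le).pow j).mono (by omega)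
  refine tb.mul ?_ h1
  generalize hq : s.coeff j = q
  have hqT : TD q K := hq ▸ h j
  conv => rw [q.as_sum_range' (K + 1) (by have := hqT.natDegree_le; omega), map_sum, map_sum]
  refine tb.sum fun b hb => ?_
  have hb' := Finset.mem_range.1 hb
  rw [← C_mul_X_pow_eq_monomial, map_mul, map_mul, map_pow, map_pow, gam_y]
  have h2 : tb (C X + C (C X) * X : A3) 1 := (tb.u.mono (by omega)).add ((tb.CC (p := X) (D := 1) natDegree_X_le).mul tb.x)
  have h3 : ∀ r : A1, tb (gam (C (C r))) 0 := by
    intro r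
    conv => rw [r.as_sum_range, map_sum, map_sum, map_sum]
    refine tb.sum fun i _ => ?_
    rw [← C_mul_X_pow_eq_monomial, map_mul, map_mul, map_mul, map_pow, map_pow, map_pow, gam_x, gam_c]
    exact ((tb.CC (D := 0) (natDegree_C _).le).mul (tb.x.pow i)).mono (by omega)
  exact ((h3 _).mul (h2.pow b)).mono (by omega)

end Part7
end BGProof

namespace BGProof
section Part8
open Polynomial
set_option maxSynthPendingDepth 3

lemma Dg_split {f s1 s2 : A3} {n K e k : ℕ} (hf : f = C (C X) ^ e * s1 + C X ^ e * s2)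
    (hn1 : s1.natDegree ≤ n) (hn2 : s2.natDegree ≤ n)
    (h1 : ∀ j, TD (s1.coeff j) K) (h2 : ∀ j, TD (s2.coeff j) K) (he : K + n < e)
    (hD : Dg f ≤ e + k) : Dg s1 ≤ k ∧ Dg s2 ≤ k := by
  by_contra hcon
  set D := max (Dg s1) (Dg s2) with hDdef
  have hDk : k < D := by
    by_contra h
    push Not at h
    exact hcon ⟨(le_max_left _ _).trans h, (le_max_right _ _).trans h⟩
  have hg : gam f = X ^ e * gam s1 + (C X + C (C X) * X) ^ e * gam s2 := by
    rw [hf, map_add, map_mul, map_mul, map_pow, map_pow, gam_x, gam_y]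
  have hc : (gam f).coeff (e + D) = 0 := by
    apply coeff_eq_zero_of_natDegree_lt
    have : (gam f).natDegree ≤ e + k := hD
    omega
  have hl : (C X + C (C X) * X : A3).natDegree ≤ 1 := by
    rw [add_comm]; exact natDegree_linear_le
  have hl2 : ((C X + C (C X) * X : A3) ^ e).natDegree ≤ e := by
    refine natDegree_pow_le.trans ?_
    calc _ ≤ e * 1 := Nat.mul_le_mul_left _ hl
      _ = e := mul_one e
  have hc2 : ((C X + C (C X) * X : A3) ^ e).coeff e = (C X : A2) ^ e := by
    have := coeff_pow_of_natDegree_le hl (m := e)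
    rw [mul_one] at this
    rw [this]
    congr 1
    simp
  have hs2 : (gam s2).natDegree ≤ D := le_max_right _ _
  rw [hg, coeff_add, coeff_mul_add_eq_of_natDegree_le hl2 hs2, hc2,
    add_comm e D, coeff_X_pow_mul] at hc
  have t1 := tb_gam hn1 h1
  have t2 := tb_gam hn2 h2
  have hz : ∀ j, ((gam s1).coeff D).coeff j = 0 ∧ ((gam s2).coeff D).coeff j = 0 := by
    intro j
    have hj := congrArg (fun p : A2 => p.coeff j) hc
    simp only [coeff_add, ← C_pow, coeff_C_mul, coeff_zero] at hj
    have b1 := t1 D j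
    have b2 := t2 D j
    have z2 : ((gam s2).coeff D).coeff j = 0 := by
      ext i
      have := congrArg (fun p : A1 => p.coeff (i + e)) hj
      simp only [coeff_add, coeff_X_pow_mul, coeff_zero] at this
      rw [coeff_eq_zero_of_natDegree_lt (by omega), zero_add] at this
      simpa using this
    refine ⟨?_, z2⟩
    rw [z2, mul_zero, add_zero] at hj
    exact hj
  have hz1 : (gam s1).coeff D = 0 := by ext1 j; simpa using (hz j).1
  have hz2 : (gam s2).coeff D = 0 := by ext1 j; simpa using (hz j).2
  have fin : ∀ s : A3, (gam s).coeff D = 0 → D = Dg s → False := by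
    intro s hs hDs
    rw [hDs] at hs
    have : gam s = 0 := leadingCoeff_eq_zero.1 hs
    have : Dg s = 0 := by rw [Dg, this]; simp
    omega
  rcases max_choice (Dg s1) (Dg s2) with h | h
  · exact fin s1 hz1 h
  · exact fin s2 hz2 h

lemma cf_split {f s1 s2 : A3} {n K e : ℕ} (hf : f = C (C X) ^ e * s1 + C X ^ e * s2)
    (hn1 : s1.natDegree ≤ n) (hn2 : s2.natDegree ≤ n)
    (h1 : ∀ j, TD (s1.coeff j) K) (h2 : ∀ j, TD (s2.coeff j) K) (he : K < e)
    {m c : ℂ} (hc : c ≠ 0) {M a r : ℕ} (hM : 0 < M)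
    (hw : Wge m c M a f r) : Wge m c M a s1 r ∧ Wge m c M a s2 r := by
  have hg : shL m c f = C (C X) ^ e * shL m c s1 + C (X + C (lin m c)) ^ e * shL m c s2 := by
    have e1 : shL m c (C (C X)) = C (C X) := by simp [shL, shT_x, shY_apply]
    have e2 : shL m c (C X) = C (X + C (lin m c)) := by simp [shL, shT_x, shY_apply]
    rw [hf, map_add, map_mul, map_mul, map_pow, map_pow, e1, e2]
  have hcf : ∀ i j, cf m c i j f = X ^ e * cf m c i j s1 +
      ∑ x ∈ Finset.HasAntidiagonal.antidiagonal i, ((X + C (lin m c) : A2) ^ e).coeff x.1 * cf m c x.2 j s2 := by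
    intro i j
    simp only [cf]
    rw [hg, coeff_add, coeff_add, ← C_pow, coeff_C_mul, ← C_pow, coeff_C_mul, ← C_pow, coeff_C_mul, coeff_mul]
  have key : ∀ j i, M * i + a * j < r → cf m c i j s1 = 0 ∧ cf m c i j s2 = 0 := by
    intro j i
    induction i using Nat.strong_induction_on with
    | _ i ih =>
      intro hij
      have h := hcf i j
      rw [hw i j hij, Finset.sum_eq_single (0, i)] at h
      · have e3 : ((X + C (lin m c) : A2) ^ e).coeff 0 = lin m c ^ e := by
          rw [coeff_zero_eq_eval_zero]; simp
        rw [e3] at h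
        have d1 : (cf m c i j s1).natDegree ≤ K := (TD_shL hn1 h1 m c j).coeff_deg'
        have d2 : (cf m c i j s2).natDegree ≤ K := (TD_shL hn2 h2 m c j).coeff_deg'
        have hX : (X : A1) ^ e ∣ lin m c ^ e * cf m c i j s2 :=
          ⟨-cf m c i j s1, by linear_combination -h⟩
        have hcop : IsCoprime ((X : A1) ^ e) (lin m c ^ e) := by
          apply IsCoprime.pow
          refine ⟨-C (c⁻¹ * m), C c⁻¹, ?_⟩
          have : (C (c⁻¹) * C c : A1) = 1 := by rw [← C_mul, inv_mul_cancel₀ hc, C_1]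
          rw [lin, C_mul]
          linear_combination this
        have hX2 := hcop.dvd_of_dvd_mul_left hX
        have z2 : cf m c i j s2 = 0 := by
          by_contra hne
          have := natDegree_le_of_dvd hX2 hne
          rw [natDegree_X_pow] at this
          omega
        refine ⟨?_, z2⟩
        rw [z2, mul_zero, add_zero] at h
        exact (mul_eq_zero.1 h.symm).resolve_left (pow_ne_zero _ X_ne_zero)
      · intro x hx hne
        have hx' := Finset.HasAntidiagonal.mem_antidiagonal.1 hx
        have hlt : x.2 < i := by
          by_contra hh
          apply hne
          ext <;> simp <;> omega
        have : M * x.2 < M * i := Nat.mul_lt_mul_of_pos_left hlt hM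
        rw [(ih x.2 hlt (by omega)).2, mul_zero]
      · intro hh
        exact absurd (Finset.HasAntidiagonal.mem_antidiagonal.2 (by simp)) hh
  exact ⟨fun i j h => (key j i h).1, fun i j h => (key j i h).2⟩

lemma A3_split {f : A3} {n N e : ℕ} (hn : f.natDegree ≤ n) (h : ∀ j, TD (f.coeff j) N)
    (hl : ∀ j ≤ n, LowP e (f.coeff j)) : ∃ s1 s2 : A3, f = C (C X) ^ e * s1 + C X ^ e * s2 ∧
    s1.natDegree ≤ n ∧ s2.natDegree ≤ n ∧ (∀ j, TD (s1.coeff j) (N - e)) ∧ (∀ j, TD (s2.coeff j) (N - e)) := by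
  have hl' : ∀ j, LowP e (f.coeff j) := by
    intro j
    by_cases hj : j ≤ n
    · exact hl j hj
    · rw [coeff_eq_zero_of_natDegree_lt (by omega)]
      intro k _ i _
      simp
  choose p1 p2 q1 q2 q3 using fun j => split_low (h j) (hl' j)
  have hco : ∀ (p : ℕ → A2) j, (∑ j ∈ Finset.range (n + 1), monomial j (p j) : A3).coeff j =
      if j < n + 1 then p j else 0 := by
    intro p j
    simp only [finsetSum_coeff, coeff_monomial]
    simp
  refine ⟨∑ j ∈ Finset.range (n + 1), monomial j (p1 j), ∑ j ∈ Finset.range (n + 1), monomial j (p2 j), ?_, ?_, ?_, ?_, ?_⟩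
  · ext1 j
    rw [coeff_add, ← C_pow, ← C_pow, ← C_pow, coeff_C_mul, coeff_C_mul, hco, hco]
    split_ifs with hj
    · exact q1 j
    · rw [coeff_eq_zero_of_natDegree_lt (by omega)]; simp
  · rw [natDegree_le_iff_coeff_eq_zero]
    intro j hj
    rw [hco, if_neg (by omega)]
  · rw [natDegree_le_iff_coeff_eq_zero]
    intro j hj
    rw [hco, if_neg (by omega)]
  · intro j
    rw [hco]
    split_ifs
    · exact q2 j
    · exact TD.zero
  · intro j
    rw [hco]
    split_ifs
    · exact q3 j
    · exact TD.zero

section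
variable {ι : Type*} (m c : ι → ℂ) (M : ℕ) (a : ι → ℕ)

lemma low_inj {n k e : ℕ} (hM : 0 < M) (hc : ∀ i, c i ≠ 0)
    (hV : ∀ f : A3, f.natDegree ≤ n → Dg f ≤ k → (∀ i, Wge (m i) (c i) M (a i) f (n * a i)) → f = 0)
    (he : k + 2 * n < e) {f : A3} (hn : f.natDegree ≤ n) (hD : Dg f ≤ e + k)
    (hw : ∀ i, Wge (m i) (c i) M (a i) f (n * a i)) (hl : ∀ j ≤ n, LowP e (f.coeff j)) : f = 0 := by
  obtain ⟨s1, s2, h1, h2, h3, h4, h5⟩ := A3_split hn (TD_of_Dg hn hD) hl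
  obtain ⟨g1, g2⟩ := Dg_split h1 h2 h3 h4 h5 (by omega) hD
  have hcf := fun i => cf_split h1 h2 h3 h4 h5 (by omega) (hc i) hM (hw i)
  rw [h1, hV s1 h2 g1 (fun i => (hcf i).1), hV s2 h3 g2 (fun i => (hcf i).2)]
  simp
end
end Part8
end BGProof

namespace BGProof
section Part9
open Polynomial
set_option maxSynthPendingDepth 3

noncomputable def E0 (n : ℕ) (f g : A3) : A2 :=
  ∑ j ∈ Finset.range (n + 1), ((-1) ^ j * ((j.factorial : A2) * ((n - j).factorial : A2))) * (f.coeff j * g.coeff (n - j))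

noncomputable def EF (n : ℕ) (f g : A3) : A3 :=
  ∑ j ∈ Finset.range (n + 1), (-1) ^ j * (derivative^[j] f * derivative^[n - j] g)

lemma fact_coeff_taylor (r : A2) (f : A3) (j : ℕ) :
    (j.factorial : A2) * (taylor r f).coeff j = (derivative^[j] f).eval r := by
  rw [taylor_coeff]
  have := congrFun (factorial_smul_hasseDeriv (R := A2) j) f
  rw [← this]
  simp

lemma E0_taylor_eq (n : ℕ) (r : A2) (f g : A3) : E0 n (taylor r f) (taylor r g) = (EF n f g).eval r := by
  rw [E0, EF, eval_finsetSum]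
  refine Finset.sum_congr rfl fun j _ => ?_
  rw [eval_mul, eval_mul, ← fact_coeff_taylor, ← fact_coeff_taylor]
  simp
  ring

lemma EF_deriv (n : ℕ) (f g : A3) (hf : f.natDegree ≤ n) (hg : g.natDegree ≤ n) : derivative (EF n f g) = 0 := by
  have h : ∀ N, N ≤ n → derivative (∑ j ∈ Finset.range (N + 1), (-1 : A3) ^ j * (derivative^[j] f * derivative^[n - j] g)) =
      (-1) ^ N * (derivative^[N + 1] f * derivative^[n - N] g) := by
    intro N
    induction N with
    | zero =>
      intro _
      have : derivative (derivative^[n] g) = 0 := by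
        rw [← Function.iterate_succ_apply' derivative n g]
        exact iterate_derivative_eq_zero (by omega)
      simp [this]
    | succ N ih =>
      intro hN
      rw [Finset.sum_range_succ, derivative_add, ih (by omega)]
      have e1 : derivative ((-1 : A3) ^ (N + 1)) = 0 := by
        have : ((-1 : A3) ^ (N + 1)) = C ((-1) ^ (N + 1)) := by simp
        rw [this, derivative_C]
      rw [derivative_mul, e1, derivative_mul, ← Function.iterate_succ_apply' derivative (N + 1) f,
        ← Function.iterate_succ_apply' derivative (n - (N + 1)) g]
      have : (n - (N + 1)).succ = n - N := by omega
      rw [this]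
      ring
  rw [EF, h n le_rfl, iterate_derivative_eq_zero (by omega : f.natDegree < n + 1)]
  simp

lemma E0_shT (n : ℕ) (l : ℂ) (f g : A3) (hf : f.natDegree ≤ n) (hg : g.natDegree ≤ n) :
    E0 n (shT l f) (shT l g) = E0 n f g := by
  have h0 : E0 n f g = (EF n f g).eval 0 := by
    rw [← E0_taylor_eq, taylor_zero, taylor_zero]
  rw [shT_apply, shT_apply, E0_taylor_eq, h0]
  have := derivative_eq_zero.1 (EF_deriv n f g hf hg)
  rw [eq_C_of_natDegree_eq_zero this]
  simp

/-- the ideal of polynomials without low coefficients -/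
def LowI (e : ℕ) : Ideal A2 where
  carrier := {p | LowP e p}
  zero_mem' := fun k _ i _ => by simp
  add_mem' := fun {p q} hp hq k hk i hi => by
    rw [coeff_add, coeff_add, hp k hk i hi, hq k hk i hi, add_zero]
  smul_mem' := fun r p hp k hk i hi => by
    rw [smul_eq_mul, coeff_mul, finsetSum_coeff]
    refine Finset.sum_eq_zero fun x hx => ?_
    rw [coeff_mul]
    refine Finset.sum_eq_zero fun y hy => ?_
    have h1 := Finset.HasAntidiagonal.mem_antidiagonal.1 hx
    have h2 := Finset.HasAntidiagonal.mem_antidiagonal.1 hy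
    rw [hp _ (by omega) _ (by omega), mul_zero]

lemma mem_LowI {e : ℕ} {p : A2} : p ∈ LowI e ↔ LowP e p := Iff.rfl

lemma zl_unit (e : ℕ) (m : ℂ) {c : ℂ} (hc : c ≠ 0) : IsUnit (Ideal.Quotient.mk (LowI e) (zl m c)) := by
  have hx : IsNilpotent (Ideal.Quotient.mk (LowI e) (C X)) := by
    refine ⟨e, ?_⟩
    rw [← map_pow, Ideal.Quotient.eq_zero_iff_mem]
    intro k hk i hi
    rw [← C_pow, coeff_C]
    split_ifs
    · rw [coeff_X_pow, if_neg (by omega)]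
    · simp
  have hy : IsNilpotent (Ideal.Quotient.mk (LowI e) X) := by
    refine ⟨e, ?_⟩
    rw [← map_pow, Ideal.Quotient.eq_zero_iff_mem]
    intro k hk i hi
    rw [coeff_X_pow, if_neg (by omega)]
    simp
  have hu : IsUnit (Ideal.Quotient.mk (LowI e) (C (C (-c)))) := by
    apply IsUnit.map
    apply IsUnit.map
    apply IsUnit.map
    exact (neg_ne_zero.2 hc).isUnit
  have : Ideal.Quotient.mk (LowI e) (zl m c) = (Ideal.Quotient.mk (LowI e) X - Ideal.Quotient.mk (LowI e) (C (C m)) * Ideal.Quotient.mk (LowI e) (C X)) + Ideal.Quotient.mk (LowI e) (C (C (-c))) := by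
    rw [← map_mul, ← map_sub, ← map_add]
    congr 1
    simp [zl, lin]; ring
  rw [this]
  apply IsNilpotent.isUnit_add_right_of_commute _ hu (Commute.all _ _)
  exact (Commute.all _ _).isNilpotent_sub hy ((Commute.all _ _).isNilpotent_mul_left hx)

section
variable {ι : Type*} [Fintype ι] (m c : ι → ℂ) (M : ℕ) (a : ι → ℕ)

lemma exists_U (e : ℕ) (hc : ∀ i, c i ≠ 0) (o : ι → ℕ) :
    ∃ U : A2, (∏ i, zl (m i) (c i) ^ o i) * U - 1 ∈ LowI e := by
  have hu : IsUnit (Ideal.Quotient.mk (LowI e) (∏ i, zl (m i) (c i) ^ o i)) := by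
    rw [map_prod]
    rw [IsUnit.prod_univ_iff]
    intro i
    rw [map_pow]
    exact (zl_unit e _ (hc i)).pow _
  obtain ⟨v, hv⟩ := hu.exists_right_inv
  obtain ⟨U, rfl⟩ := Ideal.Quotient.mk_surjective v
  refine ⟨U, ?_⟩
  rw [← Ideal.Quotient.eq_zero_iff_mem, map_sub, map_mul, hv, map_one, sub_self]

lemma E0_isotropic {n r d e : ℕ} (hn : n = 2 * M * r) (hM : 0 < M) (hm : Function.Injective m)
    (hd : 2 * d + n < (2 * e - 2) + ∑ i, 2 * r * a i) (he : 0 < e)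
    {f g : A3} (hf : f.natDegree ≤ n) (hg : g.natDegree ≤ n) (hfD : Dg f ≤ d) (hgD : Dg g ≤ d)
    (hfw : ∀ i, Wge (m i) (c i) M (a i) f (n * a i)) (hgw : ∀ i, Wge (m i) (c i) M (a i) g (n * a i))
    {U : A2} (hU : (∏ i, zl (m i) (c i) ^ (2 * r * a i)) * U - 1 ∈ LowI e) :
    ((E0 n f g * U).coeff (e - 1)).coeff (e - 1) = 0 := by
  have hdvd : ∏ i, zl (m i) (c i) ^ (2 * r * a i) ∣ E0 n f g := by
    apply prod_zl_dvd _ _ _ hm.injOn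
    intro i _
    apply zl_pow_dvd
    have hfil : ∀ h : A3, Wge (m i) (c i) M (a i) h (n * a i) → ∀ j ≤ n,
        (shT (m i) h).coeff j ∈ filL (m i) (c i) M ((n - j : ℤ) * a i) := by
      intro h hh j hj k hk
      rw [← shL_coeff]
      apply hh k j
      zify
      linarith
    have hmem : E0 n f g ∈ filL (m i) (c i) M (n * a i : ℤ) := by
      rw [← E0_shT n (m i) f g hf hg]
      apply AddSubgroup.sum_mem
      intro j hj
      have hj' : j ≤ n := by have := Finset.mem_range.1 hj; omega
      have h1 := filL_mul _ _ _ _ _ _ _ (hfil f (hfw i) j hj') (hfil g (hgw i) (n - j) (by omega))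
      have h2 : ((-1) ^ j * ((j.factorial : A2) * ((n - j).factorial : A2))) ∈ filL (m i) (c i) M 0 := by
        intro k hk
        have : (0 : ℤ) ≤ (M : ℤ) * k := by positivity
        omega
      have h3 := filL_mul _ _ _ _ _ _ _ h2 h1
      have : (0 + ((n - j : ℤ) * a i + (n - ((n - j : ℕ) : ℤ)) * a i)) = (n * a i : ℤ) := by
        push_cast [hj']; ring
      rw [this] at h3
      exact h3
    intro k hk
    apply hmem k
    rw [hn]
    have : M * k < M * (2 * r * a i) := Nat.mul_lt_mul_of_pos_left hk hM
    push_cast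
    zify at this
    linarith
  obtain ⟨Q, hQ⟩ := hdvd
  have hdeg : ∀ l : ℂ, ((E0 n f g).eval (C l * X)).natDegree ≤ 2 * d + n := by
    intro l
    rw [← E0_shT n l f g hf hg, E0, eval_finsetSum]
    refine natDegree_sum_le_of_forall_le _ _ fun j hj => ?_
    have hj' : j ≤ n := by have := Finset.mem_range.1 hj; omega
    rw [eval_mul, eval_mul (p := (shT l f).coeff j)]
    have h1 := deg_res hfD l j
    have h2 := deg_res hgD l (n - j)
    have h3 : (eval (C l * X) ((-1) ^ j * ((j.factorial : A2) * ((n - j).factorial : A2)))).natDegree ≤ 0 := by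
      have : ((-1) ^ j * ((j.factorial : A2) * ((n - j).factorial : A2))) = C (C ((-1) ^ j * ((j.factorial : ℂ) * ((n - j).factorial : ℂ)))) := by simp
      rw [this, eval_C, natDegree_C]
    refine natDegree_mul_le.trans ?_
    have := natDegree_mul_le (p := eval (C l * X) ((shT l f).coeff j)) (q := eval (C l * X) ((shT l g).coeff (n - j)))
    omega
  have hdiag := diag_quot Finset.univ m c (fun i => 2 * r * a i) (Q := Q) (by rw [hQ, mul_comm]) hdeg hd
  have hQc : (Q.coeff (e - 1)).coeff (e - 1) = 0 := by
    have := diag_coeff Q (2 * e - 2) (e - 1) (by omega)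
    rw [hdiag, coeff_zero] at this
    rw [this]; congr 1; omega
  have heq : E0 n f g * U = Q + Q * ((∏ i, zl (m i) (c i) ^ (2 * r * a i)) * U - 1) := by
    rw [hQ]; ring
  have hlow : LowP e (Q * ((∏ i, zl (m i) (c i) ^ (2 * r * a i)) * U - 1)) :=
    Ideal.mul_mem_left _ _ hU
  rw [heq, coeff_add, coeff_add, hQc, hlow _ (by omega) _ (by omega), add_zero]

end
end Part9
end BGProof

namespace BGProof
section Part10
open Polynomial
set_option maxSynthPendingDepth 3

/-- coefficients as a linear map -/
noncomputable def co (i k j : ℕ) : A3 →ₗ[ℂ] ℂ where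
  toFun f := ((f.coeff j).coeff k).coeff i
  map_add' f g := by simp
  map_smul' r f := by simp

lemma co_apply (i k j : ℕ) (f : A3) : co i k j f = ((f.coeff j).coeff k).coeff i := rfl

noncomputable def shLl (m c : ℂ) : A3 →ₗ[ℂ] A3 where
  toFun f := shL m c f
  map_add' f g := map_add _ _ _
  map_smul' r f := by
    have h : ∀ g : A3, r • g = C (C (C r)) * g := by
      intro g; ext j k i; simp
    rw [h, map_mul, RingHom.id_apply, h]
    congr 1
    simp [shL, shT_x, shY_apply]

lemma cf_add (m c : ℂ) (i j : ℕ) (f g : A3) : cf m c i j (f + g) = cf m c i j f + cf m c i j g := by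
  simp [cf]
lemma cf_smul (m c : ℂ) (i j : ℕ) (r : ℂ) (f : A3) : cf m c i j (r • f) = r • cf m c i j f := by
  have : shL m c (r • f) = r • shL m c f := (shLl m c).map_smul r f
  simp [cf, this]

lemma smul_eq_C (r : ℂ) (f : A3) : r • f = C (C (C r)) * f := by
  ext j k i; simp

lemma Dg_add_le {f g : A3} {d : ℕ} (hf : Dg f ≤ d) (hg : Dg g ≤ d) : Dg (f + g) ≤ d := by
  unfold Dg at *
  rw [map_add]
  exact natDegree_add_le_of_degree_le hf hg

lemma Dg_smul_le {f : A3} {d : ℕ} (r : ℂ) (hf : Dg f ≤ d) : Dg (r • f) ≤ d := by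
  unfold Dg at *
  rw [smul_eq_C, map_mul, gam_c]
  refine natDegree_mul_le.trans ?_
  rw [natDegree_C]; omega

/-- the space of polynomials without line conditions -/
noncomputable def S0 (n d : ℕ) : Submodule ℂ A3 where
  carrier := {f | f.natDegree ≤ n ∧ Dg f ≤ d}
  zero_mem' := by simp [Dg]
  add_mem' := fun {f g} hf hg => ⟨natDegree_add_le_of_degree_le hf.1 hg.1, Dg_add_le hf.2 hg.2⟩
  smul_mem' := fun r f hf => ⟨(natDegree_smul_le r f).trans hf.1, Dg_smul_le r hf.2⟩

/-- one line condition -/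
noncomputable def Wl (m c : ℂ) (M a r : ℕ) : Submodule ℂ A3 where
  carrier := {f | Wge m c M a f r}
  zero_mem' := by intro i j _; simp [cf]
  add_mem' := fun {f g} hf hg i j h => by rw [cf_add, hf i j h, hg i j h, add_zero]
  smul_mem' := fun r f hf i j h => by rw [cf_smul, hf i j h, smul_zero]

lemma E0_add_left (n : ℕ) (f f' g : A3) : E0 n (f + f') g = E0 n f g + E0 n f' g := by
  simp only [E0, coeff_add, ← Finset.sum_add_distrib]
  refine Finset.sum_congr rfl fun j _ => by ring
lemma E0_add_right (n : ℕ) (f g g' : A3) : E0 n f (g + g') = E0 n f g + E0 n f g' := by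
  simp only [E0, coeff_add, ← Finset.sum_add_distrib]
  refine Finset.sum_congr rfl fun j _ => by ring
lemma E0_smul_left (n : ℕ) (r : ℂ) (f g : A3) : E0 n (r • f) g = C (C r) * E0 n f g := by
  simp only [E0, smul_eq_C, coeff_C_mul, Finset.mul_sum]
  refine Finset.sum_congr rfl fun j _ => by ring
lemma E0_smul_right (n : ℕ) (r : ℂ) (f g : A3) : E0 n f (r • g) = C (C r) * E0 n f g := by
  simp only [E0, smul_eq_C, coeff_C_mul, Finset.mul_sum]
  refine Finset.sum_congr rfl fun j _ => by ring

noncomputable def bil (n e : ℕ) (U : A2) : A3 →ₗ[ℂ] A3 →ₗ[ℂ] ℂ :=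
  LinearMap.mk₂ ℂ (fun f g => ((E0 n f g * U).coeff (e - 1)).coeff (e - 1))
    (by intro f f' g; simp [E0_add_left, add_mul])
    (by intro r f g; simp [E0_smul_left, mul_assoc])
    (by intro f g g'; simp [E0_add_right, add_mul])
    (by intro r f g; simp [E0_smul_right, mul_assoc])

lemma bil_apply (n e : ℕ) (U : A2) (f g : A3) : bil n e U f g = ((E0 n f g * U).coeff (e - 1)).coeff (e - 1) := rfl

noncomputable def lowT (n e : ℕ) : A3 →ₗ[ℂ] (Fin (n + 1) × Fin e × Fin e → ℂ) :=
  LinearMap.pi fun x => co x.2.1 x.2.2 x.1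

noncomputable def polyT (n e : ℕ) : (Fin (n + 1) × Fin e × Fin e → ℂ) →ₗ[ℂ] A3 :=
  Fintype.linearCombination ℂ (fun x : Fin (n + 1) × Fin e × Fin e => (monomial (x.1 : ℕ) (monomial (x.2.2 : ℕ) (monomial (x.2.1 : ℕ) (1 : ℂ))) : A3))

lemma coeff_polyT (n e : ℕ) (w : Fin (n + 1) × Fin e × Fin e → ℂ) (j : Fin (n + 1)) (i k : Fin e) :
    (((polyT n e w).coeff j).coeff k).coeff i = w (j, i, k) := by
  rw [polyT, Fintype.linearCombination_apply]
  simp only [finsetSum_coeff, coeff_smul, coeff_monomial]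
  rw [Finset.sum_eq_single (j, i, k)]
  · simp
  · rintro ⟨j', i', k'⟩ _ hne
    have : ¬ ((j' : ℕ) = j ∧ (k' : ℕ) = k ∧ (i' : ℕ) = i) := by
      rintro ⟨h1, h2, h3⟩
      apply hne
      rw [Fin.ext h1, Fin.ext h2, Fin.ext h3]
    by_cases h1 : (j' : ℕ) = j
    · by_cases h2 : (k' : ℕ) = k
      · have h3 : ¬ (i' : ℕ) = i := fun h3 => this ⟨h1, h2, h3⟩
        simp [h1, h2, coeff_monomial, h3]
      · simp [h1, coeff_monomial, h2]
    · simp [h1]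
  · simp

lemma E0_low {n e : ℕ} (f : A3) {g : A3} (hg : ∀ j ≤ n, LowP e (g.coeff j)) : E0 n f g ∈ LowI e := by
  apply Ideal.sum_mem
  intro j hj
  apply Ideal.mul_mem_left
  apply Ideal.mul_mem_left
  exact hg _ (by omega)

lemma bil_polyT (n e : ℕ) (he : 0 < e) (U : A2) (f g : A3) : bil n e U f (polyT n e (lowT n e g)) = bil n e U f g := by
  have h : E0 n f (polyT n e (lowT n e g) - g) ∈ LowI e := by
    apply E0_low
    intro j hj k hk i hi
    have := coeff_polyT n e (lowT n e g) ⟨j, by omega⟩ ⟨i, hi⟩ ⟨k, hk⟩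
    simp only at this
    rw [coeff_sub, coeff_sub, coeff_sub, this]
    simp [lowT, co_apply]
  have h2 : LowP e (E0 n f (polyT n e (lowT n e g) - g) * U) := Ideal.mul_mem_right _ _ h
  have h3 := h2 (e - 1) (by omega) (e - 1) (by omega)
  rw [← bil_apply, map_sub, sub_eq_zero] at h3
  exact h3

lemma bil_nondeg (n e : ℕ) (he : 0 < e) {Pz U : A2} (hU : Pz * U - 1 ∈ LowI e) (f : A3)
    (h : ∀ w, bil n e U f (polyT n e w) = 0) : ∀ j ≤ n, LowP e (f.coeff j) := by
  intro j hj
  have hfU : f.coeff j * U ∈ LowI e := by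
    intro k hk i hi
    let x0 : Fin (n + 1) × Fin e × Fin e := (⟨n - j, by omega⟩, ⟨e - 1 - i, by omega⟩, ⟨e - 1 - k, by omega⟩)
    have h1 := h (Pi.single x0 1)
    have h2 : polyT n e (Pi.single x0 1) = monomial (n - j) (monomial (e - 1 - k) (monomial (e - 1 - i) (1 : ℂ))) := by
      rw [polyT, Fintype.linearCombination_apply_single]
      simp [x0]
    rw [h2, bil_apply, E0, Finset.sum_eq_single j] at h1
    · rw [coeff_monomial, if_pos rfl] at h1
      have h3 : ((-1) ^ j * ((j.factorial : A2) * ((n - j).factorial : A2))) = C (C ((-1) ^ j * ((j.factorial : ℂ) * ((n - j).factorial : ℂ)))) := by simp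
      rw [h3] at h1
      have h4 : (C (C ((-1) ^ j * ((j.factorial : ℂ) * ((n - j).factorial : ℂ)))) *
        (f.coeff j * (monomial (e - 1 - k)) ((monomial (e - 1 - i)) 1)) * U : A2) =
        C (C ((-1) ^ j * ((j.factorial : ℂ) * ((n - j).factorial : ℂ)))) * (C (X ^ (e - 1 - i)) * (f.coeff j * U * X ^ (e - 1 - k))) := by
        rw [← C_mul_X_pow_eq_monomial, ← X_pow_eq_monomial]; ring
      rw [h4, coeff_C_mul, coeff_C_mul, coeff_C_mul] at h1
      have h5 : e - 1 = k + (e - 1 - k) := by omega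
      have h6 : e - 1 = i + (e - 1 - i) := by omega
      have h7 := (mul_eq_zero.1 h1).resolve_left (by
        apply mul_ne_zero
        · exact pow_ne_zero _ (by norm_num)
        · apply mul_ne_zero <;> exact_mod_cast Nat.factorial_ne_zero _)
      have h8 : (f.coeff j * U * X ^ (e - 1 - k)).coeff (e - 1) = (f.coeff j * U).coeff k := by
        have h10 : ∀ (q : A2) (s : ℕ), s = k + (e - 1 - k) → (q * X ^ (e - 1 - k)).coeff s = q.coeff k := by
          rintro q _ rfl; rw [coeff_mul_X_pow]
        exact h10 _ _ h5
      rw [h8] at h7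
      have h9 : (X ^ (e - 1 - i) * (f.coeff j * U).coeff k).coeff (e - 1) = ((f.coeff j * U).coeff k).coeff i := by
        have h10 : ∀ (q : A1) (s : ℕ), s = i + (e - 1 - i) → (X ^ (e - 1 - i) * q).coeff s = q.coeff i := by
          rintro q _ rfl; rw [coeff_X_pow_mul]
        exact h10 _ _ h6
      rw [h9] at h7
      exact h7
    · intro j' hj' hne
      have := Finset.mem_range.1 hj'
      rw [coeff_monomial, if_neg (by omega)]
      simp
    · intro hh
      exact absurd (Finset.mem_range.2 (by omega)) hh
  have : f.coeff j = f.coeff j * U * Pz - f.coeff j * (Pz * U - 1) := by ring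
  rw [← mem_LowI, this]
  exact Ideal.sub_mem _ (Ideal.mul_mem_right _ _ hfU) (Ideal.mul_mem_left _ _ hU)

lemma lowP_of_lowT {n e : ℕ} {f : A3} (h : lowT n e f = 0) : ∀ j ≤ n, LowP e (f.coeff j) := by
  intro j hj k hk i hi
  exact congrFun h (⟨j, by omega⟩, ⟨i, hi⟩, ⟨k, hk⟩)

lemma isotropic_finrank (n e : ℕ) (he : 0 < e) {Pz U : A2} (hU : Pz * U - 1 ∈ LowI e) (V : Submodule ℂ A3)
    (hinj : ∀ f ∈ V, (∀ j ≤ n, LowP e (f.coeff j)) → f = 0) (hiso : ∀ f ∈ V, ∀ g ∈ V, bil n e U f g = 0) :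
    FiniteDimensional ℂ V ∧ 2 * Module.finrank ℂ V ≤ (n + 1) * (e * e) := by
  let T : V →ₗ[ℂ] (Fin (n + 1) × Fin e × Fin e → ℂ) := (lowT n e).comp V.subtype
  have hT : Function.Injective T := by
    rw [injective_iff_map_eq_zero]
    intro f hf
    exact Subtype.ext (hinj f f.2 (lowP_of_lowT hf))
  have hfd : FiniteDimensional ℂ V := FiniteDimensional.of_injective T hT
  refine ⟨hfd, ?_⟩
  let Ψ : V →ₗ[ℂ] Module.Dual ℂ (Fin (n + 1) × Fin e × Fin e → ℂ) :=
    (LinearMap.lcomp ℂ ℂ (polyT n e)).comp ((bil n e U).comp V.subtype)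
  have hΨ : ∀ f w, Ψ f w = bil n e U f (polyT n e w) := fun f w => rfl
  have hmem : ∀ f, Ψ f ∈ (LinearMap.range T).dualAnnihilator := by
    intro f
    rw [Submodule.mem_dualAnnihilator]
    rintro _ ⟨g, rfl⟩
    rw [hΨ]
    show bil n e U f (polyT n e (lowT n e g)) = 0
    rw [bil_polyT n e he]
    exact hiso f f.2 g g.2
  have hinjΨ : Function.Injective (Ψ.codRestrict _ hmem) := by
    rw [LinearMap.injective_codRestrict_iff, injective_iff_map_eq_zero]
    intro f hf
    refine Subtype.ext (hinj f f.2 (bil_nondeg n e he hU f fun w => ?_))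
    rw [← hΨ, hf]; rfl
  have h1 := LinearMap.finrank_le_finrank_of_injective hinjΨ
  have h2 := Subspace.finrank_add_finrank_dualAnnihilator_eq (LinearMap.range T)
  rw [LinearMap.finrank_range_of_inj hT] at h2
  have h3 : Module.finrank ℂ (Fin (n + 1) × Fin e × Fin e → ℂ) = (n + 1) * (e * e) := by simp
  omega

section
variable {ι : Type*} [Fintype ι] (m c : ι → ℂ) (M : ℕ) (a : ι → ℕ)

/-- the space `V_d` -/
noncomputable def VS (n d : ℕ) : Submodule ℂ A3 :=
  S0 n d ⊓ ⨅ i, Wl (m i) (c i) M (a i) (n * a i)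

lemma mem_VS {n d : ℕ} {f : A3} : f ∈ VS m c M a n d ↔
    (f.natDegree ≤ n ∧ Dg f ≤ d) ∧ ∀ i, Wge (m i) (c i) M (a i) f (n * a i) := by
  rw [VS, Submodule.mem_inf, Submodule.mem_iInf]
  rfl

theorem VS_finrank (hm : Function.Injective m) (hc : ∀ i, c i ≠ 0) (hM : 0 < M) (ha : ∀ i, a i ≤ M)
    (hpt : ∀ x y : ℂ, ∀ s : Finset ι, (∀ i ∈ s, y = m i * x + c i) → ∑ i ∈ s, a i ≤ 2 * M)
    (hA1 : 3 * M ≤ ∑ i, a i) (hA2 : ∑ i, a i ≤ 5 * M)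
    {n r k e : ℕ} (hn : n = 2 * M * r) (hk : k + 2 + r * M = r * ∑ i, a i) (he : k + 2 * n < e) :
    FiniteDimensional ℂ (VS m c M a n (e + k)) ∧
    2 * Module.finrank ℂ (VS m c M a n (e + k)) ≤ (n + 1) * (e * e) := by
  obtain ⟨U, hU⟩ := exists_U m c e hc (fun i => 2 * r * a i)
  have hsum : ∑ i, 2 * r * a i = 2 * (r * ∑ i, a i) := by rw [Finset.mul_sum, Finset.mul_sum]; simp [mul_assoc]
  refine isotropic_finrank n e (by omega) hU _ ?_ ?_
  · intro f hf hl
    obtain ⟨⟨h1, h2⟩, h3⟩ := (mem_VS m c M a).1 hf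
    refine low_inj m c M a hM hc ?_ he h1 h2 h3 hl
    intro g g1 g2 g3
    by_contra hne
    have h := semistable m c M a hm hM ha hpt hA1 hA2 g hne _ g3
    rw [← Finset.mul_sum] at h
    have h4 : 2 * M * Dg g ≤ 2 * M * k := Nat.mul_le_mul_left _ g2
    have h5 : (M + ∑ i, a i) * g.natDegree ≤ (M + ∑ i, a i) * n := Nat.mul_le_mul_left _ g1
    have h6 : 2 * (n * ∑ i, a i) ≤ 2 * M * k + (M + ∑ i, a i) * n := by omega
    rw [hn] at h6
    have h7 : 2 * M * (k + 2 + r * M) = 2 * M * (r * ∑ i, a i) := by rw [hk]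
    nlinarith
  · intro f hf g hg
    obtain ⟨⟨h1, h2⟩, h3⟩ := (mem_VS m c M a).1 hf
    obtain ⟨⟨g1, g2⟩, g3⟩ := (mem_VS m c M a).1 hg
    refine E0_isotropic m c M a hn hM hm ?_ (by omega) h1 g1 h2 g2 h3 g3 hU
    rw [hsum, ← hk]
    have : 2 * (r * M) = n := by rw [hn]; ring
    omega
end
end Part10
end BGProof

namespace BGProof
section Part11
open Polynomial
set_option maxSynthPendingDepth 3

lemma cut {W : Type*} [AddCommGroup W] [Module ℂ W] (S : Submodule ℂ A3) [FiniteDimensional ℂ S]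
    (L : A3 →ₗ[ℂ] W) (U : Submodule ℂ W) [FiniteDimensional ℂ U] (h : ∀ f ∈ S, L f ∈ U) :
    Module.finrank ℂ S ≤ Module.finrank ℂ ↥(S ⊓ LinearMap.ker L) + Module.finrank ℂ U := by
  have h1 := LinearMap.finrank_range_add_finrank_ker (L.domRestrict S)
  have h2 : Module.finrank ℂ (LinearMap.range (L.domRestrict S)) ≤ Module.finrank ℂ U := by
    apply Submodule.finrank_mono
    rintro _ ⟨f, rfl⟩
    exact h f f.2
  have h3 : (LinearMap.ker (L.domRestrict S)).map S.subtype = S ⊓ LinearMap.ker L := by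
    ext f
    simp only [Submodule.mem_map, LinearMap.mem_ker, Submodule.mem_inf]
    constructor
    · rintro ⟨g, hg, rfl⟩
      exact ⟨g.2, hg⟩
    · rintro ⟨h1, h2⟩
      exact ⟨⟨f, h1⟩, h2, rfl⟩
  have h4 := LinearEquiv.finrank_eq (Submodule.equivMapOfInjective S.subtype S.injective_subtype (LinearMap.ker (L.domRestrict S)))
  rw [h3] at h4
  omega

lemma triang {I V : Type*} [AddCommGroup V] [Module ℂ V] (s : Finset I) (g : I → V) (φ : I → V →ₗ[ℂ] ℂ) (ρ : I → ℕ)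
    (h1 : ∀ i ∈ s, φ i (g i) ≠ 0) (h2 : ∀ i ∈ s, ∀ j ∈ s, j ≠ i → ρ i ≤ ρ j → φ i (g j) = 0) :
    LinearIndependent ℂ (fun i : s => g i) := by
  classical
  rw [Fintype.linearIndependent_iff]
  intro w hw
  have key : ∀ N, ∀ i : s, ρ i = N → w i = 0 := by
    intro N
    induction N using Nat.strong_induction_on with
    | _ N ih =>
      intro i hi
      have := congrArg (φ i) hw
      rw [map_sum, map_zero, Finset.sum_eq_single i] at this
      · rw [map_smul, smul_eq_mul] at this
        exact (mul_eq_zero.1 this).resolve_right (h1 i i.2)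
      · intro j _ hj
        rw [map_smul]
        rcases Nat.lt_or_ge (ρ j) N with h | h
        · rw [ih _ h j rfl, zero_smul]
        · rw [h2 i i.2 j j.2 (fun h => hj (Subtype.ext h)) (by omega), smul_zero]
      · simp
  exact fun i => key _ i rfl

/-- index set for the initial space -/
def idx (n d : ℕ) : Finset (ℕ × ℕ × ℕ) :=
  (Finset.range (n + 1)).sigma (fun c => (Finset.range (d + 1)).sigma (fun α => Finset.range (d + n + 1 - c - α)))
    |>.map ⟨fun x => (x.1, x.2.1, x.2.2), by rintro ⟨a, b, c⟩ ⟨a', b', c'⟩ h; simp at h; obtain ⟨rfl, rfl, rfl⟩ := h; rfl⟩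

lemma mem_idx {n d c α β : ℕ} : (c, α, β) ∈ idx n d ↔ c ≤ n ∧ α ≤ d ∧ α + β + c ≤ d + n := by
  simp only [idx, Finset.mem_map, Finset.mem_sigma, Finset.mem_range]
  constructor
  · rintro ⟨⟨c', α', β'⟩, h, heq⟩
    change (c', α', β') = (c, α, β) at heq
    obtain ⟨rfl, rfl, rfl⟩ : c' = c ∧ α' = α ∧ β' = β := by simpa using heq
    simp only at h ⊢
    omega
  · intro h
    refine ⟨⟨c, α, β⟩, ?_, rfl⟩
    simp only
    omega

lemma card_idx (n d : ℕ) : 2 * (idx n d).card = (n + 1) * (d + 1) * (d + n + 2) := by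
  have h1 : (idx n d).card = ∑ c ∈ Finset.range (n + 1), ∑ α ∈ Finset.range (d + 1), (d + n + 1 - c - α) := by
    simp [idx, Finset.card_sigma]
  have h2 : ((idx n d).card : ℤ) = ∑ c ∈ Finset.range (n + 1), ∑ α ∈ Finset.range (d + 1), ((d : ℤ) + n + 1 - c - α) := by
    rw [h1]
    push_cast
    refine Finset.sum_congr rfl fun c hc => Finset.sum_congr rfl fun α hα => ?_
    have := Finset.mem_range.1 hc
    have := Finset.mem_range.1 hα
    omega
  have g : ∀ N : ℕ, 2 * ∑ i ∈ Finset.range (N + 1), (i : ℤ) = N * (N + 1) := by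
    intro N
    induction N with
    | zero => simp
    | succ N ih => rw [Finset.sum_range_succ, mul_add, ih]; push_cast; ring
  have h3 : ∀ c : ℕ, 2 * ∑ α ∈ Finset.range (d + 1), ((d : ℤ) + n + 1 - c - α) = (d + 1) * (d + 2 * n + 2) - 2 * (d + 1) * c := by
    intro c
    rw [Finset.sum_sub_distrib, mul_sub, g]
    simp
    ring
  zify
  rw [h2, Finset.mul_sum, Finset.sum_congr rfl (fun c _ => h3 c), Finset.sum_sub_distrib]
  have := g n
  have h5 : ∑ x ∈ Finset.range (n + 1), 2 * ((d : ℤ) + 1) * (x : ℤ) = 2 * ((d : ℤ) + 1) * ∑ x ∈ Finset.range (n + 1), (x : ℤ) := by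
    rw [Finset.mul_sum]
  rw [h5]
  simp only [Finset.sum_const, Finset.card_range, nsmul_eq_mul]
  push_cast
  linear_combination -(d + 1 : ℤ) * this

noncomputable def gfam (d : ℕ) (x : ℕ × ℕ × ℕ) : A3 :=
  (C (C X) ^ x.2.1 * C X ^ (x.2.2 - (x.2.1 + x.2.2 - d)) * (C X - X * C (C X)) ^ (x.2.1 + x.2.2 - d)) * X ^ x.1

lemma gfam_mem {n d : ℕ} {x : ℕ × ℕ × ℕ} (hx : x ∈ idx n d) : gfam d x ∈ S0 n d := by
  obtain ⟨c, α, β⟩ := x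
  obtain ⟨h1, h2, h3⟩ := mem_idx.1 hx
  constructor
  · simp only [gfam]
    refine natDegree_mul_le.trans ?_
    rw [natDegree_X_pow]
    have e1 : (C X - X * C (C X) : A3).natDegree ≤ 1 := by
      refine (natDegree_sub_le _ _).trans (max_le (by simp) ?_)
      exact natDegree_mul_le.trans (by simp)
    have e2 : ((C X - X * C (C X) : A3) ^ (α + β - d)).natDegree ≤ α + β - d := by
      refine natDegree_pow_le.trans ?_
      calc _ ≤ (α + β - d) * 1 := Nat.mul_le_mul_left _ e1
        _ = _ := mul_one _
    have e3 : (C (C X) ^ α * C X ^ (β - (α + β - d)) : A3).natDegree = 0 := by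
      have : (C (C X) ^ α * C X ^ (β - (α + β - d)) : A3) = C (C X ^ α * X ^ (β - (α + β - d))) := by
        rw [C_mul, C_pow, C_pow]
      rw [this, natDegree_C]
    have := natDegree_mul_le (p := (C (C X) ^ α * C X ^ (β - (α + β - d)) : A3)) (q := (C X - X * C (C X) : A3) ^ (α + β - d))
    omega
  · simp only [gfam, Dg]
    rw [map_mul, map_mul, map_mul, map_pow, map_pow, map_pow, map_pow, gam_x, gam_y, hsub33, map_mul, gam_x, gam_y, gam_t]
    have e0 : (C X + C (C X) * X - C (C X) * X : A3) = C X := by ring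
    rw [e0, ← C_pow, ← C_pow]
    have e1 : (C X + C (C X) * X : A3).natDegree ≤ 1 := by rw [add_comm]; exact natDegree_linear_le
    have e2 : ((C X + C (C X) * X : A3) ^ (β - (α + β - d))).natDegree ≤ β - (α + β - d) := by
      refine natDegree_pow_le.trans ?_
      calc _ ≤ (β - (α + β - d)) * 1 := Nat.mul_le_mul_left _ e1
        _ = _ := mul_one _
    refine (natDegree_mul_C_le _ _).trans ((natDegree_mul_C_le _ _).trans (natDegree_mul_le.trans ?_))
    rw [natDegree_X_pow]
    omega

lemma gfam_coeff (d c α β : ℕ) (i k j : ℕ) (hj : j ≤ c) (hα : α ≤ d) : co i k j (gfam d (c, α, β)) =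
    if j = c ∧ k = β ∧ i = α then 1 else 0 := by
  rw [co_apply, gfam]
  simp only
  rw [coeff_mul_X_pow']
  by_cases h : c ≤ j
  · obtain rfl : j = c := le_antisymm hj h
    rw [if_pos le_rfl, Nat.sub_self, coeff_zero_eq_eval_zero]
    have h1 : (C (C X) ^ α * C X ^ (β - (α + β - d)) * (C X - X * C (C X)) ^ (α + β - d) : A3).eval 0 =
        monomial β (monomial α 1) := by
      simp
      rw [mul_assoc, ← pow_add, Nat.sub_add_cancel (by omega), ← C_mul_X_pow_eq_monomial, ← X_pow_eq_monomial]
      simp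
    rw [h1, coeff_monomial]
    by_cases hk : β = k
    · rw [if_pos hk, coeff_monomial]
      by_cases hi : α = i
      · simp [hk, hi]
      · simp [hi, Ne.symm hi]
    · simp [hk, Ne.symm hk]
  · rw [if_neg h, if_neg (by omega)]; simp

/-- the initial space -/
noncomputable def Sp (n d : ℕ) : Submodule ℂ A3 := Submodule.span ℂ (Set.range (fun i : idx n d => gfam d i))

lemma Sp_le (n d : ℕ) : Sp n d ≤ S0 n d := by
  rw [Sp, Submodule.span_le]
  rintro _ ⟨i, rfl⟩
  exact gfam_mem i.2

instance (n d : ℕ) : FiniteDimensional ℂ (Sp n d) := FiniteDimensional.span_of_finite ℂ (Set.finite_range _)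

lemma Sp_finrank (n d : ℕ) : 2 * Module.finrank ℂ (Sp n d) = (n + 1) * (d + 1) * (d + n + 2) := by
  have h : LinearIndependent ℂ (fun i : idx n d => gfam d i) := by
    refine triang (idx n d) (gfam d) (fun x => co x.2.1 x.2.2 x.1) (fun x => x.1) ?_ ?_
    · rintro ⟨c, α, β⟩ hi
      have := mem_idx.1 hi
      simp only
      rw [gfam_coeff _ _ _ _ _ _ _ le_rfl this.2.1]
      simp
    · rintro ⟨c, α, β⟩ hi ⟨c', α', β'⟩ hj hne hle
      simp only at hle ⊢
      rw [gfam_coeff _ _ _ _ _ _ _ hle (mem_idx.1 hj).2.1, if_neg]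
      rintro ⟨rfl, rfl, rfl⟩
      exact hne rfl
  rw [Sp, finrank_span_eq_card h, Fintype.card_coe, card_idx]

end Part11
end BGProof

namespace BGProof
section Part12
open Polynomial
set_option maxSynthPendingDepth 3

/-- translation `x ↦ x + x0`, `y ↦ y + y0`. -/
noncomputable def shP (x0 y0 : ℂ) : A2 →+* A2 :=
  eval₂RingHom ((C : A1 →+* A2).comp (eval₂RingHom (C : ℂ →+* A1) (X + C x0))) (X + C (C y0))

lemma shP_c (x0 y0 r : ℂ) : shP x0 y0 (C (C r)) = C (C r) := by simp [shP]
lemma shP_x (x0 y0 : ℂ) : shP x0 y0 (C X) = C (X + C x0) := by simp [shP]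
lemma shP_y (x0 y0 : ℂ) : shP x0 y0 X = X + C (C y0) := by simp [shP]

lemma A2_hom_ext {R : Type*} [CommRing R] {f g : A2 →+* R} (h0 : ∀ r, f (C (C r)) = g (C (C r))) (h1 : f (C X) = g (C X))
    (h2 : f X = g X) : f = g := by
  apply Polynomial.ringHom_ext
  · intro a
    have : f.comp C = g.comp (C : A1 →+* A2) := by
      apply Polynomial.ringHom_ext
      · intro r; exact h0 r
      · exact h1
    exact congrArg (fun h : A1 →+* R => h a) this
  · exact h2

def PVan (x0 y0 : ℂ) (r : ℕ) (p : A2) : Prop := ∀ i k, i + k < r → ((shP x0 y0 p).coeff k).coeff i = 0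

noncomputable def shPl (x0 y0 : ℂ) : A2 →ₗ[ℂ] A2 where
  toFun f := shP x0 y0 f
  map_add' f g := map_add _ _ _
  map_smul' r f := by
    have h : ∀ g : A2, r • g = C (C r) * g := by
      intro g; ext j k; simp
    rw [h, map_mul, RingHom.id_apply, h, shP_c]

lemma shP_smul (x0 y0 r : ℂ) (p : A2) : shP x0 y0 (r • p) = r • shP x0 y0 p := (shPl x0 y0).map_smul r p

noncomputable def Pt (x0 y0 : ℂ) (n r : ℕ) : Submodule ℂ A3 where
  carrier := {f | ∀ j ≤ n, PVan x0 y0 r (f.coeff j)}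
  zero_mem' := by intro j _ i k _; simp
  add_mem' := fun {f g} hf hg j hj i k h => by
    rw [coeff_add, map_add, coeff_add, coeff_add, hf j hj i k h, hg j hj i k h, add_zero]
  smul_mem' := fun s f hf j hj i k h => by
    rw [coeff_smul, shP_smul, coeff_smul, coeff_smul, hf j hj i k h, smul_zero]

noncomputable def pco (x0 y0 : ℂ) (i k j : ℕ) : A3 →ₗ[ℂ] ℂ where
  toFun f := ((shP x0 y0 (f.coeff j)).coeff k).coeff i
  map_add' f g := by simp
  map_smul' r f := by simp [shP_smul]

lemma cut_point (S : Submodule ℂ A3) [FiniteDimensional ℂ S] (x0 y0 : ℂ) (n r : ℕ) :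
    2 * Module.finrank ℂ S ≤ 2 * Module.finrank ℂ ↥(S ⊓ Pt x0 y0 n r) + (n + 1) * (r * (r + 1)) := by
  let J := (Finset.range (n + 1)) ×ˢ ((Finset.range r).sigma (fun i => Finset.range (r - i)))
  let L : A3 →ₗ[ℂ] (J → ℂ) := LinearMap.pi fun x => pco x0 y0 x.1.2.1 x.1.2.2 x.1.1
  have h1 := cut S L ⊤ (fun f _ => trivial)
  have h2 : S ⊓ LinearMap.ker L = S ⊓ Pt x0 y0 n r := by
    congr 1
    ext f
    rw [LinearMap.mem_ker]
    constructor
    · intro h j hj i k hik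
      exact congrFun h ⟨(j, ⟨i, k⟩), by simp [J]; omega⟩
    · intro h
      funext ⟨⟨j, ⟨i, k⟩⟩, hx⟩
      simp [J] at hx
      exact h j (by omega) i k (by omega)
  have h3 : 2 * J.card = (n + 1) * (r * (r + 1)) := by
    rw [Finset.card_product, Finset.card_range, Finset.card_sigma]
    simp only [Finset.card_range]
    rw [← Finset.sum_range_reflect]
    have : ∑ j ∈ Finset.range r, (r - (r - 1 - j)) = ∑ j ∈ Finset.range r, (j + 1) := by
      refine Finset.sum_congr rfl fun j hj => ?_
      have := Finset.mem_range.1 hj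
      omega
    rw [this]
    have g : ∀ N : ℕ, 2 * ∑ j ∈ Finset.range N, (j + 1) = N * (N + 1) := by
      intro N
      induction N with
      | zero => simp
      | succ N ih => rw [Finset.sum_range_succ, mul_add, ih]; ring
    rw [← g r]; ring
  have h4 : Module.finrank ℂ (⊤ : Submodule ℂ (J → ℂ)) = J.card := by
    rw [finrank_top, Module.finrank_fintype_fun_eq_card, Fintype.card_coe]
  rw [h2, h4] at h1
  omega

/-- order of vanishing along a line at a point -/
def DV (x0 : ℂ) (r : ℕ) (q : A2) : Prop := ∀ i, (X - C x0) ^ (r - i) ∣ q.coeff i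

lemma DV.add {x0 : ℂ} {r : ℕ} {p q : A2} (hp : DV x0 r p) (hq : DV x0 r q) : DV x0 r (p + q) :=
  fun i => by rw [coeff_add]; exact dvd_add (hp i) (hq i)
lemma DV.zero (x0 : ℂ) (r : ℕ) : DV x0 r 0 := fun i => by simp
lemma DV.sum {x0 : ℂ} {r : ℕ} {ι : Type*} (s : Finset ι) (f : ι → A2) (h : ∀ i ∈ s, DV x0 r (f i)) : DV x0 r (∑ i ∈ s, f i) := by
  intro i
  rw [finsetSum_coeff]
  exact Finset.dvd_sum fun j hj => h j hj i
lemma DV.mul {x0 : ℂ} {r1 r2 : ℕ} {p q : A2} (hp : DV x0 r1 p) (hq : DV x0 r2 q) : DV x0 (r1 + r2) (p * q) := by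
  intro i
  rw [coeff_mul]
  refine Finset.dvd_sum fun ⟨a, b⟩ hab => ?_
  have := Finset.HasAntidiagonal.mem_antidiagonal.1 hab
  simp only at this ⊢
  refine dvd_trans (pow_dvd_pow _ ?_) ((pow_add (X - C x0) (r1 - a) (r2 - b)) ▸ mul_dvd_mul (hp a) (hq b))
  omega
lemma DV.any (x0 : ℂ) (q : A2) : DV x0 0 q := fun i => by simp
lemma DV.mono {x0 : ℂ} {r s : ℕ} {q : A2} (h : DV x0 s q) (hr : r ≤ s) : DV x0 r q :=
  fun i => dvd_trans (pow_dvd_pow _ (by omega)) (h i)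
lemma DV.pow {x0 : ℂ} {q : A2} (h : DV x0 1 q) (k : ℕ) : DV x0 k (q ^ k) := by
  induction k with
  | zero => exact DV.any _ _
  | succ k ih => rw [pow_succ]; exact ih.mul h

lemma DV_of_PVan {x0 y0 m c : ℂ} (hy : y0 = m * x0 + c) {r : ℕ} {p : A2} (hp : PVan x0 y0 r p) : DV x0 r (shY m c p) := by
  let σ : A2 →+* A2 := eval₂RingHom ((C : A1 →+* A2).comp (eval₂RingHom (C : ℂ →+* A1) (X - C x0)))
    (X + C (C m * (X - C x0)))
  have h1 : σ.comp (shP x0 y0) = shY m c := by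
    apply A2_hom_ext
    · intro r
      rw [RingHom.comp_apply, shP_c]
      simp [σ, shY_apply]
    · rw [RingHom.comp_apply, shP_x]
      simp [σ, shY_apply]
    · rw [RingHom.comp_apply, shP_y]
      simp [σ, shY_apply, lin, hy]
      ring
  rw [← h1, RingHom.comp_apply]
  set q := shP x0 y0 p with hq
  have s0 : ∀ r, σ (C (C r)) = C (C r) := fun r => by simp [σ]
  have s1 : σ (C X) = C (X - C x0) := by simp [σ]
  have s2 : σ X = X + C (C m * (X - C x0)) := by simp [σ]
  have h2 : σ q = ∑ k ∈ Finset.range (q.natDegree + 1), ∑ i ∈ Finset.range ((q.coeff k).natDegree + 1),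
      C (C ((q.coeff k).coeff i)) * (C (X - C x0)) ^ i * (X + C (C m * (X - C x0))) ^ k := by
    conv_lhs => rw [q.as_sum_range_C_mul_X_pow]
    rw [map_sum]
    refine Finset.sum_congr rfl fun k _ => ?_
    conv_lhs => rw [(q.coeff k).as_sum_range_C_mul_X_pow]
    rw [map_sum, Finset.sum_mul, map_sum]
    refine Finset.sum_congr rfl fun i _ => ?_
    rw [C_mul, C_pow, map_mul, map_mul, map_pow, map_pow, s0, s1, s2]
  rw [h2]
  refine DV.sum _ _ fun k _ => DV.sum _ _ fun i _ => ?_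
  rcases Nat.lt_or_ge (i + k) r with h | h
  · rw [hp i k h]; simp [DV.zero]
  · have e1 : DV x0 1 (C (X - C x0)) := by
      intro i
      rcases i with _ | i
      · simp
      · simp
    have e2 : DV x0 1 (X + C (C m * (X - C x0))) := by
      intro i
      rcases i with _ | i
      · simp
      · simp
    exact (((DV.any x0 _).mul (e1.pow i)).mul (e2.pow k)).mono (by omega)

lemma cf_point_dvd {x0 y0 m c : ℂ} (hy : y0 = m * x0 + c) {n r : ℕ} {f : A3} (hn : f.natDegree ≤ n) (hf : f ∈ Pt x0 y0 n r) (i j : ℕ) :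
    (X - C x0) ^ (r - i) ∣ cf m c i j f := by
  rw [cf, shL_coeff, shT_coeff f hn, map_sum]
  refine DV.sum _ _ (fun k hk => ?_) i
  rw [map_mul]
  have := (DV_of_PVan hy (hf k (by have := Finset.mem_range.1 hk; omega))).mul (DV.any x0 (shY m c (C (C (m ^ (k - j) * (k.choose j : ℂ))))))
  exact this

end Part12
end BGProof

namespace BGProof
section Part13
open Polynomial
set_option maxSynthPendingDepth 3

/-- `x ↦ x`, `z ↦ (v + x) T`, `τ ↦ T` -/
noncomputable def psi : A3 →+* A3 :=
  eval₂RingHom (S := A3) (eval₂RingHom (S := A3) (eval₂RingHom (S := A3)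
    (((C : A2 →+* A3).comp (C : A1 →+* A2)).comp (C : ℂ →+* A1)) (C X)) ((C (C X) + C X) * X)) X

lemma psi_c (r : ℂ) : psi (C (C (C r))) = C (C (C r)) := by simp [psi]
lemma psi_x : psi (C (C X)) = C X := by simp [psi]
lemma psi_y : psi (C X) = (C (C X) + C X) * X := by simp [psi]
lemma psi_t : psi X = X := by simp [psi]
lemma psi_p (p : A1) : psi (C (C p)) = C (p.map C) := by
  induction p using Polynomial.induction_on' with
  | add p q hp hq => simp only [map_add, hp, hq, Polynomial.map_add]
  | monomial i r =>
    rw [← C_mul_X_pow_eq_monomial, C_mul, C_mul, C_pow, C_pow, map_mul, map_pow, psi_c, psi_x, Polynomial.map_mul,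
      Polynomial.map_pow, map_C, map_X, C_mul, C_pow]

lemma psi_coeff (g : A3) (N : ℕ) : (psi g).coeff N =
    ∑ x ∈ Finset.HasAntidiagonal.antidiagonal N, ((g.coeff x.2).coeff x.1).map C * (X + C X) ^ x.1 := by
  induction g using Polynomial.induction_on' with
  | add p q hp hq => simp only [map_add, coeff_add, hp, hq, Polynomial.map_add, add_mul, Finset.sum_add_distrib]
  | monomial j p =>
    induction p using Polynomial.induction_on' with
    | add p q hp hq => simp only [map_add, coeff_add, hp, hq, Polynomial.map_add, add_mul, Finset.sum_add_distrib]
    | monomial i r =>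
      have e : psi (monomial j (monomial i r)) = C (r.map C * (X + C X) ^ i) * X ^ (i + j) := by
        rw [← C_mul_X_pow_eq_monomial, ← C_mul_X_pow_eq_monomial, C_mul, C_pow, map_mul, map_mul, map_pow, map_pow,
          psi_p, psi_y, psi_t, C_mul, C_pow, C_add, mul_pow]
        ring
      rw [e, coeff_C_mul_X_pow]
      split_ifs with h
      · rw [Finset.sum_eq_single (i, j)]
        · simp
        · rintro ⟨a, b⟩ _ hne
          rw [coeff_monomial]
          by_cases hb : j = b
          · rw [if_pos hb, coeff_monomial, if_neg, Polynomial.map_zero, zero_mul]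
            intro ha
            exact hne (by rw [ha, hb])
          · simp [hb]
        · intro hh
          exact absurd (Finset.HasAntidiagonal.mem_antidiagonal.2 h.symm) hh
      · symm
        refine Finset.sum_eq_zero ?_
        rintro ⟨a, b⟩ hab
        have hab := Finset.HasAntidiagonal.mem_antidiagonal.1 hab
        simp only at hab ⊢
        rw [coeff_monomial]
        by_cases hb : j = b
        · rw [if_pos hb, coeff_monomial, if_neg, Polynomial.map_zero, zero_mul]
          omega
        · simp [hb]

/-- bounded degree in the middle variable -/
def XB (D : ℕ) (g : A3) : Prop := ∀ N, (g.coeff N).natDegree ≤ D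

lemma XB.add {D : ℕ} {P Q : A3} (hP : XB D P) (hQ : XB D Q) : XB D (P + Q) := fun j => by
  rw [coeff_add]; exact natDegree_add_le_of_degree_le (hP j) (hQ j)
lemma XB.zero {D : ℕ} : XB D 0 := fun j => by simp
lemma XB.sum {ι : Type*} {s : Finset ι} {P : ι → A3} {r : ℕ} (h : ∀ i ∈ s, XB r (P i)) :
    XB r (∑ i ∈ s, P i) := by
  intro N
  rw [finsetSum_coeff]
  exact natDegree_sum_le_of_forall_le _ _ fun i hi => h i hi N
lemma XB.mul {D E : ℕ} {P Q : A3} (hP : XB D P) (hQ : XB E Q) : XB (D + E) (P * Q) := fun N => by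
  rw [coeff_mul]
  exact natDegree_sum_le_of_forall_le _ _ fun x _ => natDegree_mul_le.trans (add_le_add (hP _) (hQ _))
lemma XB.mono {D E : ℕ} {P : A3} (hP : XB D P) (h : D ≤ E) : XB E P := fun N => (hP N).trans h
lemma XB.pow {D : ℕ} {P : A3} (hP : XB D P) (k : ℕ) : XB (k * D) (P ^ k) := by
  induction k with
  | zero =>
    intro N
    rw [pow_zero, coeff_one]
    split_ifs <;> simp
  | succ k ih => rw [pow_succ, add_mul, one_mul]; exact ih.mul hP
lemma XB.c (p : A1) : XB 0 (C (C p)) := fun N => by rw [coeff_C]; split_ifs <;> simp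
lemma XB.x : XB 1 (C X) := fun N => by rw [coeff_C]; split_ifs <;> simp
lemma XB.t : XB 0 X := fun N => by rw [coeff_X]; split_ifs <;> simp

lemma shL_x (m c : ℂ) : shL m c (C (C X)) = C (C X) := by simp [shL, shT_x, shY_apply]
lemma shL_c (m c r : ℂ) : shL m c (C (C (C r))) = C (C (C r)) := by simp [shL, shT_x, shY_apply]
lemma shL_y (m c : ℂ) : shL m c (C X) = C X + C (C (C m)) * C (C X) + C (C (C c)) := by
  simp [shL, shT_x, shY_apply, lin]; ring
lemma shL_t (m c : ℂ) : shL m c X = X + C (C (C m)) := by simp [shL, shT_t, shY_apply]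

lemma XB_iot (m c : ℂ) (b : A2) : XB 0 (psi (shL m c (iot (C b)))) := by
  induction b using Polynomial.induction_on' with
  | add p q hp hq => simp only [map_add]; exact hp.add hq
  | monomial k p =>
    induction p using Polynomial.induction_on' with
    | add p q hp hq => simp only [map_add]; exact hp.add hq
    | monomial i r =>
      have e : psi (shL m c (iot (C (monomial k (monomial i r))))) =
          C (C (C r)) * (X + C (C (C m))) ^ i * (C (C X) * X + C (C (C c))) ^ k := by
        simp only [← C_mul_X_pow_eq_monomial, map_mul, map_pow, iot_c, iot_t, iot_u, shL_c, shL_t, psi_c, map_add, psi_t]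
        have hu : psi (shL m c (C X - X * C (C X))) = C (C X) * X + C (C (C c)) := by
          rw [hsub33, hsub33]
          simp only [map_mul, map_add, shL_y, shL_x, shL_t, psi_c, psi_x, psi_y, psi_t]
          ring
        rw [hu]
      rw [e]
      have h2 : XB 0 (X + C (C (C m))) := XB.t.add (XB.c _)
      have h3 : XB 0 (C (C X) * X + C (C (C c))) := ((XB.c X).mul XB.t).add (XB.c _)
      exact (((XB.c (C r)).mul (h2.pow i)).mul (h3.pow k)).mono (by simp)

lemma XB_psi (m c : ℂ) {f : A3} {d : ℕ} (h : Dg f ≤ d) : XB d (psi (shL m c f)) := by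
  rw [expand_D f h, map_sum, map_sum]
  refine XB.sum fun k hk => ?_
  rw [map_mul, map_mul, map_pow, map_pow, shL_x, psi_x]
  exact ((XB_iot m c _).mul (XB.x.pow k)).mono (by have := Finset.mem_range.1 hk; omega)

lemma cf_degree (m c : ℂ) {f : A3} {d : ℕ} (h : Dg f ≤ d) {i j : ℕ} (hi : i ≤ d)
    (h0 : ∀ i' < i, cf m c i' (i + j - i') f = 0) : (cf m c i j f).natDegree ≤ d - i + j := by
  set H : A2 := ∑ k ∈ Finset.range (j + 1), (cf m c (i + k) (j - k) f).map C * (X + C X) ^ k with hH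
  have h1 : (psi (shL m c f)).coeff (i + j) = (X + C X) ^ i * H := by
    rw [psi_coeff, Finset.Nat.sum_antidiagonal_eq_sum_range_succ (fun a b => (((shL m c f).coeff b).coeff a).map C * (X + C X : A2) ^ a),
      show (i + j).succ = i + (j + 1) by omega, Finset.sum_range_add, Finset.sum_eq_zero, zero_add, hH, Finset.mul_sum]
    · refine Finset.sum_congr rfl fun k _ => ?_
      rw [cf, pow_add, show i + j - (i + k) = j - k by omega]
      ring
    · intro i' hi'
      have := h0 i' (Finset.mem_range.1 hi')
      rw [cf] at this
      rw [this]; simp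
  have h2 : H.natDegree ≤ d - i := by
    have := XB_psi m c h (i + j)
    rw [h1] at this
    by_cases hz : H = 0
    · simp [hz]
    have hm : ((X + C X : A2) ^ i).Monic := (monic_X_add_C _).pow i
    rw [hm.natDegree_mul' hz, (monic_X_add_C _).natDegree_pow, natDegree_X_add_C] at this
    omega
  have h3 : ∀ k, (H.coeff k).natDegree ≤ j := by
    intro k
    rw [hH, finsetSum_coeff]
    refine natDegree_sum_le_of_forall_le _ _ fun k' hk' => ?_
    rw [coeff_mul]
    refine natDegree_sum_le_of_forall_le _ _ fun x _ => natDegree_mul_le.trans ?_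
    rw [coeff_map, natDegree_C, zero_add]
    have : ((X + C X : A2) ^ k').coeff x.2 = X ^ (k' - x.2) * ((k'.choose x.2 : ℕ) : A1) := by
      rw [coeff_X_add_C_pow]
    rw [this]
    refine natDegree_mul_le.trans ?_
    rw [natDegree_X_pow, natDegree_natCast]
    have := Finset.mem_range.1 hk'
    omega
  let ev : A2 →+* A1 := eval₂RingHom (compRingHom (-X)) X
  have h4 : ev H = cf m c i j f := by
    rw [hH, map_sum, Finset.sum_eq_single 0]
    · simp [ev]
      rw [eval₂_map]
      have : (compRingHom (-X) : A1 →+* A1).comp C = C := by ext; simp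
      rw [this, eval₂_C_X]
    · intro k _ hk
      rw [map_mul, map_pow]
      have : ev (X + C X) = 0 := by simp [ev]
      rw [this, zero_pow hk, mul_zero]
    · simp
  rw [← h4]
  change (eval₂ (compRingHom (-X)) X H).natDegree ≤ _
  rw [eval₂_eq_sum_range' _ (Nat.lt_succ_of_le h2)]
  refine natDegree_sum_le_of_forall_le _ _ fun k hk => natDegree_mul_le.trans ?_
  rw [natDegree_X_pow, coe_compRingHom, natDegree_comp]
  have := Finset.mem_range.1 hk
  have := h3 k
  rw [natDegree_neg, natDegree_X]
  omega

end Part13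
end BGProof

namespace BGProof
section Part14
open Polynomial
set_option maxSynthPendingDepth 3

/-- ceiling division -/
def cl (M K : ℕ) : ℕ := (K + M - 1) / M

lemma le_cl {M : ℕ} (hM : 0 < M) (K : ℕ) : K ≤ M * cl M K := by
  have h2 := Nat.div_add_mod (K + M - 1) M
  have h3 := Nat.mod_lt (K + M - 1) hM
  unfold cl
  omega
lemma cl_lt {M : ℕ} (hM : 0 < M) (K : ℕ) : M * cl M K < K + M := by
  have h2 := Nat.div_add_mod (K + M - 1) M
  unfold cl
  omega
lemma lt_cl {M : ℕ} (hM : 0 < M) {K k : ℕ} : k < cl M K ↔ M * k < K := by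
  have h1 := le_cl hM K
  have h2 := cl_lt hM K
  constructor
  · intro h
    have : M * (k + 1) ≤ M * cl M K := Nat.mul_le_mul_left _ h
    rw [Nat.mul_succ] at this
    omega
  · intro h
    exact lt_of_mul_lt_mul_left (h.trans_le h1) (Nat.zero_le M)
lemma cl_mono {M : ℕ} {K K' : ℕ} (h : K ≤ K') : cl M K ≤ cl M K' := Nat.div_le_div_right (by omega)

section BB
variable {R : Type*} [CommRing R]

lemma exists_B (κ κ' : R) (h : κ * κ' = 1) (n : ℕ) : ∀ g : R[X], g.natDegree ≤ n →
    ∃ B : ℕ → R, g = ∑ j ∈ Finset.range (n + 1), C (B j) * X ^ j * (X + C κ) ^ (n - j) := by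
  induction n with
  | zero =>
    intro g hg
    refine ⟨fun _ => g.coeff 0, ?_⟩
    simp
    exact eq_C_of_natDegree_le_zero hg
  | succ n ih =>
    intro g hg
    set b := g.coeff 0 * κ' ^ (n + 1) with hb
    have h1 : X ∣ g - C b * (X + C κ) ^ (n + 1) := by
      rw [X_dvd_iff, coeff_sub, coeff_zero_eq_eval_zero (C b * _)]
      simp [hb]
      rw [mul_assoc, ← mul_pow, mul_comm κ', h]; simp
    obtain ⟨q, hq⟩ := h1
    have hqd : q.natDegree ≤ n := by
      rw [natDegree_le_iff_coeff_eq_zero]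
      intro N hN
      rw [← coeff_X_mul, ← hq, coeff_sub, coeff_eq_zero_of_natDegree_lt (by omega), coeff_C_mul, coeff_eq_zero_of_natDegree_lt]
      · simp
      · refine lt_of_le_of_lt natDegree_pow_le ?_
        calc (n + 1) * (X + C κ).natDegree ≤ (n + 1) * 1 := Nat.mul_le_mul_left _ (natDegree_add_C.le.trans natDegree_X_le)
          _ < N + 1 := by omega
    obtain ⟨B, hB⟩ := ih q hqd
    refine ⟨fun j => if j = 0 then b else B (j - 1), ?_⟩
    rw [Finset.sum_range_succ']
    simp only [Nat.add_sub_cancel, if_true, Nat.sub_zero, pow_zero, mul_one, Nat.add_eq_zero_iff, one_ne_zero, and_false, if_false]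
    rw [← sub_eq_iff_eq_add, hq]
    conv_lhs => rw [hB]
    rw [Finset.mul_sum]
    refine Finset.sum_congr rfl fun j _ => ?_
    rw [Nat.add_sub_add_right]
    ring

lemma B_coeff (κ : R) (n : ℕ) (B : ℕ → R) (I : Ideal R) {j : ℕ} (hj : j ≤ n) (hB : ∀ j' < j, B j' ∈ I) :
    (∑ j ∈ Finset.range (n + 1), C (B j) * X ^ j * (X + C κ) ^ (n - j)).coeff j - κ ^ (n - j) * B j ∈ I := by
  rw [finsetSum_coeff, ← Finset.add_sum_erase _ _ (Finset.mem_range.2 (Nat.lt_succ_of_le hj))]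
  have e : (C (B j) * X ^ j * (X + C κ) ^ (n - j)).coeff j = κ ^ (n - j) * B j := by
    rw [mul_assoc, coeff_C_mul, coeff_X_pow_mul', if_pos le_rfl, Nat.sub_self, coeff_zero_eq_eval_zero]
    simp [mul_comm]
  rw [e, add_sub_cancel_left]
  refine Ideal.sum_mem _ fun j' hj' => ?_
  rcases lt_or_gt_of_ne (Finset.ne_of_mem_erase hj') with h | h
  · rw [mul_assoc, coeff_C_mul]
    exact I.mul_mem_right _ (hB j' h)
  · rw [mul_assoc, coeff_C_mul, coeff_X_pow_mul', if_neg (by omega), mul_zero]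
    exact I.zero_mem

lemma B_mem (κ κ' : R) (h : κ * κ' = 1) (n : ℕ) (B : ℕ → R) (I : ℕ → Ideal R) (hI : Monotone I) (J : ℕ)
    (hc : ∀ j ≤ J, (∑ j ∈ Finset.range (n + 1), C (B j) * X ^ j * (X + C κ) ^ (n - j)).coeff j ∈ I j) :
    ∀ j ≤ J, j ≤ n → B j ∈ I j := by
  intro j
  induction j using Nat.strong_induction_on with
  | _ j ih =>
    intro hj hn
    have h1 := B_coeff κ n B (I j) hn (fun j' h' => hI h'.le (ih j' h' (by omega) (by omega)))
    have h2 := (I j).sub_mem (hc j hj) h1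
    rw [sub_sub_cancel] at h2
    have h3 := (I j).mul_mem_left (κ' ^ (n - j)) h2
    rwa [← mul_assoc, ← mul_pow, mul_comm κ', h, one_pow, one_mul] at h3

end BB

lemma double_dvd {m c m' c' : ℂ} (hm : m ≠ m') {M b n : ℕ} (hM : 0 < M) {f : A3} (hn : f.natDegree ≤ n)
    (hW : Wge m' c' M b f (n * b)) {i j : ℕ} (hj : j ≤ n)
    (h0 : ∀ i' < i, ∀ j' ≤ j, cf m c i' j' f = 0) (h1 : ∀ j' < j, cf m c i j' f = 0) :
    (X - C ((c' - c) / (m - m'))) ^ (cl M (j * b)) ∣ cf m c i j f := by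
  set κ : A2 := C (C (m - m')) with hκ
  set κ' : A2 := C (C (m - m')⁻¹) with hκ'
  have hmm : m - m' ≠ 0 := sub_ne_zero.2 hm
  have hkk : κ * κ' = 1 := by rw [hκ, hκ', ← C_mul, ← C_mul, mul_inv_cancel₀ hmm]; simp
  have hgd : (shT m f).natDegree ≤ n := by rw [shT_natDegree]; exact hn
  obtain ⟨B, hB⟩ := exists_B κ κ' hkk n (shT m f) hgd
  -- the line ℓ
  have hl1 : zl m c ^ i ∣ B j := by
    have := B_mem κ κ' hkk n B (fun _ => Ideal.span {zl m c ^ i}) (fun _ _ _ => le_rfl) j ?_ j le_rfl hj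
    · exact Ideal.mem_span_singleton.1 this
    · intro j' hj'
      rw [← hB, Ideal.mem_span_singleton]
      refine zl_pow_dvd fun i' hi' => ?_
      have := h0 i' hi' j' hj'
      rwa [cf, shL_coeff] at this
  have hl2 : (shY m c ((shT m f).coeff j - κ ^ (n - j) * B j)).coeff i = 0 := by
    refine coeff_of_zl_pow_dvd (k := i + 1) ?_ i (Nat.lt_succ_self i)
    rw [← Ideal.mem_span_singleton, hB]
    refine B_coeff κ n B _ hj fun j' hj' => ?_
    refine B_mem κ κ' hkk n B (fun _ => Ideal.span {zl m c ^ (i + 1)}) (fun _ _ _ => le_rfl) (j - 1) ?_ j' (by omega) (by omega)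
    intro j'' hj''
    rw [← hB, Ideal.mem_span_singleton]
    refine zl_pow_dvd fun i' hi' => ?_
    rw [← shL_coeff]
    rcases Nat.lt_succ_iff_lt_or_eq.1 hi' with h | h
    · exact h0 i' h j'' (by omega)
    · rw [h]; exact h1 j'' (by omega)
  -- the line h
  have hh : zl m' c' ^ (cl M (j * b)) ∣ B j := by
    have e : shT m' f = ∑ l ∈ Finset.range (n + 1), C (B (n - l)) * X ^ l * (X + C (-κ)) ^ (n - l) := by
      have e1 : shT m' f = shT (m' - m) (shT m f) := by
        rw [shT_apply, shT_apply, shT_apply, taylor_taylor, ← C_add, ← C_add, sub_add_cancel]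
      rw [e1, hB, map_sum, ← Finset.sum_range_reflect]
      refine Finset.sum_congr rfl fun l hl => ?_
      have hl := Finset.mem_range.1 hl
      rw [map_mul, map_mul, map_pow, map_pow, map_add, shT_x, shT_x, shT_t, show n + 1 - 1 - l = n - l by omega, show n - (n - l) = l by omega]
      have e2 : (C (C (C (m' - m))) : A3) = C (-κ) := by rw [hκ, ← C_neg, ← C_neg, neg_sub]
      rw [e2]
      have e3 : (X + C (-κ) + C κ : A3) = X := by rw [add_assoc, ← C_add]; simp
      rw [e3]; ring
    have := B_mem (-κ) (-κ') (by rw [neg_mul_neg, hkk]) n (fun l => B (n - l)) (fun l => Ideal.span {zl m' c' ^ (cl M ((n - l) * b))})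
      ?_ (n - j) ?_ (n - j) le_rfl (by omega)
    · rw [show n - (n - j) = j by omega] at this
      exact Ideal.mem_span_singleton.1 this
    · intro l l' hll
      refine (Ideal.span_singleton_le_span_singleton).2 (pow_dvd_pow _ (cl_mono (Nat.mul_le_mul_right _ (by omega))))
    · intro l hl
      rw [← e, Ideal.mem_span_singleton]
      refine zl_pow_dvd fun i' hi' => ?_
      rw [← shL_coeff]
      refine hW i' l ?_
      have := (lt_cl hM).1 hi'
      rw [Nat.sub_mul] at this
      rw [mul_comm b l]
      omega
  -- combine
  obtain ⟨b', hb'⟩ := hl1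
  have hnd : ¬ zl m' c' ∣ zl m c ^ i := by
    intro h
    have hd := (zl_prime _ _).dvd_of_dvd_pow h
    have := (zl_prime m' c').associated_of_dvd (zl_prime m c) hd
    have h2 := eq_of_monic_of_associated (monic_X_sub_C _) (monic_X_sub_C _) this
    have h3 : lin m' c' = lin m c := C_injective (sub_right_injective h2)
    have h4 : (lin m' c').coeff 1 = (lin m c).coeff 1 := by rw [h3]
    simp [lin] at h4
    exact hm h4.symm
  rw [hb'] at hh
  obtain ⟨q, hq⟩ := (zl_prime m' c').pow_dvd_of_dvd_mul_left _ hnd hh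
  have hcf : cf m c i j f = C (m - m') ^ (n - j) * (((shY m c (zl m' c')).coeff 0) ^ (cl M (j * b)) * (shY m c q).coeff 0) := by
    rw [cf, shL_coeff]
    rw [map_sub, coeff_sub, sub_eq_zero] at hl2
    rw [hl2, hb', hq, map_mul, map_mul, map_mul, map_pow, map_pow, map_pow, shY_zl]
    have e : shY m c κ = C (C (m - m')) := by rw [hκ, shY_apply, taylor_C]
    rw [e, ← C_pow, coeff_C_mul, coeff_X_pow_mul', if_pos le_rfl, Nat.sub_self, mul_coeff_zero, coeff_zero_eq_eval_zero (shY m c (zl m' c') ^ _), eval_pow, ← coeff_zero_eq_eval_zero]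
  have hz : (shY m c (zl m' c')).coeff 0 = C (m - m') * (X - C ((c' - c) / (m - m'))) := by
    rw [coeff_zero_eval, zl, eval_sub, eval_X, eval_C, mul_sub, ← C_mul, mul_div_cancel₀ _ hmm]
    simp [lin]; ring
  rw [hcf, hz, mul_pow]
  exact Dvd.intro_left (C (m - m') ^ (n - j) * (C (m - m') ^ (cl M (j * b)) * (shY m c q).coeff 0)) (by ring)

end Part14
end BGProof

namespace BGProof
section Part15
open Polynomial
set_option maxSynthPendingDepth 3

lemma chain {I : Type*} [DecidableEq I] (key : I → ℕ) (S : Submodule ℂ A3) [FiniteDimensional ℂ S]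
    (L : I → A3 →ₗ[ℂ] A1) (U : I → Submodule ℂ A1) [∀ x, FiniteDimensional ℂ (U x)] (bd : I → ℕ)
    (hbd : ∀ x, Module.finrank ℂ (U x) ≤ bd x) (T : Finset I) (hk : Set.InjOn key T)
    (h : ∀ x ∈ T, ∀ f ∈ S, (∀ y ∈ T, key y < key x → L y f = 0) → L x f ∈ U x) :
    Module.finrank ℂ S ≤ Module.finrank ℂ ↥(S ⊓ ⨅ x ∈ T, LinearMap.ker (L x)) + ∑ x ∈ T, bd x := by
  induction T using Finset.induction_on_max_value key with
  | empty =>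
    rw [Finset.sum_empty, add_zero]
    have : FiniteDimensional ℂ ↥(S ⊓ ⨅ x ∈ (∅ : Finset I), LinearMap.ker (L x)) := Submodule.finiteDimensional_of_le inf_le_left
    exact Submodule.finrank_mono (le_inf le_rfl (le_iInf₂ fun x hx => absurd hx (Finset.notMem_empty x)))
  | insert x T hx hmax ih =>
    have ih' := ih (hk.mono (by simp)) ?_
    · have : FiniteDimensional ℂ ↥(S ⊓ ⨅ x ∈ T, LinearMap.ker (L x)) := Submodule.finiteDimensional_of_le inf_le_left
      have hc := cut (S ⊓ ⨅ x ∈ T, LinearMap.ker (L x)) (L x) (U x) ?_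
      · rw [Finset.sum_insert hx]
        have e : (S ⊓ ⨅ x ∈ T, LinearMap.ker (L x)) ⊓ LinearMap.ker (L x) = S ⊓ ⨅ y ∈ insert x T, LinearMap.ker (L y) := by
          rw [Finset.iInf_insert, inf_assoc, inf_comm (⨅ x ∈ T, LinearMap.ker (L x))]
        rw [e] at hc
        have := hbd x
        omega
      · intro f hf
        have hf := Submodule.mem_inf.1 hf
        have h2 := hf.2
        simp only [Submodule.mem_iInf, LinearMap.mem_ker] at h2
        refine h x (by simp) f hf.1 fun y hy hlt => ?_
        rcases Finset.mem_insert.1 hy with rfl | hy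
        · omega
        · exact h2 y hy
    · intro y hy f hf hh
      refine h y (by simp [hy]) f hf fun z hz hlt => ?_
      rcases Finset.mem_insert.1 hz with rfl | hz
      · have := hmax y hy
        omega
      · exact hh z hz hlt

noncomputable def UR (D : ℕ) (R : A1) : Submodule ℂ A1 := (degreeLT ℂ (D + 1 - R.natDegree)).map (LinearMap.mulLeft ℂ R)

instance degLT_fd (k : ℕ) : FiniteDimensional ℂ (degreeLT ℂ k) := Module.Finite.equiv (degreeLTEquiv ℂ k).symm

instance (D : ℕ) (R : A1) : FiniteDimensional ℂ (UR D R) := by unfold UR; infer_instance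

lemma UR_finrank (D : ℕ) (R : A1) : Module.finrank ℂ (UR D R) ≤ D + 1 - R.natDegree := by
  refine (Submodule.finrank_map_le _ _).trans ?_
  rw [LinearEquiv.finrank_eq (degreeLTEquiv ℂ _)]
  simp

lemma mem_UR {D : ℕ} {R q : A1} (hR : R.Monic) (hd : R ∣ q) (hq : q.natDegree ≤ D) : q ∈ UR D R := by
  obtain ⟨g, rfl⟩ := hd
  refine ⟨g, ?_, rfl⟩
  by_cases hg : g = 0
  · rw [hg]; exact Submodule.zero_mem _
  rw [hR.natDegree_mul' hg] at hq
  change g ∈ degreeLT ℂ _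
  rw [mem_degreeLT, degree_eq_natDegree hg]
  exact_mod_cast (by omega : g.natDegree < D + 1 - R.natDegree)

noncomputable def cfl (m c : ℂ) (i j : ℕ) : A3 →ₗ[ℂ] A1 where
  toFun f := cf m c i j f
  map_add' := cf_add m c i j
  map_smul' := cf_smul m c i j

/-- the exponent of the divisor -/
noncomputable def dR {ι : Type*} (M : ℕ) (a : ι → ℕ) (Q : Finset (ℂ × ℂ)) (mp : ℂ × ℂ → ℕ) (s : Finset ι) (i j : ℕ) : ℕ :=
  ∑ p ∈ Q, (mp p - i) + ∑ h ∈ s, cl M (j * a h)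

lemma cop {x y : ℂ} (h : x ≠ y) (k l : ℕ) : IsCoprime ((X - C x : A1) ^ k) ((X - C y) ^ l) :=
  (isCoprime_X_sub_C_of_isUnit_sub (sub_ne_zero.2 h).isUnit).pow

lemma line_step {ι : Type*} (m c : ι → ℂ) {M n d : ℕ} (hM : 0 < M) (hnd : n ≤ d) (a : ι → ℕ) (l : ι) (ha : a l ≤ M)
    (Q : Finset (ℂ × ℂ)) (mp : ℂ × ℂ → ℕ) (s : Finset ι)
    (hQ : ∀ p ∈ Q, p.2 = m l * p.1 + c l) (hs : ∀ h ∈ s, m l ≠ m h)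
    (hs2 : ∀ h ∈ s, ∀ h' ∈ s, h ≠ h' → (c h - c l) / (m l - m h) ≠ (c h' - c l) / (m l - m h'))
    (hs3 : ∀ h ∈ s, ∀ p ∈ Q, (c h - c l) / (m l - m h) ≠ p.1)
    (S : Submodule ℂ A3) [FiniteDimensional ℂ S] (hS : S ≤ S0 n d) (hSP : ∀ p ∈ Q, S ≤ Pt p.1 p.2 n (mp p))
    (hSW : ∀ h ∈ s, S ≤ Wl (m h) (c h) M (a h) (n * a h)) :
    Module.finrank ℂ S ≤ Module.finrank ℂ ↥(S ⊓ Wl (m l) (c l) M (a l) (n * a l)) +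
      ∑ j ∈ Finset.range n, ∑ i ∈ Finset.range (cl M ((n - j) * a l)), (d - i + j + 1 - dR M a Q mp s i j) := by
  classical
  let T : Finset (Σ _ : ℕ, ℕ) := (Finset.range n).sigma (fun j => Finset.range (cl M ((n - j) * a l)))
  have hT : ∀ i j, (⟨j, i⟩ : Σ _ : ℕ, ℕ) ∈ T ↔ M * i + a l * j < n * a l := by
    intro i j
    simp only [T, Finset.mem_sigma, Finset.mem_range, lt_cl hM, Nat.sub_mul]
    rw [mul_comm (a l) j]
    constructor
    · intro h; omega
    · intro h
      refine ⟨?_, by omega⟩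
      by_contra hc
      have := Nat.mul_le_mul_right (a l) (not_lt.1 hc)
      omega
  let R : ℕ → ℕ → A1 := fun i j => (∏ p ∈ Q, (X - C p.1) ^ (mp p - i)) *
    ∏ h ∈ s, (X - C ((c h - c l) / (m l - m h))) ^ cl M (j * a h)
  have hRm : ∀ i j, (R i j).Monic := fun i j =>
    (monic_prod_of_monic _ _ fun p _ => (monic_X_sub_C _).pow _).mul (monic_prod_of_monic _ _ fun p _ => (monic_X_sub_C _).pow _)
  have hRd : ∀ i j, (R i j).natDegree = dR M a Q mp s i j := by
    intro i j
    simp only [R]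
    rw [Monic.natDegree_mul (monic_prod_of_monic _ _ fun p _ => (monic_X_sub_C _).pow _) (monic_prod_of_monic _ _ fun p _ => (monic_X_sub_C _).pow _),
      natDegree_prod_of_monic _ _ (fun p _ => (monic_X_sub_C _).pow _), natDegree_prod_of_monic _ _ (fun p _ => (monic_X_sub_C _).pow _), dR]
    congr 1
    · refine Finset.sum_congr rfl fun p _ => ?_
      rw [(monic_X_sub_C _).natDegree_pow, natDegree_X_sub_C, mul_one]
    · refine Finset.sum_congr rfl fun p _ => ?_
      rw [(monic_X_sub_C _).natDegree_pow, natDegree_X_sub_C, mul_one]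
  have key := chain (fun x : Σ _ : ℕ, ℕ => x.2 * n + x.1) S (fun x => cfl (m l) (c l) x.2 x.1)
    (fun x => UR (d - x.2 + x.1) (R x.2 x.1)) (fun x => d - x.2 + x.1 + 1 - dR M a Q mp s x.2 x.1)
    (fun x => by have := UR_finrank (d - x.2 + x.1) (R x.2 x.1); rwa [hRd] at this) T ?_ ?_
  · have e : (S ⊓ ⨅ x ∈ T, LinearMap.ker (cfl (m l) (c l) x.2 x.1)) = S ⊓ Wl (m l) (c l) M (a l) (n * a l) := by
      congr 1
      ext f
      simp only [Submodule.mem_iInf, LinearMap.mem_ker]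
      constructor
      · intro h i j hij
        exact h ⟨j, i⟩ ((hT i j).2 hij)
      · rintro h ⟨j, i⟩ hx
        exact h i j ((hT i j).1 hx)
    rw [e] at key
    rwa [Finset.sum_sigma] at key
  · rintro ⟨j, i⟩ h ⟨j', i'⟩ h' heq
    simp only at heq
    have h1 : j < n := Finset.mem_range.1 (Finset.mem_sigma.1 h).1
    have h2 : j' < n := Finset.mem_range.1 (Finset.mem_sigma.1 h').1
    have e1 := congrArg (· % n) heq
    simp only [Nat.mul_add_mod_self_right, Nat.mod_eq_of_lt h1, Nat.mod_eq_of_lt h2] at e1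
    subst e1
    have : i = i' := Nat.eq_of_mul_eq_mul_right (by omega) (Nat.add_right_cancel heq)
    rw [this]
  · rintro ⟨j, i⟩ hx f hf hlow
    simp only at hlow ⊢
    have hw := (hT i j).1 hx
    have hj : j < n := Finset.mem_range.1 (Finset.mem_sigma.1 hx).1
    have hlow1 : ∀ i' < i, ∀ j', M * i' + a l * j' ≤ M * i + a l * j → cf (m l) (c l) i' j' f = 0 := by
      intro i' hi' j' hle
      have hm : (⟨j', i'⟩ : Σ _ : ℕ, ℕ) ∈ T := (hT i' j').2 (by omega)
      refine hlow ⟨j', i'⟩ hm ?_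
      have h2 : j' < n := Finset.mem_range.1 (Finset.mem_sigma.1 hm).1
      have : (i' + 1) * n ≤ i * n := Nat.mul_le_mul_right n hi'
      simp only
      rw [Nat.succ_mul] at this
      omega
    have hlow2 : ∀ j' < j, cf (m l) (c l) i j' f = 0 := by
      intro j' hj'
      refine hlow ⟨j', i⟩ ((hT i j').2 ?_) ?_
      · have := Nat.mul_le_mul_left (a l) hj'.le
        omega
      · simp only; omega
    have hid : i ≤ d := by
      have h1 : M * i < n * M := by
        have := Nat.mul_le_mul_left n ha
        omega
      rw [mul_comm n] at h1
      have := lt_of_mul_lt_mul_left h1 (Nat.zero_le M)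
      omega
    refine mem_UR (hRm i j) ?_ ?_
    · refine IsCoprime.mul_dvd ?_ ?_ ?_
      · refine IsCoprime.prod_left fun p hp => IsCoprime.prod_right fun h hh => ?_
        exact cop (hs3 h hh p hp).symm _ _
      · refine Finset.prod_dvd_of_coprime ?_ ?_
        · intro p hp p' hp' hne
          refine cop (fun h => hne (Prod.ext h ?_)) _ _
          rw [hQ p hp, hQ p' hp', h]
        · intro p hp
          exact cf_point_dvd (hQ p hp) (hS hf).1 (hSP p hp hf) i j
      · refine Finset.prod_dvd_of_coprime ?_ ?_
        · intro p hp p' hp' hne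
          exact cop (hs2 p hp p' hp' hne) _ _
        · intro h hh
          refine double_dvd (hs h hh) hM (hS hf).1 (hSW h hh hf) hj.le ?_ hlow2
          intro i' hi' j' hj'
          refine hlow1 i' hi' j' ?_
          have := Nat.mul_le_mul_left (a l) hj'
          have := Nat.mul_le_mul_left M hi'.le
          omega
    · refine cf_degree (m l) (c l) (hS hf).2 hid fun i' hi' => hlow1 i' hi' _ ?_
      obtain ⟨k, rfl⟩ := Nat.exists_eq_add_of_le hi'.le
      rw [show i' + k + j - i' = k + j by omega, mul_add, mul_add]
      have := Nat.mul_le_mul_right k ha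
      omega

end Part15
end BGProof

namespace BGProof
section Part16
open Polynomial
set_option maxSynthPendingDepth 3

lemma sum_id (n : ℕ) : ∑ j ∈ Finset.range n, (j : ℝ) = n * (n - 1) / 2 := by
  induction n with
  | zero => simp
  | succ n ih => rw [Finset.sum_range_succ, ih]; push_cast; ring

lemma sum_sq (n : ℕ) : ∑ j ∈ Finset.range n, (j : ℝ) ^ 2 = n * (n - 1) * (2 * n - 1) / 6 := by
  induction n with
  | zero => simp
  | succ n ih => rw [Finset.sum_range_succ, ih]; push_cast; ring

lemma sum_j (n : ℕ) : ∑ j ∈ Finset.range n, (j : ℝ) * (n - j) = ((n : ℝ) ^ 3 - n) / 6 := by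
  have : ∀ j : ℕ, (j : ℝ) * (n - j) = n * j - (j : ℝ) ^ 2 := fun j => by ring
  simp_rw [this]
  rw [Finset.sum_sub_distrib, ← Finset.mul_sum, sum_id, sum_sq]; ring

lemma cl_le_real {M : ℕ} (hM : 0 < M) (K : ℕ) : (K : ℝ) / M ≤ cl M K := by
  rw [div_le_iff₀ (by exact_mod_cast hM), mul_comm]
  exact_mod_cast le_cl hM K
lemma cl_lt_real {M : ℕ} (hM : 0 < M) (K : ℕ) : (cl M K : ℝ) ≤ (K : ℝ) / M + 1 := by
  have hM' : (0 : ℝ) < M := by exact_mod_cast hM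
  rw [div_add_one hM'.ne', le_div_iff₀ hM', mul_comm]
  exact_mod_cast (cl_lt hM K).le

set_option maxHeartbeats 1000000 in
/-- counting bound for a single line -/
lemma line_real {ι : Type*} {M n d : ℕ} (hM : 0 < M) (hn : 1 ≤ n) (a : ι → ℕ) (ha : ∀ i, a i ≤ M) (l : ι)
    (Q : Finset (ℂ × ℂ)) (mp : ℂ × ℂ → ℕ) (hmp : ∀ p ∈ Q, mp p ≤ n) (s : Finset ι) (hd : (Q.card + s.card + 1) * n ≤ d)
    (C1 : ℝ) (hC1 : (d : ℝ) ≤ C1 * n) :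
    ((∑ j ∈ Finset.range n, ∑ i ∈ Finset.range (cl M ((n - j) * a l)), (d - i + j + 1 - dR M a Q mp s i j) : ℕ) : ℝ) ≤
      (a l / M : ℝ) * (d - ∑ p ∈ Q, (mp p : ℝ)) * n ^ 2 / 2 + (a l / M : ℝ) * n ^ 3 / 6 + (Q.card - 1) * (a l / M : ℝ) ^ 2 * n ^ 3 / 6
      + (2 * C1 + 5 + Q.card) * n ^ 2
      - ∑ h ∈ s, (a l / M : ℝ) * (a h / M : ℝ) * (((n : ℝ) ^ 3 - n) / 6) := by
  have hM' : (0 : ℝ) < M := by exact_mod_cast hM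
  set x : ℝ := (a l : ℝ) / (M : ℝ) with hx
  have hx0 : 0 ≤ x := by positivity
  have hx1 : x ≤ 1 := by rw [hx, div_le_one hM']; exact_mod_cast ha l
  set k : ℝ := ((Q.card : ℕ) : ℝ) with hk
  have hk0 : 0 ≤ k := by positivity
  set Sm : ℝ := ∑ p ∈ Q, (mp p : ℝ) with hSm
  have hSm0 : 0 ≤ Sm := by positivity
  set H : ℝ := ∑ h ∈ s, (a h / M : ℝ) with hH
  have hH0 : 0 ≤ H := by positivity
  have hn1 : (1 : ℝ) ≤ n := by exact_mod_cast hn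
  have hSmd : Sm ≤ d := by
    have h1 : Sm ≤ Q.card * (n : ℝ) := by
      rw [hSm]
      calc _ ≤ ∑ p ∈ Q, (n : ℝ) := Finset.sum_le_sum fun p hp => by exact_mod_cast hmp p hp
        _ = _ := by simp
    have h2 : (Q.card : ℝ) * n ≤ d := by
      have : Q.card * n ≤ d := le_trans (Nat.mul_le_mul_right _ (by omega)) hd
      exact_mod_cast this
    linarith
  have hclM : ∀ j b : ℕ, b ≤ M → cl M (j * b) ≤ j := by
    intro j b hb
    by_contra hc
    have := (lt_cl hM).1 (not_le.1 hc)
    have h2 := Nat.mul_le_mul_left j hb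
    rw [mul_comm M] at this
    omega
  -- pointwise
  have hpt : ∀ j < n, ∀ i < cl M ((n - j) * a l), ((d - i + j + 1 - dR M a Q mp s i j : ℕ) : ℝ) ≤
      (d + 1 + j - Sm - j * H) + (k - 1) * i := by
    intro j hj i hi
    have hin : i < n := lt_of_lt_of_le hi ((hclM _ _ (ha l)).trans (by omega))
    have h1 : dR M a Q mp s i j ≤ d - i + j + 1 := by
      have e1 : ∑ p ∈ Q, (mp p - i) ≤ Q.card * n := by
        rw [← smul_eq_mul]
        exact Finset.sum_le_card_nsmul _ _ _ fun p hp => by have := hmp p hp; omega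
      have e2 : ∑ h ∈ s, cl M (j * a h) ≤ s.card * n := by
        rw [← smul_eq_mul]
        exact Finset.sum_le_card_nsmul _ _ _ fun p hp => (hclM _ _ (ha p)).trans hj.le
      rw [add_mul, add_mul, one_mul] at hd
      unfold dR
      omega
    have h2 : (d - i + j + 1 - dR M a Q mp s i j : ℕ) = (d : ℝ) - i + j + 1 - (dR M a Q mp s i j : ℝ) := by
      have hid : i ≤ d := by
        have : n ≤ d := le_trans (Nat.le_mul_of_pos_left n (by omega)) hd
        omega
      rw [Nat.cast_sub h1]
      push_cast [Nat.cast_sub hid]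
      ring
    have h3 : Sm - k * i + j * H ≤ (dR M a Q mp s i j : ℝ) := by
      unfold dR
      push_cast
      have e1 : Sm - k * i ≤ ∑ p ∈ Q, ((mp p - i : ℕ) : ℝ) := by
        have : Sm - k * i = ∑ p ∈ Q, ((mp p : ℝ) - i) := by rw [Finset.sum_sub_distrib]; simp [hk, hSm]
        rw [this]
        refine Finset.sum_le_sum fun p _ => ?_
        rw [sub_le_iff_le_add]
        exact_mod_cast (by omega : mp p ≤ mp p - i + i)
      have e2 : j * H ≤ ∑ h ∈ s, (cl M (j * a h) : ℝ) := by
        rw [hH, Finset.mul_sum]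
        refine Finset.sum_le_sum fun p _ => ?_
        have := cl_le_real hM (j * a p)
        push_cast at this
        rwa [mul_div_assoc] at this
      linarith
    rw [h2]
    linarith
  have hj2 : ∀ j ∈ Finset.range n, ((∑ i ∈ Finset.range (cl M ((n - j) * a l)), (d - i + j + 1 - dR M a Q mp s i j) : ℕ) : ℝ) ≤
      x * (n - j) * (d + 1 + j - Sm) + (d + 1 + j) + (k - 1) / 2 * x ^ 2 * (n - j) ^ 2 + (k + 1) / 2 * n - x * H * (j * (n - j)) := by
    intro j hj
    have hj := Finset.mem_range.1 hj
    set I := cl M ((n - j) * a l) with hI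
    have hnj : ((n - j : ℕ) : ℝ) = n - j := by rw [Nat.cast_sub hj.le]
    set y : ℝ := (n - j) * x with hy
    have hjn : (j : ℝ) < n := by exact_mod_cast hj
    have hj0 : (0 : ℝ) ≤ j := by positivity
    have hy0 : 0 ≤ y := mul_nonneg (by linarith) hx0
    have hyn : y ≤ n := by rw [hy]; nlinarith
    have hI1 : y ≤ I := by
      have := cl_le_real hM ((n - j) * a l)
      push_cast [hnj] at this
      rwa [mul_div_assoc] at this
    have hI2 : (I : ℝ) ≤ y + 1 := by
      have := cl_lt_real hM ((n - j) * a l)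
      push_cast [hnj] at this
      rwa [mul_div_assoc] at this
    push_cast
    calc _ ≤ ∑ i ∈ Finset.range I, ((d + 1 + j - Sm - j * H) + (k - 1) * i) :=
          Finset.sum_le_sum fun i hi => hpt j hj i (Finset.mem_range.1 hi)
      _ = I * (d + 1 + j - Sm) - I * (j * H) + (k - 1) / 2 * (I * (I - 1)) := by
          rw [Finset.sum_add_distrib, ← Finset.mul_sum, sum_id]; simp; ring
      _ ≤ _ := by
          have e1 : (I : ℝ) * (d + 1 + j - Sm) ≤ y * (d + 1 + j - Sm) + (d + 1 + j) := by
            have : (I : ℝ) * (d + 1 + j - Sm) ≤ (y + 1) * (d + 1 + j - Sm) := mul_le_mul_of_nonneg_right hI2 (by linarith)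
            linarith
          have e2 : y * (j * H) ≤ I * (j * H) := mul_le_mul_of_nonneg_right hI1 (by positivity)
          have hI0 : (0 : ℝ) ≤ I := by positivity
          have e3 : (I : ℝ) * (I - 1) ≤ y ^ 2 + y := by nlinarith
          have e4 : y ^ 2 - y ≤ (I : ℝ) * (I - 1) := by
            rcases Nat.eq_zero_or_pos I with h | h
            · rw [h] at hI1 hI2 ⊢
              simp at hI1 ⊢
              nlinarith
            · have : (1 : ℝ) ≤ I := by exact_mod_cast h
              rcases le_total 1 y with h | h
              · nlinarith
              · nlinarith
          have e5 : (k - 1) / 2 * (I * (I - 1)) ≤ (k - 1) / 2 * y ^ 2 + (k + 1) / 2 * n := by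
            have : k * (I * (I - 1)) ≤ k * (y ^ 2 + n) := mul_le_mul_of_nonneg_left (by linarith) hk0
            have h7 : k * (y ^ 2 + n) = k * y ^ 2 + k * n := by ring
            have h8 : (k - 1) / 2 * (I * (I - 1)) = (k * (I * (I - 1)) - I * (I - 1)) / 2 := by ring
            have h9 : (k - 1) / 2 * y ^ 2 + (k + 1) / 2 * n = (k * y ^ 2 - y ^ 2 + k * n + n) / 2 := by ring
            linarith
          have e6 : (k - 1) / 2 * y ^ 2 = (k - 1) / 2 * x ^ 2 * (n - j) ^ 2 := by rw [hy]; ring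
          have e7 : y * (j * H) = x * H * (j * (n - j)) := by rw [hy]; ring
          have e8 : y * (d + 1 + j - Sm) = x * (n - j) * (d + 1 + j - Sm) := by rw [hy]; ring
          linarith
  rw [Nat.cast_sum]
  refine (Finset.sum_le_sum hj2).trans ?_
  have hsum : ∑ j ∈ Finset.range n, (x * (n - j) * (d + 1 + j - Sm) + (d + 1 + j) + (k - 1) / 2 * x ^ 2 * (n - j) ^ 2 + (k + 1) / 2 * n - x * H * (j * (n - j)))
      = x * (d + 1 - Sm) * (n * (n + 1) / 2) + x * ((n ^ 3 - n) / 6) + (n * (d + 1) + n * (n - 1) / 2)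
        + (k - 1) / 2 * x ^ 2 * (n * (n + 1) * (2 * n + 1) / 6) + (k + 1) / 2 * n ^ 2 - x * H * ((n ^ 3 - n) / 6) := by
    have e : ∀ j : ℕ, (x * (n - j) * (d + 1 + j - Sm) + (d + 1 + j) + (k - 1) / 2 * x ^ 2 * (n - j) ^ 2 + (k + 1) / 2 * n - x * H * (j * (n - j)))
      = (x * (d + 1 - Sm) * n + (d + 1) + (k - 1) / 2 * x ^ 2 * n ^ 2 + (k + 1) / 2 * n) + (- x * (d + 1 - Sm) + 1 - (k - 1) * x ^ 2 * n) * (j : ℝ)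
       + (k - 1) / 2 * x ^ 2 * (j : ℝ) ^ 2 + (x - x * H) * (j * (n - j)) := fun j => by ring
    simp_rw [e]
    rw [Finset.sum_add_distrib, Finset.sum_add_distrib, Finset.sum_add_distrib, ← Finset.mul_sum, ← Finset.mul_sum, ← Finset.mul_sum, sum_j, sum_id, sum_sq]
    simp
    ring
  rw [hsum]
  have hHs : ∑ h ∈ s, x * (a h / M : ℝ) * (((n : ℝ) ^ 3 - n) / 6) = x * H * ((n ^ 3 - n) / 6) := by
    rw [hH, Finset.mul_sum, Finset.sum_mul]
  rw [hHs]
  have hdS : x * (d + 1 - Sm) ≤ C1 * n + 1 := by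
    have : x * (d + 1 - Sm) ≤ 1 * (d + 1 - Sm) := mul_le_mul_of_nonneg_right hx1 (by linarith)
    linarith
  have hn2 : (n : ℝ) ≤ n ^ 2 := by nlinarith
  have f1 : x * (d + 1 - Sm) * (n * (n + 1) / 2) ≤ x * (d - Sm) * n ^ 2 / 2 + n ^ 2 / 2 + (C1 * n + 1) * n / 2 := by
    have : x * (d + 1 - Sm) * (n / 2) ≤ (C1 * n + 1) * (n / 2) := mul_le_mul_of_nonneg_right hdS (by positivity)
    have : x * (n ^ 2 / 2) ≤ 1 * (n ^ 2 / 2) := mul_le_mul_of_nonneg_right hx1 (by positivity)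
    linear_combination this + ‹x * (d + 1 - Sm) * (n / 2) ≤ (C1 * n + 1) * (n / 2)›
  have f2 : x * ((n ^ 3 - n) / 6) ≤ x * n ^ 3 / 6 := by
    have : 0 ≤ x * n := by positivity
    linear_combination this / 6
  have f3 : (k - 1) / 2 * x ^ 2 * (n * (n + 1) * (2 * n + 1) / 6) ≤ (k - 1) * x ^ 2 * n ^ 3 / 6 + k * n ^ 2 / 3 := by
    have hx2 : x ^ 2 ≤ 1 := by nlinarith
    have hx20 : 0 ≤ x ^ 2 := by positivity
    have : (k * x ^ 2) * (3 * n ^ 2 + n) ≤ (k * 1) * (4 * n ^ 2) :=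
      mul_le_mul (mul_le_mul_of_nonneg_left hx2 hk0) (by linarith) (by positivity) (by positivity)
    have h7 : 0 ≤ x ^ 2 * (3 * n ^ 2 + n) := by positivity
    linear_combination this / 12 + h7 / 12
  have f4 : (n : ℝ) * (d + 1) ≤ C1 * n ^ 2 + n ^ 2 := by
    have := mul_le_mul_of_nonneg_left hC1 (by linarith : (0 : ℝ) ≤ n)
    linear_combination this + hn2
  have hkn : 0 ≤ k * (n : ℝ) ^ 2 := by positivity
  have hC0 : 0 ≤ C1 * (n : ℝ) ^ 2 := by
    have h7 : (0 : ℝ) ≤ d := by positivity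
    have : 0 ≤ (C1 * n) * n := mul_nonneg (by linarith) (by linarith)
    linear_combination this
  linarith

end Part16
end BGProof

namespace BGProof
section Part17
open Polynomial
set_option maxSynthPendingDepth 3

lemma points_step (P : Finset (ℂ × ℂ)) (mp : ℂ × ℂ → ℕ) (n : ℕ) (S : Submodule ℂ A3) [FiniteDimensional ℂ S] :
    2 * Module.finrank ℂ S ≤ 2 * Module.finrank ℂ ↥(S ⊓ ⨅ p ∈ P, Pt p.1 p.2 n (mp p)) + ∑ p ∈ P, (n + 1) * (mp p * (mp p + 1)) := by
  classical
  induction P using Finset.induction_on with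
  | empty =>
    rw [Finset.sum_empty, add_zero]
    have : FiniteDimensional ℂ ↥(S ⊓ ⨅ p ∈ (∅ : Finset (ℂ × ℂ)), Pt p.1 p.2 n (mp p)) := Submodule.finiteDimensional_of_le inf_le_left
    exact Nat.mul_le_mul_left 2 (Submodule.finrank_mono (le_inf le_rfl (le_iInf₂ fun x hx => absurd hx (Finset.notMem_empty x))))
  | insert p P hp ih =>
    have : FiniteDimensional ℂ ↥(S ⊓ ⨅ p ∈ P, Pt p.1 p.2 n (mp p)) := Submodule.finiteDimensional_of_le inf_le_left
    have h := cut_point (S ⊓ ⨅ p ∈ P, Pt p.1 p.2 n (mp p)) p.1 p.2 n (mp p)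
    have e : (S ⊓ ⨅ q ∈ P, Pt q.1 q.2 n (mp q)) ⊓ Pt p.1 p.2 n (mp p) = S ⊓ ⨅ q ∈ insert p P, Pt q.1 q.2 n (mp q) := by
      rw [Finset.iInf_insert, inf_assoc, inf_comm (⨅ q ∈ P, Pt q.1 q.2 n (mp q))]
    rw [e] at h
    rw [Finset.sum_insert hp]
    omega

section Lines
variable {ι : Type*} (m c : ι → ℂ) (P : Finset (ℂ × ℂ))

/-- incidence -/
def onL (i : ι) (p : ℂ × ℂ) : Prop := p.2 = m i * p.1 + c i

/-- the two lines meet in a double point -/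
def dbl (i h : ι) : Prop := i ≠ h ∧ ∀ p ∈ P, ¬ (onL m c i p ∧ onL m c h p)

lemma dbl_symm {i h : ι} (hd : dbl m c P i h) : dbl m c P h i := ⟨hd.1.symm, fun p hp hh => hd.2 p hp ⟨hh.2, hh.1⟩⟩

open Classical in
noncomputable def Ql (i : ι) : Finset (ℂ × ℂ) := P.filter (onL m c i)

open Classical in
noncomputable def ds (x : ι → ℝ) (s : Finset ι) : ℝ := ∑ l ∈ s, ∑ h ∈ s, if dbl m c P l h then x l * x h else 0

open Classical in
lemma ds_insert (x : ι → ℝ) (s : Finset ι) (l : ι) (hl : l ∉ s) :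
    ds m c P x (insert l s) = ds m c P x s + 2 * ∑ h ∈ s.filter (dbl m c P l), x l * x h := by
  unfold ds
  rw [Finset.sum_insert hl, Finset.sum_insert hl, if_neg (fun h => h.1 rfl), zero_add, ← Finset.sum_filter]
  have : ∑ h ∈ s, ∑ h' ∈ insert l s, (if dbl m c P h h' then x h * x h' else 0) =
      ∑ h ∈ s.filter (dbl m c P l), x l * x h + ∑ h ∈ s, ∑ h' ∈ s, (if dbl m c P h h' then x h * x h' else 0) := by
    rw [Finset.sum_filter, ← Finset.sum_add_distrib]
    refine Finset.sum_congr rfl fun h _ => ?_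
    rw [Finset.sum_insert hl]
    congr 1
    have : dbl m c P h l ↔ dbl m c P l h := ⟨dbl_symm m c P, dbl_symm m c P⟩
    simp only [this, mul_comm (x h)]
  rw [this]; ring

/-- cost of one line -/
noncomputable def Fl (M n d : ℕ) (a : ι → ℕ) (mp : ℂ × ℂ → ℕ) (C1 : ℝ) (l : ι) : ℝ :=
  (a l / M : ℝ) * (d - ∑ p ∈ Ql m c P l, (mp p : ℝ)) * n ^ 2 / 2 + (a l / M : ℝ) * n ^ 3 / 6
    + ((Ql m c P l).card - 1) * (a l / M : ℝ) ^ 2 * n ^ 3 / 6 + (2 * C1 + 5 + (Ql m c P l).card) * n ^ 2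

lemma lines_step [Fintype ι] (hm : Function.Injective m) 
    (hP3 : ∀ l h h', l ≠ h → l ≠ h' → h ≠ h' → ∀ p, onL m c l p → onL m c h p → onL m c h' p → p ∈ P)
    {M n d : ℕ} (hM : 0 < M) (hn : 1 ≤ n) (a : ι → ℕ) (ha : ∀ i, a i ≤ M)
    (mp : ℂ × ℂ → ℕ) (hmp : ∀ p ∈ P, mp p ≤ n) (hd : (P.card + Fintype.card ι + 1) * n ≤ d) (C1 : ℝ) (hC1 : (d : ℝ) ≤ C1 * n)
    (S : Submodule ℂ A3) [FiniteDimensional ℂ S] (hS : S ≤ S0 n d) (hSP : ∀ p ∈ P, S ≤ Pt p.1 p.2 n (mp p)) (s : Finset ι) :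
    (Module.finrank ℂ S : ℝ) ≤ Module.finrank ℂ ↥(S ⊓ ⨅ i ∈ s, Wl (m i) (c i) M (a i) (n * a i)) + ∑ l ∈ s, Fl m c P M n d a mp C1 l
      - ds m c P (fun l => (a l / M : ℝ)) s * (((n : ℝ) ^ 3 - n) / 12) := by
  classical
  induction s using Finset.induction_on with
  | empty =>
    have : FiniteDimensional ℂ ↥(S ⊓ ⨅ i ∈ (∅ : Finset ι), Wl (m i) (c i) M (a i) (n * a i)) := Submodule.finiteDimensional_of_le inf_le_left
    simp only [ds, Finset.sum_empty, zero_mul, add_zero, sub_zero, Nat.cast_le]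
    exact Submodule.finrank_mono (le_inf le_rfl (le_iInf₂ fun x hx => absurd hx (Finset.notMem_empty x)))
  | insert l s hl ih =>
    have : FiniteDimensional ℂ ↥(S ⊓ ⨅ i ∈ s, Wl (m i) (c i) M (a i) (n * a i)) := Submodule.finiteDimensional_of_le inf_le_left
    have hnd : n ≤ d := le_trans (Nat.le_mul_of_pos_left n (by omega)) hd
    set s' := s.filter (dbl m c P l) with hs'
    have hpt : ∀ h, dbl m c P l h → ∀ p : ℂ × ℂ, onL m c l p → (c h - c l) / (m l - m h) = p.1 → onL m c h p := by
      intro h hh p hp he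
      have hne : m l - m h ≠ 0 := sub_ne_zero.2 (fun e => hh.1 (hm e))
      rw [div_eq_iff hne] at he
      unfold onL at hp ⊢
      rw [hp]
      linear_combination -he
    have h1 := line_step m c hM hnd a l (ha l) (Ql m c P l) mp s'
      (fun p hp => (Finset.mem_filter.1 hp).2) (fun h hh e => (Finset.mem_filter.1 hh).2.1 (hm e)) ?_ ?_
      (S ⊓ ⨅ i ∈ s, Wl (m i) (c i) M (a i) (n * a i)) (inf_le_left.trans hS)
      (fun p hp => inf_le_left.trans (hSP p (Finset.mem_filter.1 hp).1))
      (fun h hh => inf_le_right.trans (iInf₂_le h (Finset.mem_filter.1 hh).1))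
    · have e : (S ⊓ ⨅ i ∈ s, Wl (m i) (c i) M (a i) (n * a i)) ⊓ Wl (m l) (c l) M (a l) (n * a l) =
          S ⊓ ⨅ i ∈ insert l s, Wl (m i) (c i) M (a i) (n * a i) := by
        rw [Finset.iInf_insert, inf_assoc, inf_comm (⨅ i ∈ s, Wl (m i) (c i) M (a i) (n * a i))]
      rw [e] at h1
      have h2 := line_real hM hn a ha l (Ql m c P l) mp (fun p hp => hmp p (Finset.mem_filter.1 hp).1) s' (d := d) ?_ C1 hC1
      · rw [Finset.sum_insert hl, ds_insert _ _ _ _ _ _ hl, Fl]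
        have h3 : (Module.finrank ℂ ↥(S ⊓ ⨅ i ∈ s, Wl (m i) (c i) M (a i) (n * a i)) : ℝ) ≤
           ((Module.finrank ℂ ↥(S ⊓ ⨅ i ∈ insert l s, Wl (m i) (c i) M (a i) (n * a i)) : ℕ) : ℝ) +
            ((∑ j ∈ Finset.range n, ∑ i ∈ Finset.range (cl M ((n - j) * a l)), (d - i + j + 1 - dR M a (Ql m c P l) mp s' i j) : ℕ) : ℝ) := by
          exact_mod_cast h1
        have h4 : ∑ h ∈ s', (a l / M : ℝ) * (a h / M : ℝ) * (((n : ℝ) ^ 3 - n) / 6) =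
          2 * (∑ h ∈ s', (a l / M : ℝ) * (a h / M : ℝ)) * (((n : ℝ) ^ 3 - n) / 12) := by
          rw [← Finset.sum_mul]; ring
        rw [h4] at h2
        rw [add_mul]
        linarith
      · refine le_trans (Nat.mul_le_mul_right n ?_) hd
        have e1 : (Ql m c P l).card ≤ P.card := Finset.card_filter_le _ _
        have e2 : s'.card ≤ Fintype.card ι := Finset.card_le_univ _
        omega
    · intro h hh h' hh' hne he
      have hh := (Finset.mem_filter.1 hh).2
      have hh' := (Finset.mem_filter.1 hh').2
      have o1 : onL m c l ((c h - c l) / (m l - m h), m l * ((c h - c l) / (m l - m h)) + c l) := rfl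
      have o2 := hpt h hh _ o1 rfl
      have o3 := hpt h' hh' _ o1 he.symm
      exact hh.2 _ (hP3 l h h' hh.1 hh'.1 hne _ o1 o2 o3) ⟨o1, o2⟩
    · intro h hh p hp he
      have hh := (Finset.mem_filter.1 hh).2
      have hp := Finset.mem_filter.1 hp
      exact hh.2 p hp.1 ⟨hp.2, hpt h hh p hp.2 he⟩

end Lines
end Part17
end BGProof

namespace BGProof
section Part18
open Polynomial
set_option maxSynthPendingDepth 3

section ThmA
variable {ι : Type*} [Fintype ι] (m c : ι → ℂ) (P : Finset (ℂ × ℂ))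

open Classical in
/-- sum of the weights of lines through a point -/
noncomputable def sp (x : ι → ℝ) (p : ℂ × ℂ) : ℝ := ∑ i ∈ Finset.univ.filter (fun i => onL m c i p), x i

/-- limiting expression -/
noncomputable def EA (x : ι → ℝ) : ℝ :=
  -((∑ i, x i - 1) / 2) ^ 2 - (∑ i, x i) / 3 + (∑ i, x i ^ 2) / 3 + ds m c P x Finset.univ / 6
    + ∑ p ∈ P, ((sp m c x p) ^ 2 / 4 - sp m c (fun i => x i ^ 2) p / 3)

lemma sum_Ql (x : ι → ℝ) (f : ℂ × ℂ → ℝ) :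
    ∑ l, x l * ∑ p ∈ Ql m c P l, f p = ∑ p ∈ P, f p * sp m c x p := by
  classical
  unfold Ql sp
  simp_rw [Finset.sum_filter, Finset.mul_sum]
  rw [Finset.sum_comm]
  refine Finset.sum_congr rfl fun p _ => Finset.sum_congr rfl fun l _ => ?_
  split_ifs <;> ring

lemma count (hm : Function.Injective m) (hc : ∀ i, c i ≠ 0)
    (hP3 : ∀ l h h', l ≠ h → l ≠ h' → h ≠ h' → ∀ p, onL m c l p → onL m c h p → onL m c h' p → p ∈ P)
    {M : ℕ} (hM : 0 < M) (a : ι → ℕ) (ha : ∀ i, a i ≤ M)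
    (hpt : ∀ x y : ℂ, ∀ s : Finset ι, (∀ i ∈ s, y = m i * x + c i) → ∑ i ∈ s, a i ≤ 2 * M)
    (hA1 : 3 * M ≤ ∑ i, a i) (hA2 : ∑ i, a i ≤ 5 * M)
    {n r k e d : ℕ} (hr : 1 ≤ r) (hn : n = 2 * M * r) (hk : k + 2 + r * M = r * ∑ i, a i) (he : k + 2 * n < e)
    (hde : d = e + k) (mp : ℂ × ℂ → ℕ) (hmp : ∀ p ∈ P, mp p ≤ n) (hd : (P.card + Fintype.card ι + 1) * n ≤ d)
    (C1 : ℝ) (hC1 : (d : ℝ) ≤ C1 * n) :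
    ((n : ℝ) + 1) * (d + 1) * (d + n + 2) - ∑ p ∈ P, ((n : ℝ) + 1) * (mp p * (mp p + 1)) - 2 * ∑ l, Fl m c P M n d a mp C1 l
      + ds m c P (fun l => (a l / M : ℝ)) Finset.univ * (((n : ℝ) ^ 3 - n) / 6) ≤ (n + 1) * (e * e) := by
  have hn1 : 1 ≤ n := by rw [hn]; exact Nat.succ_le_of_lt (by positivity)
  have h0 := Sp_finrank n d
  have h1 := points_step P mp n (Sp n d)
  set S := Sp n d ⊓ ⨅ p ∈ P, Pt p.1 p.2 n (mp p) with hS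
  have : FiniteDimensional ℂ S := Submodule.finiteDimensional_of_le inf_le_left
  have h2 := lines_step m c P hm hP3 hM hn1 a ha mp hmp hd C1 hC1 S (inf_le_left.trans (Sp_le n d))
    (fun p hp => inf_le_right.trans (iInf₂_le p hp)) Finset.univ
  obtain ⟨h3, h4⟩ := VS_finrank m c M a hm hc hM ha hpt hA1 hA2 hn hk he
  have h5 : S ⊓ ⨅ i ∈ Finset.univ, Wl (m i) (c i) M (a i) (n * a i) ≤ VS m c M a n (e + k) := by
    rw [VS, ← hde]
    refine inf_le_inf (inf_le_left.trans (Sp_le n d)) ?_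
    simp
  have h6 := Submodule.finrank_mono h5
  have h0' : (2 : ℝ) * Module.finrank ℂ (Sp n d) = (n + 1) * (d + 1) * (d + n + 2) := by exact_mod_cast h0
  have h1' : (2 : ℝ) * Module.finrank ℂ (Sp n d) ≤ 2 * Module.finrank ℂ S + ∑ p ∈ P, ((n : ℝ) + 1) * (mp p * (mp p + 1)) := by exact_mod_cast h1
  have h4' : (2 : ℝ) * Module.finrank ℂ (VS m c M a n (e + k)) ≤ (n + 1) * (e * e) := by exact_mod_cast h4
  have h6' : (Module.finrank ℂ ↥(S ⊓ ⨅ i ∈ Finset.univ, Wl (m i) (c i) M (a i) (n * a i)) : ℝ) ≤ Module.finrank ℂ (VS m c M a n (e + k)) := by exact_mod_cast h6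
  linarith

lemma asym {E K2 K1 : ℝ} {M : ℕ} (hM : 0 < M)
    (h : ∀ r : ℕ, 1 ≤ r → ((2 * M * r : ℕ) : ℝ) ^ 3 * E + ((2 * M * r : ℕ) : ℝ) ^ 2 * K2 + ((2 * M * r : ℕ) : ℝ) * K1 ≤ 0) : E ≤ 0 := by
  by_contra hE
  push Not at hE
  obtain ⟨r, hr⟩ := exists_nat_gt ((|K2| + |K1|) / E)
  rw [div_lt_iff₀ hE] at hr
  have h1 := h (r + 1) (by omega)
  set n : ℝ := ((2 * M * (r + 1) : ℕ) : ℝ) with hn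
  have hn1 : (r : ℝ) + 1 ≤ n := by
    have : r + 1 ≤ 2 * M * (r + 1) := Nat.le_mul_of_pos_left _ (by omega)
    rw [hn]; exact_mod_cast this
  have hr0 : (0 : ℝ) ≤ r := by positivity
  have hn0 : 1 ≤ n := by linarith
  have h2 : |K2| + |K1| < n * E := by nlinarith
  have a1 := neg_abs_le K2
  have a2 := neg_abs_le K1
  have a3 := abs_nonneg K1
  have : n * (n ^ 2 * E + n * K2 + K1) ≤ 0 := by linarith [h1]
  have : n ^ 2 * E + n * K2 + K1 ≤ 0 := by
    by_contra hh
    push Not at hh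
    nlinarith
  nlinarith

theorem thmA (hm : Function.Injective m) (hc : ∀ i, c i ≠ 0)
    (hP3 : ∀ l h h', l ≠ h → l ≠ h' → h ≠ h' → ∀ p, onL m c l p → onL m c h p → onL m c h' p → p ∈ P)
    {M : ℕ} (hM : 0 < M) (a : ι → ℕ) (ha : ∀ i, a i ≤ M)
    (hpt : ∀ x y : ℂ, ∀ s : Finset ι, (∀ i ∈ s, y = m i * x + c i) → ∑ i ∈ s, a i ≤ 2 * M)
    (hA1 : 3 * M ≤ ∑ i, a i) (hA2 : ∑ i, a i ≤ 5 * M) :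
    EA m c P (fun i => (a i / M : ℝ)) ≤ 0 := by
  classical
  have hM' : (0 : ℝ) < M := by exact_mod_cast hM
  set x : ι → ℝ := fun i => (a i / M : ℝ) with hx
  set S := ∑ i, x i with hS
  set C : ℕ := P.card + Fintype.card ι + 10 with hC
  set T := ∑ p ∈ P, (sp m c x p) ^ 2 with hT
  set U := ∑ p ∈ P, (sp m c x p) with hU
  set Z := ∑ l, 2 * (2 * ((C : ℝ) + 2) + 5 + (Ql m c P l).card) with hZ
  set D := ds m c P x Finset.univ with hD
  have hEA : EA m c P x = -((S - 1) / 2) ^ 2 - S / 3 + (∑ i, x i ^ 2) / 3 + D / 6 +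
      (T / 4 - (∑ p ∈ P, sp m c (fun i => x i ^ 2) p) / 3) := by
    rw [EA, Finset.sum_sub_distrib, hT, Finset.sum_div P, Finset.sum_div P]
  have hS' : S * M = ((∑ i, a i : ℕ) : ℝ) := by
    rw [hS, Finset.sum_mul]; push_cast
    refine Finset.sum_congr rfl fun i _ => ?_
    simp only [hx]; field_simp
  refine asym (K2 := C * (S - 1) + ((S - 1) / 2 + 1) * ((S - 1) / 2 - 1) + 2 * S - T / 4 - U / 2 - Z)
    (K1 := - C - ((S - 1) / 2 + 1) - U / 2 - D / 6) hM fun r hr => ?_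
  set n := 2 * M * r with hn
  set A := ∑ i, a i with hA
  have hrM : 1 ≤ r * M := Nat.succ_le_of_lt (by positivity)
  have hk1 : 3 * (r * M) ≤ r * A := by nlinarith
  have hk2 : r * A ≤ 5 * (r * M) := by nlinarith
  obtain ⟨k, hk⟩ : ∃ k, k + 2 + r * M = r * A := ⟨r * A - r * M - 2, by omega⟩
  have hn2 : n = 2 * (r * M) := by rw [hn]; ring
  have hkn : k + 2 ≤ 2 * n := by omega
  have hCn : 10 * n ≤ C * n := Nat.mul_le_mul_right n (by omega)
  have hpc : ∀ p : ℂ × ℂ, r * ∑ i ∈ Finset.univ.filter (fun i => onL m c i p), a i ≤ n := by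
    intro p
    have := hpt p.1 p.2 (Finset.univ.filter (fun i => onL m c i p)) (fun i hi => (Finset.mem_filter.1 hi).2)
    calc _ ≤ r * (2 * M) := Nat.mul_le_mul_left r this
      _ = n := by rw [hn]; ring
  have hkR : (k : ℝ) = n * ((S - 1) / 2) - 2 := by
    have : (k : ℝ) + 2 + r * M = r * A := by exact_mod_cast hk
    rw [← hS'] at this
    have hnr : (n : ℝ) = 2 * M * r := by rw [hn]; push_cast; ring
    rw [hnr]; linear_combination this
  have hmain := count m c P hm hc hP3 hM a ha hpt hA1 hA2 (n := n) (r := r) (k := k) (e := C * n) (d := C * n + k) hr hn hk (by omega) rfl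
    (fun p => r * ∑ i ∈ Finset.univ.filter (fun i => onL m c i p), a i) (fun p _ => hpc p)
    (le_trans (Nat.mul_le_mul_right n (by omega)) (Nat.le_add_right (C * n) k)) (C + 2) (by
      have : (k : ℝ) ≤ 2 * n := by exact_mod_cast (by omega : k ≤ 2 * n)
      push_cast; linarith)
  have hmpR : ∀ p : ℂ × ℂ, ((r * ∑ i ∈ Finset.univ.filter (fun i => onL m c i p), a i : ℕ) : ℝ) = n / 2 * sp m c x p := by
    intro p
    have hnr : (n : ℝ) = 2 * M * r := by rw [hn]; push_cast; ring
    rw [hnr, sp, Finset.mul_sum]; push_cast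
    rw [Finset.mul_sum]
    refine Finset.sum_congr rfl fun i _ => ?_
    simp only [hx]; field_simp
  have e1 : ∑ p ∈ P, ((n : ℝ) + 1) * (((r * ∑ i ∈ Finset.univ.filter (fun i => onL m c i p), a i : ℕ) : ℝ) * (((r * ∑ i ∈ Finset.univ.filter (fun i => onL m c i p), a i : ℕ) : ℝ) + 1))
      = (n + 1) * (n ^ 2 / 4 * T + n / 2 * U) := by
    rw [← Finset.mul_sum]
    congr 1
    rw [hT, hU, Finset.mul_sum, Finset.mul_sum, ← Finset.sum_add_distrib]
    refine Finset.sum_congr rfl fun p _ => ?_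
    rw [hmpR]; ring
  have e2 : 2 * ∑ l, Fl m c P M n (C * n + k) a (fun p => r * ∑ i ∈ Finset.univ.filter (fun i => onL m c i p), a i) (C + 2) l
      = S * (C * n + k) * n ^ 2 - n ^ 3 / 2 * T + S * n ^ 3 / 3 +
        (∑ p ∈ P, sp m c (fun i => x i ^ 2) p - ∑ i, x i ^ 2) * n ^ 3 / 3 + Z * n ^ 2 := by
    have f1 : ∑ l, x l * ∑ p ∈ Ql m c P l, (n / 2 * sp m c x p) = n / 2 * T := by
      rw [sum_Ql, hT, Finset.mul_sum]
      refine Finset.sum_congr rfl fun p _ => by ring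
    have f2 : ∑ l, x l ^ 2 * ((Ql m c P l).card : ℝ) = ∑ p ∈ P, sp m c (fun i => x i ^ 2) p := by
      have := sum_Ql m c P (fun i => x i ^ 2) (fun _ => 1)
      simpa using this
    have f3 : ∀ l, 2 * Fl m c P M n (C * n + k) a (fun p => r * ∑ i ∈ Finset.univ.filter (fun i => onL m c i p), a i) (C + 2) l =
      x l * ((C * n + k) * n ^ 2 + n ^ 3 / 3) - (x l * ∑ p ∈ Ql m c P l, (n / 2 * sp m c x p)) * n ^ 2 + (x l ^ 2 * ((Ql m c P l).card : ℝ)) * (n ^ 3 / 3)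
       - x l ^ 2 * (n ^ 3 / 3) + (2 * (2 * ((C : ℝ) + 2) + 5 + (Ql m c P l).card)) * n ^ 2 := by
      intro l
      rw [Fl]
      simp_rw [hmpR]
      push_cast
      simp only [hx]
      ring
    rw [Finset.mul_sum]
    simp_rw [f3]
    rw [Finset.sum_add_distrib, Finset.sum_sub_distrib, Finset.sum_add_distrib, Finset.sum_sub_distrib,
      ← Finset.sum_mul, ← Finset.sum_mul, ← Finset.sum_mul, ← Finset.sum_mul, ← Finset.sum_mul, f1, f2]
    ring
  rw [e1, e2] at hmain
  push_cast at hmain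
  rw [hkR] at hmain
  rw [hEA]
  refine le_trans (le_of_eq ?_) (sub_nonpos.2 hmain)
  change _ = _ + D * (((n : ℝ) ^ 3 - n) / 6) - _
  ring

end ThmA
end Part18
end BGProof

namespace BGProof
section Part19
open Polynomial
set_option maxSynthPendingDepth 3

section ThmB
variable {ι : Type*} [Fintype ι] (m c : ι → ℂ) (P : Finset (ℂ × ℂ))

lemma sp_cont (p : ℂ × ℂ) : Continuous (fun x : ι → ℝ => sp m c x p) := by
  unfold sp; fun_prop

lemma EA_cont : Continuous (EA m c P) := by
  classical
  have h1 : Continuous (fun x : ι → ℝ => ds m c P x Finset.univ) := by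
    unfold ds
    refine continuous_finsetSum _ fun l _ => continuous_finsetSum _ fun h _ => ?_
    split_ifs <;> fun_prop
  have h2 := fun p => sp_cont m c p
  have h3 : ∀ p, Continuous (fun x : ι → ℝ => sp m c (fun i => x i ^ 2) p) := fun p => (h2 p).comp (by fun_prop)
  unfold EA
  fun_prop

open Filter Topology in
theorem thmB (hm : Function.Injective m) (hc : ∀ i, c i ≠ 0)
    (hP3 : ∀ l h h', l ≠ h → l ≠ h' → h ≠ h' → ∀ p, onL m c l p → onL m c h p → onL m c h' p → p ∈ P)
    (x : ι → ℝ) (hx0 : ∀ i, 0 < x i) (hx1 : ∀ i, x i < 1) (hsum : ∑ i, x i = 3) (hp2 : ∀ p ∈ P, sp m c x p < 2) :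
    EA m c P x ≤ 0 := by
  classical
  set a : ℕ → ι → ℕ := fun M i => ⌊x i * M⌋₊ + 1 with ha
  have hlim : ∀ i, Tendsto (fun M : ℕ => ((a M i : ℝ) / M)) atTop (𝓝 (x i)) := by
    intro i
    have h1 := (tendsto_nat_floor_mul_div_atTop (R := ℝ) (hx0 i).le).comp tendsto_natCast_atTop_atTop
    have h2 : Tendsto (fun M : ℕ => (1 : ℝ) / M) atTop (𝓝 0) := tendsto_one_div_atTop_nhds_zero_nat
    have h3 := h1.add h2
    rw [add_zero] at h3
    refine h3.congr fun M => ?_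
    simp [ha, add_div]
  have hlim' : Tendsto (fun M : ℕ => (fun i => ((a M i : ℝ) / M))) atTop (𝓝 x) := tendsto_pi_nhds.2 hlim
  have e1 : ∀ᶠ M : ℕ in atTop, ∀ i, (a M i : ℝ) / M < 1 :=
    eventually_all.2 fun i => (hlim i).eventually_lt_const (hx1 i)
  have e2 : ∀ᶠ M : ℕ in atTop, ∑ i, (a M i : ℝ) / M < 5 := by
    have := tendsto_finsetSum (Finset.univ : Finset ι) fun i _ => hlim i
    exact this.eventually_lt_const (by rw [hsum]; norm_num)
  have e3 : ∀ᶠ M : ℕ in atTop, ∀ p ∈ P, sp m c (fun i => (a M i : ℝ) / M) p < 2 := by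
    rw [Filter.eventually_all_finset]
    intro p hp
    exact (((sp_cont m c p).tendsto x).comp hlim').eventually_lt_const (hp2 p hp)
  refine le_of_tendsto (((EA_cont m c P).tendsto x).comp hlim') ?_
  filter_upwards [e1, e2, e3, eventually_gt_atTop 0] with M h1 h2 h3 hM
  have hM' : (0 : ℝ) < M := by exact_mod_cast hM
  have haM : ∀ i, a M i ≤ M := fun i => by
    have := h1 i
    rw [div_lt_one hM'] at this
    exact_mod_cast this.le
  refine thmA m c P hm hc hP3 hM (a M) haM ?_ ?_ ?_
  · intro u v s hs
    by_cases hp : (u, v) ∈ P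
    · have h4 := h3 _ hp
      rw [sp, ← Finset.sum_div, div_lt_iff₀ hM'] at h4
      refine le_trans (Finset.sum_le_sum_of_subset (t := Finset.univ.filter (fun i => onL m c i (u, v))) ?_) ?_
      · intro i hi
        exact Finset.mem_filter.2 ⟨Finset.mem_univ i, hs i hi⟩
      · exact_mod_cast h4.le
    · have hcard : s.card ≤ 2 := by
        by_contra hcd
        push Not at hcd
        obtain ⟨l, hl, h, hh, h', hh', n1, n2, n3⟩ := Finset.two_lt_card.1 hcd
        exact hp (hP3 l h h' n1 n2 n3 (u, v) (hs l hl) (hs h hh) (hs h' hh'))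
      calc _ ≤ ∑ i ∈ s, M := Finset.sum_le_sum fun i _ => haM i
        _ = s.card * M := by simp
        _ ≤ 2 * M := Nat.mul_le_mul_right M hcard
  · have : (3 : ℝ) * M ≤ ∑ i, (a M i : ℝ) := by
      rw [← hsum, Finset.sum_mul]
      refine Finset.sum_le_sum fun i _ => ?_
      simp only [ha]; push_cast
      exact (Nat.lt_floor_add_one _).le
    exact_mod_cast this
  · rw [← Finset.sum_div, div_lt_iff₀ hM'] at h2
    exact_mod_cast h2.le

lemma pairs (hm : Function.Injective m) (x : ι → ℝ) :
    (∑ i, x i) ^ 2 = ∑ i, x i ^ 2 + ds m c P x Finset.univ + ∑ p ∈ P, ((sp m c x p) ^ 2 - sp m c (fun i => x i ^ 2) p) := by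
  classical
  have h1 : (∑ i, x i) ^ 2 = ∑ l, ∑ h, x l * x h := by rw [sq, Finset.sum_mul_sum]
  have h2 : ∑ i, x i ^ 2 = ∑ l, ∑ h, if l = h then x l * x h else 0 := by
    refine Finset.sum_congr rfl fun l _ => ?_
    rw [Finset.sum_ite_eq, if_pos (Finset.mem_univ l), sq]
  have h3 : ∀ p, (sp m c x p) ^ 2 - sp m c (fun i => x i ^ 2) p =
      ∑ l, ∑ h, if (l ≠ h ∧ onL m c l p ∧ onL m c h p) then x l * x h else 0 := by
    intro p
    have e : sp m c (fun i => x i ^ 2) p = ∑ l, ∑ h, if l = h ∧ onL m c l p ∧ onL m c h p then x l * x h else 0 := by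
      rw [sp, Finset.sum_filter]
      refine Finset.sum_congr rfl fun l _ => ?_
      rw [Finset.sum_eq_single l]
      · by_cases hl : onL m c l p <;> simp [hl, sq]
      · intro h _ hne; rw [if_neg (fun hh => hne hh.1.symm)]
      · intro hh; exact absurd (Finset.mem_univ l) hh
    rw [e, sp, sq, Finset.sum_filter, Finset.sum_mul_sum, ← Finset.sum_sub_distrib]
    refine Finset.sum_congr rfl fun l _ => ?_
    rw [← Finset.sum_sub_distrib]
    refine Finset.sum_congr rfl fun h _ => ?_
    by_cases a1 : onL m c l p <;> by_cases a2 : onL m c h p <;> by_cases a3 : l = h <;> simp [a1, a2, a3]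
  simp_rw [h3]
  rw [Finset.sum_comm, h1, h2, ds, ← Finset.sum_add_distrib, ← Finset.sum_add_distrib]
  refine Finset.sum_congr rfl fun l _ => ?_
  rw [Finset.sum_comm, ← Finset.sum_add_distrib, ← Finset.sum_add_distrib]
  refine Finset.sum_congr rfl fun h _ => ?_
  by_cases hlh : l = h
  · subst hlh
    rw [if_pos rfl, if_neg (fun hh => hh.1 rfl), Finset.sum_eq_zero]
    · ring
    · intro p _; rw [if_neg (fun hh => hh.1 rfl)]
  · rw [if_neg hlh]
    by_cases hd : dbl m c P l h
    · rw [if_pos hd, Finset.sum_eq_zero]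
      · ring
      · intro p hp; rw [if_neg (fun hh => hd.2 p hp hh.2)]
    · rw [if_neg hd]
      have : ∃ p ∈ P, onL m c l p ∧ onL m c h p := by
        by_contra hc
        push Not at hc
        exact hd ⟨hlh, fun p hp hh => hc p hp hh.1 hh.2⟩
      obtain ⟨p, hp, p1, p2⟩ := this
      rw [Finset.sum_eq_single p]
      · rw [if_pos ⟨hlh, p1, p2⟩]; ring
      · intro q _ hqp
        rw [if_neg]
        rintro ⟨_, q1, q2⟩
        apply hqp
        unfold onL at p1 p2 q1 q2
        have hne : m l - m h ≠ 0 := sub_ne_zero.2 (fun e => hlh (hm e))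
        have e1 : q.1 = p.1 := by
          apply mul_left_cancel₀ hne
          linear_combination -q1 + q2 + p1 - p2
        refine Prod.ext e1 ?_
        rw [q1, p1, e1]
      · intro hh; exact absurd hp hh

theorem thmC (hm : Function.Injective m) (hc : ∀ i, c i ≠ 0)
    (hP3 : ∀ l h h', l ≠ h → l ≠ h' → h ≠ h' → ∀ p, onL m c l p → onL m c h p → onL m c h' p → p ∈ P)
    (x : ι → ℝ) (hx0 : ∀ i, 0 < x i) (hx1 : ∀ i, x i < 1) (hsum : ∑ i, x i = 3) (hp2 : ∀ p ∈ P, sp m c x p < 2) :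
    ∑ p ∈ P, (sp m c x p / 2) ^ 2 - 1 / 2 * ∑ i, x i ^ 2 * ((Ql m c P i).card - 1) - 3 / 2 ≤ 0 := by
  have h1 := thmB m c P hm hc hP3 x hx0 hx1 hsum hp2
  have h2 := pairs m c P hm x
  have f2 : ∑ l, x l ^ 2 * ((Ql m c P l).card : ℝ) = ∑ p ∈ P, sp m c (fun i => x i ^ 2) p := by
    have := sum_Ql m c P (fun i => x i ^ 2) (fun _ => 1)
    simpa using this
  rw [hsum, Finset.sum_sub_distrib] at h2
  rw [EA, hsum, Finset.sum_sub_distrib, ← Finset.sum_div, ← Finset.sum_div] at h1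
  simp_rw [mul_sub, mul_one, div_pow]
  rw [Finset.sum_sub_distrib, f2, ← Finset.sum_div]
  linarith

end ThmB
end Part19
end BGProof

namespace BGProof
section Part20
open Polynomial
set_option maxSynthPendingDepth 3

/-- the ambient vector space -/
abbrev V3 := Fin 3 → ℂ

lemma avoid {I : Type*} [Finite I] (f : I → V3 →ₗ[ℂ] ℂ) (hf : ∀ i, f i ≠ 0) : ∃ v, ∀ i, f i v ≠ 0 := by
  have := Subspace.exists_eq_top_of_iUnion_eq_univ (p := fun i => LinearMap.ker (f i))
  by_contra h
  push Not at h
  obtain ⟨i, hi⟩ := this (Set.eq_univ_of_forall fun v => Set.mem_iUnion.2 (by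
    obtain ⟨i, hi⟩ := h v
    exact ⟨i, hi⟩))
  exact hf i (LinearMap.ker_eq_top.1 hi)

lemma avoid_opt {I : Type*} [Finite I] (f : I → V3 →ₗ[ℂ] ℂ) (hf : ∀ i, f i ≠ 0) (θ : V3 →ₗ[ℂ] ℂ) (hθ : θ ≠ 0) :
    ∃ v, (∀ i, f i v ≠ 0) ∧ θ v ≠ 0 := by
  obtain ⟨v, hv⟩ := avoid (fun o : Option I => o.elim θ f) (fun o => by cases o <;> simp [hf, hθ])
  exact ⟨v, fun i => hv (some i), hv none⟩

lemma line_ker (l : Submodule ℂ V3) (hl : Module.finrank ℂ l = 2) : ∃ f : V3 →ₗ[ℂ] ℂ, f ≠ 0 ∧ LinearMap.ker f = l := by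
  have hlt : l < ⊤ := by
    rw [lt_top_iff_ne_top]
    rintro rfl
    simp at hl
  obtain ⟨f, hf, hle⟩ := l.exists_le_ker_of_lt_top hlt
  refine ⟨f, hf, (Submodule.eq_of_le_of_finrank_eq hle ?_).symm⟩
  have h1 := f.finrank_range_add_finrank_ker
  rw [LinearMap.range_eq_top.2 (LinearMap.surjective hf)] at h1
  simp at h1
  omega

lemma span_lt (s : Finset V3) (hs : s.card ≤ 2) : ∃ f : V3 →ₗ[ℂ] ℂ, f ≠ 0 ∧ ∀ v ∈ s, f v = 0 := by
  have hlt : Submodule.span ℂ (s : Set V3) < ⊤ := by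
    rw [lt_top_iff_ne_top]
    intro h
    have := finrank_span_finset_le_card (R := ℂ) s
    rw [Set.finrank, h] at this
    simp at this
    omega
  obtain ⟨f, hf, hle⟩ := Submodule.exists_le_ker_of_lt_top _ hlt
  exact ⟨f, hf, fun v hv => hle (Submodule.subset_span hv)⟩

lemma frame {I : Type*} [Finite I] [Nonempty I] (φ : I → V3 →ₗ[ℂ] ℂ) (hφ : ∀ i, φ i ≠ 0)
    (hker : ∀ i j, i ≠ j → LinearMap.ker (φ i) ≠ LinearMap.ker (φ j)) :
    ∃ v0 v1 v2 : V3, (∀ i, φ i v0 ≠ 0) ∧ (∀ i, φ i v2 ≠ 0) ∧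
      (∀ i j, i ≠ j → φ i v1 * φ j v2 - φ j v1 * φ i v2 ≠ 0) ∧
      (∀ z x y : ℂ, z • v0 + x • v1 + y • v2 = 0 → z = 0 ∧ x = 0 ∧ y = 0) ∧
      (∀ w : V3, ∃ z x y : ℂ, w = z • v0 + x • v1 + y • v2) := by
  classical
  obtain ⟨v2, h2⟩ := avoid φ hφ
  have h2' : v2 ≠ 0 := by
    rintro rfl
    exact h2 (Classical.arbitrary I) (map_zero _)
  obtain ⟨θ1, hθ1, hθ1'⟩ := span_lt {v2} (by simp)
  have hθ12 : θ1 v2 = 0 := hθ1' v2 (by simp)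
  obtain ⟨v1, h1, h1'⟩ := avoid_opt (fun q : {q : I × I // q.1 ≠ q.2} => φ q.1.2 v2 • φ q.1.1 - φ q.1.1 v2 • φ q.1.2) (by
    rintro ⟨⟨i, j⟩, hij⟩ h0
    refine hker i j hij ?_
    have h3 : ∀ v, φ j v2 * φ i v - φ i v2 * φ j v = 0 := fun v => by simpa using LinearMap.congr_fun h0 v
    ext v
    have h3 := h3 v
    simp only [LinearMap.mem_ker]
    constructor
    · intro hv
      rw [hv] at h3
      simpa [h2 i] using h3
    · intro hv
      rw [hv] at h3
      simpa [h2 j] using h3) θ1 hθ1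
  obtain ⟨θ0, hθ0, hθ0'⟩ := span_lt {v1, v2} Finset.card_le_two
  obtain ⟨v0, h0, h0'⟩ := avoid_opt φ hφ θ0 hθ0
  have hli : ∀ z x y : ℂ, z • v0 + x • v1 + y • v2 = 0 → z = 0 ∧ x = 0 ∧ y = 0 := by
    intro z x y h
    have e0 := congrArg θ0 h
    simp [hθ0' v1 (by simp), hθ0' v2 (by simp), h0'] at e0
    subst e0
    have e1 := congrArg θ1 h
    simp [hθ12, h1'] at e1
    subst e1
    simp [h2'] at h
    exact ⟨rfl, rfl, h⟩
  refine ⟨v0, v1, v2, h0, h2, ?_, hli, ?_⟩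
  · intro i j hij
    have := h1 ⟨(i, j), hij⟩
    simp at this
    intro h
    apply this
    linear_combination h
  · have hlin : LinearIndependent ℂ ![v0, v1, v2] := by
      rw [Fintype.linearIndependent_iff]
      intro g hg
      rw [Fin.sum_univ_three] at hg
      obtain ⟨a0, a1, a2⟩ := hli (g 0) (g 1) (g 2) (by simpa using hg)
      intro i
      fin_cases i <;> assumption
    intro w
    have hs := hlin.span_eq_top_of_card_eq_finrank' (by simp)
    have hw : w ∈ Submodule.span ℂ (Set.range ![v0, v1, v2]) := by rw [hs]; trivial
    obtain ⟨g, hg⟩ := (Submodule.mem_span_range_iff_exists_fun ℂ).1 hw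
    refine ⟨g 0, g 1, g 2, ?_⟩
    rw [← hg]
    simp [Fin.sum_univ_three]

end Part20
end BGProof

/-- The inequality part of Theorem 1.7 of the paper (parabolic
Bogomolov–Gieseker inequality for weighted line arrangements in `ℂP²`):
`∑_{p : μ(p) ≥ 3} (α(p) − 1)² − (1/2)·∑_ℓ (1 − βℓ)²·B(ℓ) − 3/2 ≤ 0`. -/
theorem weighted_arrangement_BG_inequality
    (L : Finset (Submodule ℂ (Fin 3 → ℂ)))
    (hL : ∀ ℓ ∈ L, Module.finrank ℂ ℓ = 2)
    (β : Submodule ℂ (Fin 3 → ℂ) → ℝ)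
    (hβ : ∀ ℓ ∈ L, 0 < β ℓ ∧ β ℓ < 1)
    (hsum : ∑ ℓ ∈ L, (β ℓ - 1) = -3)
    (htriple : ∀ p : Submodule ℂ (Fin 3 → ℂ), Module.finrank ℂ p = 1 →
      3 ≤ lineMult L p →
      (∑ᶠ ℓ ∈ {ℓ : Submodule ℂ (Fin 3 → ℂ) | ℓ ∈ L ∧ p ≤ ℓ}, (β ℓ - 1)) > -2) :
    (∑ᶠ p ∈ {p : Submodule ℂ (Fin 3 → ℂ) |
        Module.finrank ℂ p = 1 ∧ 3 ≤ lineMult L p}, (alphaPt L β p - 1) ^ 2)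
      - (1 / 2) * ∑ ℓ ∈ L, (1 - β ℓ) ^ 2 * (BSelf L ℓ : ℝ) - 3 / 2 ≤ 0 := by
  classical
  obtain hNe | hNe := isEmpty_or_nonempty L
  · exfalso
    have : L = ∅ := Finset.eq_empty_of_forall_notMem fun l hl => hNe.false ⟨l, hl⟩
    rw [this] at hsum
    norm_num at hsum
  choose φ hφ hker using fun i : L => BGProof.line_ker i.1 (hL i.1 i.2)
  obtain ⟨v0, v1, v2, h0, h2, hdet, hli, hsp⟩ := BGProof.frame φ hφ (fun i j hij h => hij (by
    rw [hker, hker] at h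
    exact Subtype.ext h))
  set m : L → ℂ := fun i => -(φ i v1 / φ i v2) with hm_def
  set c : L → ℂ := fun i => -(φ i v0 / φ i v2) with hc_def
  have hm : Function.Injective m := by
    intro i j hij
    by_contra hne
    apply hdet i j hne
    simp only [hm_def, neg_inj] at hij
    rw [div_eq_div_iff (h2 i) (h2 j)] at hij
    rw [hij, sub_self]
  have hc : ∀ i, c i ≠ 0 := fun i => neg_ne_zero.2 (div_ne_zero (h0 i) (h2 i))
  set vec : ℂ × ℂ → (Fin 3 → ℂ) := fun q => v0 + q.1 • v1 + q.2 • v2 with hvec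
  have hvec0 : ∀ q, vec q ≠ 0 := by
    intro q hq
    have := (hli 1 q.1 q.2 (by rw [one_smul]; exact hq)).1
    exact one_ne_zero this
  set emb : ℂ × ℂ → Submodule ℂ (Fin 3 → ℂ) := fun q => Submodule.span ℂ {vec q} with hemb
  have hfr : ∀ q, Module.finrank ℂ (emb q) = 1 := fun q => finrank_span_singleton (hvec0 q)
  have hembinj : Function.Injective emb := by
    intro q q' h
    have hq : vec q ∈ emb q' := by rw [← h]; exact Submodule.mem_span_singleton_self _
    obtain ⟨t, ht⟩ := Submodule.mem_span_singleton.1 hq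
    obtain ⟨a0, a1, a2⟩ := hli (t - 1) (t * q'.1 - q.1) (t * q'.2 - q.2) (by
      have : t • vec q' - vec q = 0 := by rw [ht, sub_self]
      rw [← this]
      simp only [hvec]
      module)
    have ht1 : t = 1 := by linear_combination a0
    subst ht1
    refine Prod.ext ?_ ?_
    · linear_combination -a1
    · linear_combination -a2
  have hon : ∀ (i : L) q, emb q ≤ i.1 ↔ BGProof.onL m c i q := by
    intro i q
    rw [hemb, Submodule.span_singleton_le_iff_mem, ← hker i, LinearMap.mem_ker, BGProof.onL]
    simp only [hvec, hm_def, hc_def, map_add, map_smul, smul_eq_mul]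
    have h2i := h2 i
    constructor
    · intro h
      field_simp
      linear_combination h
    · intro h
      rw [h]
      field_simp
      ring
  have hfilt : ∀ (g : Submodule ℂ (Fin 3 → ℂ) → ℝ) q, ∑ᶠ ℓ ∈ {ℓ : Submodule ℂ (Fin 3 → ℂ) | ℓ ∈ L ∧ emb q ≤ ℓ}, g ℓ =
      BGProof.sp m c (fun i => g i.1) q := by
    intro g q
    have e : {ℓ : Submodule ℂ (Fin 3 → ℂ) | ℓ ∈ L ∧ emb q ≤ ℓ} = ((L.filter (fun ℓ => emb q ≤ ℓ) : Finset _) : Set _) := by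
      ext l; simp
    rw [e, finsum_mem_coe_finset, Finset.sum_filter, BGProof.sp, Finset.sum_filter, ← Finset.sum_coe_sort]
    refine Finset.sum_congr rfl fun i _ => ?_
    simp only [hon]
  have hmult : ∀ q, lineMult L (emb q) = (Finset.univ.filter (fun i => BGProof.onL m c i q)).card := by
    intro q
    have e : {ℓ : Submodule ℂ (Fin 3 → ℂ) | ℓ ∈ L ∧ emb q ≤ ℓ} =
        (((Finset.univ.filter (fun i => BGProof.onL m c i q)).image (fun i : L => i.1) : Finset _) : Set _) := by
      ext l
      simp only [Set.mem_ofPred_eq, Finset.coe_image, Set.mem_image, Finset.mem_coe, Finset.mem_filter, Finset.mem_univ, true_and]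
      constructor
      · rintro ⟨hl, hle⟩
        exact ⟨⟨l, hl⟩, (hon ⟨l, hl⟩ q).1 hle, rfl⟩
      · rintro ⟨i, hi, rfl⟩
        exact ⟨i.2, (hon i q).2 hi⟩
    rw [lineMult, e, Set.ncard_coe_finset, Finset.card_image_of_injective _ Subtype.val_injective]
  -- the affine triple points
  set P : Finset (ℂ × ℂ) := ((Finset.univ : Finset (L × L)).image (fun q =>
    ((c q.2 - c q.1) / (m q.1 - m q.2), m q.1 * ((c q.2 - c q.1) / (m q.1 - m q.2)) + c q.1))).filter
      (fun q => 3 ≤ (Finset.univ.filter (fun i => BGProof.onL m c i q)).card) with hP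
  have hmemP : ∀ q, q ∈ P ↔ 3 ≤ (Finset.univ.filter (fun i => BGProof.onL m c i q)).card := by
    intro q
    rw [hP, Finset.mem_filter, and_iff_right_iff_imp]
    intro h3
    obtain ⟨l, hl, h, hh, hne⟩ := Finset.one_lt_card.1 (by omega : 1 < (Finset.univ.filter (fun i => BGProof.onL m c i q)).card)
    have hl := (Finset.mem_filter.1 hl).2
    have hh := (Finset.mem_filter.1 hh).2
    refine Finset.mem_image.2 ⟨(l, h), Finset.mem_univ _, ?_⟩
    unfold BGProof.onL at hl hh
    have hd : m l - m h ≠ 0 := sub_ne_zero.2 (fun e => hne (hm e))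
    have e1 : (c h - c l) / (m l - m h) = q.1 := by
      rw [div_eq_iff hd]
      linear_combination hl - hh
    refine Prod.ext e1 ?_
    simp only [e1]
    exact hl.symm
  have hP3 : ∀ l h h', l ≠ h → l ≠ h' → h ≠ h' → ∀ p, BGProof.onL m c l p → BGProof.onL m c h p → BGProof.onL m c h' p → p ∈ P := by
    intro l h h' n1 n2 n3 p a1 a2 a3
    rw [hmemP]
    exact Finset.two_lt_card.2 ⟨l, by simp [a1], h, by simp [a2], h', by simp [a3], n1, n2, n3⟩
  have hpoint : ∀ p : Submodule ℂ (Fin 3 → ℂ), Module.finrank ℂ p = 1 → 3 ≤ lineMult L p → ∃ q ∈ P, emb q = p := by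
    intro p hp1 hp3
    obtain ⟨w, hw, hw'⟩ := finrank_eq_one_iff'.1 hp1
    have hwp : p = Submodule.span ℂ {w.1} := by
      apply le_antisymm
      · intro u hu
        obtain ⟨t, ht⟩ := hw' ⟨u, hu⟩
        exact Submodule.mem_span_singleton.2 ⟨t, congrArg Subtype.val ht⟩
      · exact (Submodule.span_singleton_le_iff_mem _ _).2 w.2
    have hfin : {ℓ : Submodule ℂ (Fin 3 → ℂ) | ℓ ∈ L ∧ p ≤ ℓ}.Finite := L.finite_toSet.subset fun l hl => hl.1
    obtain ⟨l, ⟨hl, hlp⟩, h, ⟨hh, hhp⟩, hne⟩ := (Set.one_lt_ncard hfin).1 (by rw [lineMult] at hp3; omega)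
    obtain ⟨z, x, y, hwz⟩ := hsp w.1
    have k1 : φ ⟨l, hl⟩ w.1 = 0 := by
      rw [← LinearMap.mem_ker, hker]; exact hlp w.2
    have k2 : φ ⟨h, hh⟩ w.1 = 0 := by
      rw [← LinearMap.mem_ker, hker]; exact hhp w.2
    have hz : z ≠ 0 := by
      rintro rfl
      rw [hwz] at k1 k2
      simp only [zero_smul, zero_add, map_add, map_smul, smul_eq_mul] at k1 k2
      have hd := hdet ⟨l, hl⟩ ⟨h, hh⟩ (fun e => hne (congrArg Subtype.val e))
      have hx : x = 0 := by
        have : x * (φ ⟨l, hl⟩ v1 * φ ⟨h, hh⟩ v2 - φ ⟨h, hh⟩ v1 * φ ⟨l, hl⟩ v2) = 0 := by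
          linear_combination φ ⟨h, hh⟩ v2 * k1 - φ ⟨l, hl⟩ v2 * k2
        simpa [hd] using this
      subst hx
      have hy : y = 0 := by simpa [h2 ⟨l, hl⟩] using k1
      subst hy
      apply hw
      apply Subtype.ext
      rw [hwz]; simp
    have hq : emb (x / z, y / z) = p := by
      rw [hwp, hemb]
      have : w.1 = z • vec (x / z, y / z) := by
        rw [hwz]
        simp only [hvec, smul_add, smul_smul, mul_div_cancel₀ _ hz]
      simp only [this]
      exact (Submodule.span_singleton_smul_eq hz.isUnit _).symm
    refine ⟨(x / z, y / z), ?_, hq⟩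
    rw [hmemP, ← hmult, hq]
    exact hp3
  have hset : {p : Submodule ℂ (Fin 3 → ℂ) | Module.finrank ℂ p = 1 ∧ 3 ≤ lineMult L p} = ((P.image emb : Finset _) : Set _) := by
    ext p
    simp only [Set.mem_ofPred_eq, Finset.coe_image, Set.mem_image, Finset.mem_coe]
    constructor
    · rintro ⟨a1, a2⟩
      exact hpoint p a1 a2
    · rintro ⟨q, hq, rfl⟩
      exact ⟨hfr q, by rw [hmult]; exact (hmemP q).1 hq⟩
  have hB : ∀ i : L, (BSelf L i.1 : ℝ) = ((BGProof.Ql m c P i).card : ℝ) - 1 := by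
    intro i
    have e : {p : Submodule ℂ (Fin 3 → ℂ) | Module.finrank ℂ p = 1 ∧ 3 ≤ lineMult L p ∧ p ≤ i.1} =
        (((BGProof.Ql m c P i).image emb : Finset _) : Set _) := by
      ext p
      simp only [Set.mem_ofPred_eq, Finset.coe_image, Set.mem_image, Finset.mem_coe, BGProof.Ql, Finset.mem_filter]
      constructor
      · rintro ⟨a1, a2, a3⟩
        obtain ⟨q, hq, rfl⟩ := hpoint p a1 a2
        exact ⟨q, ⟨hq, (hon i q).1 a3⟩, rfl⟩
      · rintro ⟨q, ⟨hq, hq'⟩, rfl⟩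
        exact ⟨hfr q, by rw [hmult]; exact (hmemP q).1 hq, (hon i q).2 hq'⟩
    rw [BSelf, e, Set.ncard_coe_finset, Finset.card_image_of_injective _ hembinj]
    push_cast
    ring
  have hspneg : ∀ q, BGProof.sp m c (fun i => β i.1 - 1) q = - BGProof.sp m c (fun i : L => 1 - β i.1) q := by
    intro q
    rw [BGProof.sp, BGProof.sp, ← Finset.sum_neg_distrib]
    exact Finset.sum_congr rfl fun i _ => by ring
  have hmain := BGProof.thmC m c P hm hc hP3 (fun i : L => 1 - β i.1)
    (fun i => by have := (hβ i.1 i.2).2; linarith) (fun i => by have := (hβ i.1 i.2).1; linarith)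
    (by
      rw [Finset.sum_coe_sort L (fun ℓ => 1 - β ℓ)]
      have : ∑ ℓ ∈ L, (1 - β ℓ) = - ∑ ℓ ∈ L, (β ℓ - 1) := by
        rw [← Finset.sum_neg_distrib]
        exact Finset.sum_congr rfl fun i _ => by ring
      rw [this, hsum]; norm_num)
    (fun q hq => by
      have := htriple (emb q) (hfr q) (by rw [hmult]; exact (hmemP q).1 hq)
      rw [hfilt, hspneg] at this
      linarith)
  rw [hset, finsum_mem_coe_finset, Finset.sum_image (fun a _ b _ h => hembinj h), ← Finset.sum_coe_sort L]
  refine le_trans (le_of_eq ?_) hmain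
  congr 2
  · refine Finset.sum_congr rfl fun q _ => ?_
    rw [alphaPt, hfilt, hspneg]
    ring
  · congr 1
    refine Finset.sum_congr rfl fun i _ => ?_
    rw [hB]
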